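/- arXiv:2209.11443 — 2 statements merged into one kernel-verified Lean document; each statement's English description precedes it below -/
import Mathlib

section
/- Let n ≥ 1 be an integer and N = p₁^{k₁}···p_r^{k_r} with distinct primes pᵢ and kᵢ ≥ 1, r ≥ 2. For any function f : (ℤ/Nℤ)ⁿ → ℕ that is not identically zero one has ∑_{x ∈ (ℤ/Nℤ)ⁿ} f(x)ⁿ ≥ C_{N,n} · |ℙ(ℤ/Nℤ)^{n-1}|^{-1} · ∑_{u ∈ ℙ(ℤ/Nℤ)^{n-1}} f*(u)ⁿ, where C_{N,n} = ( 1/( 2(log(mweight(f,p₁)) + 1)·⌈log_{p₁}(mweight(f,p₁)) + log_{p₁}(n)⌉ ) )ⁿ · ( 1/( 2(k_r + ⌈log_{p_r}(n)⌉) ) · ∏_{i=2}^{r-1} 1/( 2(k_i·log(p_i) + 1)(k_i + ⌈log_{p_i}(n)⌉) ) )ⁿ, log denoting the natural logarithm. -/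
/-- A vector in `(ℤ/Nℤ)ⁿ` is primitive (i.e. belongs to a class in `ℙ(ℤ/Nℤ)^{n-1}`). -/
def IsPrimitiveVec {N n : ℕ} (u : Fin n → ZMod N) : Prop :=
  ∃ v : Fin n → ZMod N, ∑ i, v i * u i = 1

/-- `P` is a fixed set of representatives for the projective space `ℙ(ℤ/Nℤ)^{n-1}`. -/
def IsProjRepSet (N n : ℕ) [NeZero N] (P : Finset (Fin n → ZMod N)) : Prop :=
  (∀ u ∈ P, IsPrimitiveVec u) ∧
  ∀ u : Fin n → ZMod N, IsPrimitiveVec u →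
    ∃! w, w ∈ P ∧ ∃ c : (ZMod N)ˣ, u = (c : ZMod N) • w

/-- The maximal function of `f : (ℤ/Nℤ)ⁿ → ℕ` in direction `u`. -/
def fstar {N n : ℕ} [NeZero N] (f : (Fin n → ZMod N) → ℕ) (u : Fin n → ZMod N) : ℕ :=
  Finset.univ.sup fun a : Fin n → ZMod N => ∑ t : ZMod N, f (a + t • u)

namespace Kak
open Polynomial

/-- integer points of the simplex -/
def simplex (n d : ℕ) : Finset (Fin n → ℕ) :=
  (Fintype.piFinset (fun _ => Finset.range (d+1))).filter (fun v => ∑ i, v i ≤ d)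

lemma mem_simplex {n d : ℕ} {v : Fin n → ℕ} : v ∈ simplex n d ↔ ∑ i, v i ≤ d := by
  simp only [simplex, Finset.mem_filter, Fintype.mem_piFinset, Finset.mem_range, and_iff_right_iff_imp]
  intro h i
  have := Finset.single_le_sum (f := v) (fun i _ => Nat.zero_le _) (Finset.mem_univ i)
  omega

lemma card_simplex (n d : ℕ) : (simplex n d).card = (d + n).choose n := by
  induction n generalizing d with
  | zero =>
    have : simplex 0 d = Finset.univ := by
      ext v; simp only [mem_simplex, Finset.univ_eq_empty, Finset.sum_empty, Nat.zero_le, Finset.mem_univ]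
    simp [this]
  | succ n ih =>
    have h1 : (simplex (n+1) d).card = ∑ j ∈ Finset.range (d+1), (simplex n (d - j)).card := by
      rw [← Finset.card_sigma]
      refine Finset.card_bij' (fun v _ => ⟨v 0, Fin.tail v⟩) (fun w _ => Fin.cons w.1 w.2) ?_ ?_ ?_ ?_
      · intro v hv
        rw [mem_simplex, Fin.sum_univ_succ] at hv
        simp only [Finset.mem_sigma, Finset.mem_range, mem_simplex, Fin.tail]
        omega
      · intro w hw
        simp only [Finset.mem_sigma, Finset.mem_range, mem_simplex] at hw
        rw [mem_simplex, Fin.sum_univ_succ]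
        simp
        omega
      · intro v hv; simp
      · intro w hw; simp
    rw [h1]
    simp_rw [ih]
    have h2 := Finset.sum_range_reflect (fun j => (j + n).choose n) (d+1)
    have h3 : ∑ j ∈ Finset.range (d+1), (d - j + n).choose n
        = ∑ j ∈ Finset.range (d+1), (d + 1 - 1 - j + n).choose n := by simp
    rw [h3, h2]
    have h4 := Nat.sum_Icc_choose (d+n) n
    rw [show d + (n+1) = d + n + 1 by ring, ← h4]
    rw [← Finset.Ico_add_one_right_eq_Icc, Finset.sum_Ico_eq_sum_range]
    rw [show d + n + 1 - n = d + 1 by omega]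
    apply Finset.sum_congr rfl; intros; rw [add_comm]

lemma sum_pow_padic (p c : ℕ) (hp : p.Prime) (i : ℕ) (hi : i < p ^ c) :
    ∑ t ∈ Finset.Icc 1 i, p ^ padicValNat p t ≤ c * i := by
  have := Fact.mk hp
  have h1 : ∀ t ∈ Finset.Icc 1 i, p ^ padicValNat p t ≤
      ∑ s ∈ Finset.range c, if p ^ s ∣ t then p ^ s else 0 := by
    intro t ht
    rw [Finset.mem_Icc] at ht
    have hv : padicValNat p t < c := by
      by_contra hcon
      push Not at hcon
      have h2 : p ^ c ∣ t := (pow_dvd_pow p hcon).trans pow_padicValNat_dvd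
      have := Nat.le_of_dvd (by omega) h2
      omega
    have := Finset.single_le_sum (f := fun s => if p ^ s ∣ t then p ^ s else 0)
      (fun s _ => Nat.zero_le _) (Finset.mem_range.2 hv)
    simpa [pow_padicValNat_dvd] using this
  refine (Finset.sum_le_sum h1).trans ?_
  rw [Finset.sum_comm]
  have h2 : ∀ s ∈ Finset.range c, (∑ t ∈ Finset.Icc 1 i, if p ^ s ∣ t then p ^ s else 0) ≤ i := by
    intro s _
    rw [← Finset.sum_filter, Finset.sum_const, smul_eq_mul]
    have : ((Finset.Icc 1 i).filter (fun t => p ^ s ∣ t)).card = i / p ^ s := by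
      have := Nat.Ioc_filter_dvd_card_eq_div i (p ^ s)
      rwa [← Finset.Icc_add_one_left_eq_Ioc] at this
    rw [this]
    exact Nat.div_mul_le_self i (p^s)
  refine (Finset.sum_le_sum h2).trans ?_
  simp

lemma choose_mod (p L : ℕ) [hp : Fact p.Prime] (m m' i : ℕ) (hm : m ≡ m' [MOD p ^ L])
    (hi : i < p ^ L) : ((m.choose i : ℕ) : ZMod p) = (m'.choose i : ℕ) := by
  have key : ∀ a b : ℕ, (((a + p ^ L * b).choose i : ℕ) : ZMod p) = (a.choose i : ℕ) := by
    intro a b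
    rw [← Polynomial.coeff_one_add_X_pow, ← Polynomial.coeff_one_add_X_pow, pow_add, pow_mul,
      add_pow_char_pow, one_pow]
    have : (X : (ZMod p)[X]) ^ p ^ L ∣ (1 + X ^ p ^ L) ^ b - 1 := by
      have := sub_dvd_pow_sub_pow ((1 : (ZMod p)[X]) + X ^ p ^ L) 1 b
      simpa using this
    obtain ⟨r, hr⟩ := this
    rw [sub_eq_iff_eq_add] at hr
    rw [hr, mul_add, mul_one, coeff_add, mul_left_comm, coeff_X_pow_mul', if_neg (by omega), zero_add]
  have e1 := key (m % p ^ L) (m / p ^ L)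
  have e2 := key (m' % p ^ L) (m' / p ^ L)
  rw [Nat.mod_add_div] at e1 e2
  rw [e1, e2, hm]

lemma y_sub (p : ℕ) [hp : Fact p.Prime] (a b : ℕ) (hab : b < a) :
    ∃ r : (ZMod p)[X], ¬ X ∣ r ∧
      (1 + X : (ZMod p)[X]) ^ a - (1 + X) ^ b = X ^ (p ^ padicValNat p (a - b)) * r := by
  obtain ⟨m, hm⟩ : p ^ padicValNat p (a-b) ∣ a - b := pow_padicValNat_dvd
  set v := padicValNat p (a-b) with hv
  have hpm : ¬ p ∣ m := by
    rintro ⟨m', rfl⟩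
    have h3 : p ^ (v + 1) ∣ a - b := ⟨m', by rw [hm]; ring⟩
    exact pow_succ_padicValNat_not_dvd (by omega) h3
  have hX : (X : (ZMod p)[X]) ∣ (1 + X) ^ m - 1 := by
    rw [X_dvd_iff, coeff_sub, coeff_one_add_X_pow]; simp
  obtain ⟨s, hs⟩ := hX
  have hs0 : ¬ X ∣ s := by
    rw [X_dvd_iff]
    intro h0
    have := congrArg (fun q => coeff q 1) hs
    simp only [coeff_sub, coeff_one_add_X_pow, coeff_X_mul, h0, coeff_one] at this
    simp at this
    exact hpm ((ZMod.natCast_eq_zero_iff _ _).1 this)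
  have hXp : Prime (X : (ZMod p)[X]) := prime_X
  have hy : ¬ (X : (ZMod p)[X]) ∣ (1 + X) ^ b := by
    rw [X_dvd_iff, coeff_one_add_X_pow]; simp
  refine ⟨(1+X)^b * s ^ (p ^ v), ?_, ?_⟩
  · intro h
    rcases hXp.dvd_or_dvd h with h | h
    · exact hy h
    · exact hs0 (hXp.dvd_of_dvd_pow h)
  · have : (1 + X : (ZMod p)[X]) ^ a = (1+X)^b * ((1+X)^m) ^ (p^v) := by
      rw [← pow_mul, ← pow_add]; congr 1
      rw [mul_comm m]; omega
    have h5 : ((1 + X : (ZMod p)[X])^m) ^ (p^v) - 1 = (X * s) ^ (p ^ v) := by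
      rw [← hs, sub_pow_char_pow, one_pow]
    rw [this, mul_left_comm, ← mul_pow, ← h5]; ring

end Kak

namespace Kak
open Polynomial

lemma y_sub' (p : ℕ) [hp : Fact p.Prime] (a b : ℕ) (hab : a ≠ b) :
    ∃ r : (ZMod p)[X], ¬ X ∣ r ∧
      (1 + X : (ZMod p)[X]) ^ a - (1 + X) ^ b = X ^ (p ^ padicValNat p ((a - b) + (b - a))) * r := by
  rcases lt_or_gt_of_ne hab with h | h
  · obtain ⟨r, hr, h2⟩ := y_sub p b a h
    refine ⟨-r, by simpa using hr, ?_⟩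
    rw [show a - b + (b - a) = b - a by omega, mul_neg, ← h2]; ring
  · obtain ⟨r, hr, h2⟩ := y_sub p a b h
    refine ⟨r, hr, ?_⟩
    rw [show a - b + (b - a) = a - b by omega, ← h2]

lemma sum_dist (p c e i : ℕ) (hp : p.Prime) (he : e < p ^ c) (hi : i ∈ Finset.range (e+1)) :
    ∑ j ∈ (Finset.range (e+1)).erase i, p ^ padicValNat p ((i - j) + (j - i)) ≤ c * e := by
  rw [Finset.mem_range] at hi
  have hsplit : (Finset.range (e+1)).erase i = Finset.range i ∪ Finset.Ioc i e := by
    ext j; simp only [Finset.mem_erase, Finset.mem_range, Finset.mem_union, Finset.mem_Ioc]; omega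
  have hdisj : Disjoint (Finset.range i) (Finset.Ioc i e) := by
    rw [Finset.disjoint_left]; intro j; simp only [Finset.mem_range, Finset.mem_Ioc]; omega
  rw [hsplit, Finset.sum_union hdisj]
  have h1 : ∑ j ∈ Finset.range i, p ^ padicValNat p ((i - j) + (j - i)) =
      ∑ t ∈ Finset.Icc 1 i, p ^ padicValNat p t := by
    refine Finset.sum_bij' (fun j _ => i - j) (fun t _ => i - t) ?_ ?_ ?_ ?_ ?_ <;>
      simp only [Finset.mem_range, Finset.mem_Icc] <;> intros <;> try omega
    rw [show ∀ x, x < i → i - x + (x - i) = i - x by intros; omega]; assumption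
  have h2 : ∑ j ∈ Finset.Ioc i e, p ^ padicValNat p ((i - j) + (j - i)) =
      ∑ t ∈ Finset.Icc 1 (e - i), p ^ padicValNat p t := by
    refine Finset.sum_bij' (fun j _ => j - i) (fun t _ => i + t) ?_ ?_ ?_ ?_ ?_ <;>
      simp only [Finset.mem_Ioc, Finset.mem_Icc] <;> intros <;> try omega
    rw [show ∀ x, (i < x ∧ x ≤ e) → i - x + (x - i) = x - i by intros; omega]; assumption
  rw [h1, h2]
  have a1 := sum_pow_padic p c hp i (by omega)
  have a2 := sum_pow_padic p c hp (e - i) (by omega)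
  calc _ ≤ c * i + c * (e - i) := by omega
    _ = c * e := by rw [← mul_add]; congr 1; omega

lemma fld_aux {K : Type*} [Field K] (a b r P E : K) (hb : b ≠ 0) (hr : r ≠ 0) :
    a * b * (r * P) * (E / (b * r)) = E * a * P := by field_simp

lemma one_var (p c : ℕ) [hp : Fact p.Prime] (h : (ZMod p)[X][X]) (h0 : h ≠ 0)
    (hd : h.natDegree < p ^ c) :
    ∃ u : ℕ, ∀ m : ℕ, X ^ (m + c * h.natDegree) ∣ h.eval ((1 + X) ^ u) → X ^ m ∣ h.leadingCoeff := by
  classical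
  by_contra hcon
  push Not at hcon
  choose mm hm1 hm2 using hcon
  set e := h.natDegree with he
  set s := Finset.range (e+1) with hs
  obtain ⟨i0, hi0, hmin⟩ := Finset.exists_min_image s mm ⟨0, by simp [hs]⟩
  set m := mm i0
  have hdiv : ∀ i ∈ s, X ^ (m + c * e) ∣ h.eval ((1 + X) ^ i) := fun i hi =>
    (pow_dvd_pow _ (by have := hmin i hi; omega)).trans (hm1 i)
  apply hm2 i0
  change X ^ m ∣ _
  let r : ℕ → ℕ → (ZMod p)[X] := fun a b =>
    if hab : a ≠ b then (y_sub' p a b hab).choose else 1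
  have hXp : Prime (X : (ZMod p)[X]) := prime_X
  have hr1 : ∀ a b, ¬ X ∣ r a b := by
    intro a b
    by_cases hab : a ≠ b
    · simp only [r, dif_pos hab]; exact (y_sub' p a b hab).choose_spec.1
    · simp only [r, dif_neg hab]; exact hXp.not_dvd_one
  have hr2 : ∀ a b, a ≠ b → (1 + X : (ZMod p)[X]) ^ a - (1 + X) ^ b =
      X ^ (p ^ padicValNat p ((a - b) + (b - a))) * r a b := by
    intro a b hab
    simp only [r, dif_pos hab]; exact (y_sub' p a b hab).choose_spec.2
  let R : ℕ → (ZMod p)[X] := fun i => ∏ j ∈ s.erase i, r i j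
  let τ : ℕ → ℕ := fun i => ∑ j ∈ s.erase i, p ^ padicValNat p ((i - j) + (j - i))
  have hR : ∀ i, ¬ X ∣ R i := by
    intro i hh
    obtain ⟨j, _, hj⟩ := (Prime.dvd_finsetProd_iff hXp _).1 hh
    exact hr1 _ _ hj
  have hτ : ∀ i ∈ s, τ i ≤ c * e := fun i hi => sum_dist p c e i hp.out hd hi
  have hP : ∀ i, ∏ j ∈ s.erase i, ((1 + X : (ZMod p)[X]) ^ i - (1 + X) ^ j) = X ^ τ i * R i := by
    intro i
    rw [Finset.prod_congr rfl (fun j hj => hr2 i j (Finset.ne_of_mem_erase hj).symm),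
      Finset.prod_mul_distrib, Finset.prod_pow_eq_pow_sum]
  let K := FractionRing (ZMod p)[X]
  let ι := algebraMap (ZMod p)[X] K
  have hι : Function.Injective ι := IsFractionRing.injective _ _
  have hinj : Set.InjOn (fun i : ℕ => ι ((1+X)^i)) (s : Set ℕ) := by
    intro a _ b _ hab
    by_contra hne
    have h3 := hr2 a b hne
    rw [sub_eq_zero.2 (hι hab)] at h3
    have h4 := hr1 a b
    rcases mul_eq_zero.1 h3.symm with h5 | h5
    · exact pow_ne_zero _ X_ne_zero h5
    · exact h4 (h5 ▸ dvd_zero _)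
  have hdeg : (s.card : WithBot ℕ) = (h.map ι).degree + 1 := by
    rw [degree_map_eq_of_injective hι, degree_eq_natDegree h0, hs, Finset.card_range]
    rfl
  have hL := Lagrange.leadingCoeff_eq_sum hinj hdeg
  rw [leadingCoeff_map_of_injective hι] at hL
  have hXK : ι X ≠ 0 := by
    rw [Ne, map_eq_zero_iff ι hι]; exact X_ne_zero
  have hRK : ∀ i, ι (R i) ≠ 0 := by
    intro i
    rw [Ne, map_eq_zero_iff ι hι]; intro h5; exact hR i (h5 ▸ dvd_zero _)
  have hfin : X ^ (c * e) * (∏ i ∈ s, R i) * h.leadingCoeff =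
      ∑ i ∈ s, h.eval ((1+X)^i) * X ^ (c * e - τ i) * ∏ j ∈ s.erase i, R j := by
    apply hι
    rw [map_mul, hL, Finset.mul_sum, map_sum]
    apply Finset.sum_congr rfl
    intro i hi
    have e1 : ∏ j ∈ s.erase i, (ι ((1+X)^i) - ι ((1+X)^j)) = ι X ^ τ i * ι (R i) := by
      rw [← map_pow, ← map_mul, ← hP, map_prod]; simp
    rw [e1, eval_map_apply, ← Finset.mul_prod_erase s R hi,
      show c * e = (c * e - τ i) + τ i by have := hτ i hi; omega]
    simp only [map_mul, map_pow, pow_add]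
    have := hRK i
    rw [Nat.add_sub_cancel]
    exact fld_aux _ _ _ _ _ (pow_ne_zero _ hXK) this
  have hdv : X ^ (m + c * e) ∣ X ^ (c * e) * ((∏ i ∈ s, R i) * h.leadingCoeff) := by
    rw [← mul_assoc, hfin]
    exact Finset.dvd_sum fun i hi => (((hdiv i hi).mul_right _).mul_right _)
  rw [add_comm, pow_add] at hdv
  have hdv2 := (mul_dvd_mul_iff_left (pow_ne_zero _ X_ne_zero)).1 hdv
  refine hXp.pow_dvd_of_dvd_mul_left m ?_ hdv2
  intro hh
  obtain ⟨j, _, hj⟩ := (Prime.dvd_finsetProd_iff hXp _).1 hh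
  exact hR _ hj

/-- multivariate version -/
lemma multi_var (p c : ℕ) [hp : Fact p.Prime] (n : ℕ) (S : Finset (Fin n → ℕ))
    (G : (Fin n → ℕ) → (ZMod p)[X]) (hS : ∀ v ∈ S, ∀ i, v i < p ^ c)
    (hG : ∃ v ∈ S, G v ≠ 0) :
    ∃ s ∈ S, G s ≠ 0 ∧ ∃ u : Fin n → ℕ, ∀ m : ℕ,
      X ^ (m + c * ∑ i, s i) ∣ ∑ v ∈ S, G v * (1 + X) ^ (∑ i, u i * v i) → X ^ m ∣ G s := by
  classical
  induction n with
  | zero =>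
    obtain ⟨v, hv, hGv⟩ := hG
    refine ⟨v, hv, hGv, v, fun m hm => ?_⟩
    have : S = {v} := by
      ext w; rw [Finset.mem_singleton]; constructor
      · intro _; exact Subsingleton.elim _ _
      · rintro rfl; exact hv
    rw [this] at hm
    simpa using hm
  | succ n ih =>
    -- filter nonzero
    set S' := S.filter (fun v => G v ≠ 0) with hS'
    have hne : S'.Nonempty := by
      obtain ⟨v, hv, h⟩ := hG; exact ⟨v, by simp [hS', hv, h]⟩
    obtain ⟨v0, hv0, hmax⟩ := Finset.exists_max_image S' (fun v => v 0) hne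
    set e := v0 0 with he
    have hv0' := Finset.mem_filter.1 hv0
    let T : Finset (Fin n → ℕ) := (S'.filter (fun v => v 0 = e)).image Fin.tail
    have hT : ∀ w ∈ T, (Fin.cons e w : Fin (n+1) → ℕ) ∈ S' := by
      intro w hw
      simp only [T, Finset.mem_image, Finset.mem_filter] at hw
      obtain ⟨v, ⟨hv, hve⟩, rfl⟩ := hw
      rw [← hve, Fin.cons_self_tail]; exact hv
    obtain ⟨s', hs', hGs', u', hu'⟩ := ih T (fun w => G (Fin.cons e w))
      (fun w hw i => by
        have := hS _ (Finset.mem_filter.1 (hT w hw)).1 i.succ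
        simpa using this)
      ⟨Fin.tail v0, Finset.mem_image.2 ⟨v0, by simp [hv0, he], rfl⟩, by
        rw [he, Fin.cons_self_tail]; exact hv0'.2⟩
    let h : (ZMod p)[X][X] := ∑ v ∈ S', monomial (v 0) (G v * (1+X) ^ (∑ i, u' i * v (Fin.succ i)))
    have hle : h.natDegree ≤ e := by
      refine natDegree_sum_le_of_forall_le _ _ fun v hv => ?_
      exact (natDegree_monomial_le _).trans (hmax v hv)
    have hco : h.coeff e = ∑ w ∈ T, G (Fin.cons e w) * (1+X) ^ (∑ i, u' i * w i) := by
      simp only [h, finsetSum_coeff, coeff_monomial]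
      rw [← Finset.sum_filter]
      rw [Finset.sum_image]
      · apply Finset.sum_congr rfl
        intro v hv
        have := (Finset.mem_filter.1 hv).2
        rw [← this, Fin.cons_self_tail]; rfl
      · intro v hv w hw hvw
        rw [← Fin.cons_self_tail v, ← Fin.cons_self_tail w, hvw]
        have h1 := (Finset.mem_filter.1 hv).2
        have h2 := (Finset.mem_filter.1 hw).2
        rw [h1, h2]
    have hco0 : h.coeff e ≠ 0 := by
      intro h0
      rw [hco] at h0
      have : ∀ m, X ^ m ∣ G (Fin.cons e s') := fun m => hu' m (by rw [h0]; exact dvd_zero _)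
      have h3 := Polynomial.natDegree_le_of_dvd (this ((G (Fin.cons e s')).natDegree + 1)) hGs'
      rw [natDegree_X_pow] at h3
      omega
    have hnd : h.natDegree = e := le_antisymm hle (le_natDegree_of_ne_zero hco0)
    have hh0 : h ≠ 0 := by rintro h0; rw [h0] at hco0; simp at hco0
    obtain ⟨u0, hu0⟩ := one_var p c h hh0 (by rw [hnd]; exact hS _ hv0'.1 0)
    refine ⟨Fin.cons e s', (Finset.mem_filter.1 (hT s' hs')).1, hGs', Fin.cons u0 u', fun m hm => ?_⟩
    apply hu'
    rw [← hco]
    have := hu0 (m + c * ∑ i, s' i)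
    rw [leadingCoeff, hnd] at this
    apply this
    have e1 : h.eval ((1+X)^u0) =
        ∑ v ∈ S, G v * (1 + X) ^ (∑ i, (Fin.cons u0 u' : Fin (n+1) → ℕ) i * v i) := by
      simp only [h, eval_finsetSum, eval_monomial]
      rw [hS', Finset.sum_filter]
      apply Finset.sum_congr rfl
      intro v _
      split_ifs with hGv
      · rw [Fin.sum_univ_succ, pow_add]
        simp only [Fin.cons_zero, Fin.cons_succ, pow_mul]; ring
      · push Not at hGv; simp [hGv]
    rw [e1]
    convert hm using 2
    rw [Fin.sum_univ_succ]; simp only [Fin.cons_zero, Fin.cons_succ]; ring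

end Kak

namespace Kak
open Polynomial

/-- primitive vectors -/
def IsPrim {R : Type*} [CommRing R] {n : ℕ} (u : Fin n → R) : Prop :=
  ∃ v : Fin n → R, ∑ i, v i * u i = 1

/-- the basic functions -/
def phi (p L n : ℕ) (x : (Fin n → ZMod (p ^ L)) × ℕ) : (Fin n → ZMod (p ^ L)) → ZMod p :=
  fun v => (((∑ j, x.1 j * v j).val.choose x.2 : ℕ) : ZMod p)

lemma phi_cast (p L n : ℕ) [hp : Fact p.Prime] (U V : Fin n → ℕ) (i : ℕ) (hi : i < p ^ L) :
    phi p L n ((fun j => (U j : ZMod (p ^ L))), i) (fun j => (V j : ZMod (p^L))) =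
      (((∑ j, U j * V j).choose i : ℕ) : ZMod p) := by
  unfold phi
  apply choose_mod p L _ _ _ _ hi
  have : (∑ j, (U j : ZMod (p ^ L)) * (V j : ZMod (p^L))) = ((∑ j, U j * V j : ℕ) : ZMod (p^L)) := by
    push_cast; rfl
  simp only [this, ZMod.val_natCast]
  exact Nat.mod_modEq _ _

lemma lower_poly (p n c d D : ℕ) [hp : Fact p.Prime] (hc : 1 ≤ c) (hd : c * d < D)
    (hDc : D ≤ p ^ c) (S : Finset (Fin (n+1) → ℕ)) (hS : ∀ v, v ∈ S ↔ ∑ i, v i ≤ d)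
    (g : (Fin (n+1) → ℕ) → ZMod p) (hg0 : ∃ v ∈ S, g v ≠ 0) :
    ∃ U : Fin (n+1) → ℕ, U 0 = 1 ∧ ∃ i < D, 
      ∑ v ∈ S, g v * (((∑ j, U j * v j).choose i : ℕ) : ZMod p) ≠ 0 := by
  classical
  have hdD : d < D := lt_of_le_of_lt (Nat.le_mul_of_pos_left d hc) hd
  by_contra hall
  push Not at hall
  let q : (Fin n → ℕ) → (ZMod p)[X] := fun w =>
    ∑ v ∈ S.filter (fun v => Fin.tail v = w), monomial (v 0) (g v)
  have hqcomp : ∀ w, (q w).comp (1 + X) =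
      ∑ v ∈ S.filter (fun v => Fin.tail v = w), C (g v) * (1 + X) ^ (v 0) := by
    intro w; simp only [q, Polynomial.sum_comp, monomial_comp]
  have hqdeg : ∀ w, ((q w).comp (1+X)).natDegree ≤ d - ∑ i, w i := by
    intro w
    rw [natDegree_comp, show (1 + X : (ZMod p)[X]) = X + C 1 by rw [C_1, add_comm], natDegree_X_add_C,
      mul_one]
    refine natDegree_sum_le_of_forall_le _ _ fun v hv => (natDegree_monomial_le _).trans ?_
    obtain ⟨hv1, rfl⟩ := Finset.mem_filter.1 hv
    have := (hS _).1 hv1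
    rw [Fin.sum_univ_succ] at this
    simp only [Fin.tail]; omega
  have hq0 : ∀ v ∈ S, g v ≠ 0 → (q (Fin.tail v)).comp (1 + X) ≠ 0 := by
    intro v hv hgv
    rw [show (1 + X : (ZMod p)[X]) = X + C 1 by rw [C_1, add_comm], Ne, comp_X_add_C_eq_zero_iff]
    intro h0
    have h1 : (q (Fin.tail v)).coeff (v 0) = g v := by
      simp only [q, finsetSum_coeff, coeff_monomial]
      rw [Finset.sum_eq_single v]
      · simp
      · intro w hw hwv
        rw [if_neg]
        intro h2
        apply hwv
        rw [← Fin.cons_self_tail v, ← Fin.cons_self_tail w, h2, (Finset.mem_filter.1 hw).2]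
      · intro h2; simp [hv] at h2
    rw [h0] at h1
    exact hgv (by simpa using h1.symm)
  obtain ⟨v1, hv1, hgv1⟩ := hg0
  obtain ⟨s, hs, hGs, u, hu⟩ := multi_var p c n (S.image Fin.tail) (fun w => (q w).comp (1+X))
    (by
      intro w hw i
      obtain ⟨v, hv, rfl⟩ := Finset.mem_image.1 hw
      have h1 := (hS _).1 hv
      have h2 := Finset.single_le_sum (f := v) (fun i _ => Nat.zero_le _) (Finset.mem_univ i.succ)
      simp only [Fin.tail]; omega)
    ⟨Fin.tail v1, Finset.mem_image_of_mem _ hv1, hq0 v1 hv1 hgv1⟩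
  let U : Fin (n+1) → ℕ := Fin.cons 1 u
  have htot : ∑ w ∈ S.image Fin.tail, (q w).comp (1+X) * (1+X) ^ (∑ i, u i * w i) =
      ∑ v ∈ S, C (g v) * (1 + X) ^ (∑ i, U i * v i) := by
    rw [← Finset.sum_fiberwise_of_maps_to (s := S) (g := fun v : Fin (n+1) → ℕ => (Fin.tail v : Fin n → ℕ))
      (t := S.image Fin.tail) (fun v hv => Finset.mem_image_of_mem _ hv)]
    apply Finset.sum_congr rfl
    intro w _
    simp only [hqcomp, Finset.sum_mul]
    apply Finset.sum_congr rfl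
    intro v hv
    obtain ⟨_, rfl⟩ := Finset.mem_filter.1 hv
    rw [mul_assoc, ← pow_add, Fin.sum_univ_succ]
    simp [U, Fin.tail]
  have hdvd : X ^ D ∣ ∑ v ∈ S, C (g v) * (1 + X : (ZMod p)[X]) ^ (∑ i, U i * v i) := by
    rw [X_pow_dvd_iff]
    intro i hi
    simp only [finsetSum_coeff, coeff_C_mul, coeff_one_add_X_pow]
    exact hall U (by simp [U]) i hi
  have hsd : ∑ i, s i ≤ d := by
    obtain ⟨v, hv, rfl⟩ := Finset.mem_image.1 hs
    have := (hS _).1 hv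
    rw [Fin.sum_univ_succ] at this
    simp only [Fin.tail]; omega
  have hmul : c * ∑ i, s i ≤ c * d := Nat.mul_le_mul_left _ hsd
  have h5 := hu (D - c * ∑ i, s i) (by
    rw [htot, Nat.sub_add_cancel (by omega)]; exact hdvd)
  have h6 := natDegree_le_of_dvd h5 hGs
  rw [natDegree_X_pow] at h6
  have h7 := hqdeg s
  have h8 : d - ∑ i, s i ≤ c * (d - ∑ i, s i) := Nat.le_mul_of_pos_left _ hc
  rw [Nat.mul_sub] at h8
  omega

lemma lower (p L n c d D : ℕ) [hp : Fact p.Prime] (hc : 1 ≤ c) (hd : c * d < D)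
    (hDL : D ≤ p ^ L) (hDc : D ≤ p ^ c)
    (W : Submodule (ZMod p) ((Fin (n+1) → ZMod (p^L)) → ZMod p))
    (hW : ∀ u i, IsPrim u → i < D → phi p L (n+1) (u, i) ∈ W) :
    (d + (n+1)).choose (n+1) ≤ Module.finrank (ZMod p) W := by
  classical
  have hdD : d < D := lt_of_le_of_lt (Nat.le_mul_of_pos_left d hc) hd
  have hpL : NeZero (p^L) := ⟨pow_ne_zero _ hp.out.ne_zero⟩
  by_contra hcon
  push Not at hcon
  rw [← card_simplex] at hcon
  obtain ⟨S, hSdef⟩ : ∃ S, S = simplex (n+1) d := ⟨_, rfl⟩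
  rw [← hSdef] at hcon
  have hS : ∀ v, v ∈ S ↔ ∑ i, v i ≤ d := fun v => by rw [hSdef, mem_simplex]
  let T : ((Fin (n+1) → ZMod (p^L)) → ZMod p) →ₗ[ZMod p] (S → ZMod p) :=
    LinearMap.funLeft (ZMod p) (ZMod p) (fun s : S => fun j => ((s.1 j : ℕ) : ZMod (p^L)))
  have hlt : W.map T < ⊤ := by
    rw [lt_top_iff_ne_top]
    intro htop
    have h1 := Submodule.finrank_map_le T W
    rw [htop, finrank_top, Module.finrank_fintype_fun_eq_card, Fintype.card_coe] at h1
    omega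
  obtain ⟨f, hf0, hf⟩ := Submodule.exists_le_ker_of_lt_top _ hlt
  let g : (Fin (n+1) → ℕ) → ZMod p := fun v => if h : v ∈ S then f (Pi.single ⟨v, h⟩ 1) else 0
  have hfg : ∀ w, f (T w) = ∑ v ∈ S, g v * w (fun j => ((v j : ℕ) : ZMod (p^L))) := by
    intro w
    rw [LinearMap.pi_apply_eq_sum_univ f (T w), ← Finset.sum_coe_sort S]
    apply Finset.sum_congr rfl
    intro s _
    simp only [g, s.2, dif_pos, smul_eq_mul]
    rw [mul_comm]
    congr 2
    ext t
    simp only [Pi.single_apply, Subtype.ext_iff, eq_comm (a := (s : Fin (n+1) → ℕ))]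
  have hg0 : ∃ v ∈ S, g v ≠ 0 := by
    by_contra hall
    push Not at hall
    apply hf0
    refine LinearMap.pi_ext' fun s => ?_
    ext
    have := hall s.1 s.2
    simp only [g, s.2, dif_pos] at this
    simpa using this
  obtain ⟨U, hU, i, hi, hne⟩ := lower_poly p n c d D hc hd hDc S hS g hg0
  have hUp : IsPrim (fun j => (U j : ZMod (p^L))) := by
    refine ⟨Pi.single 0 1, ?_⟩
    rw [Finset.sum_eq_single 0]
    · simp [hU]
    · intro b _ hb; simp [hb]
    · simp
  apply hne
  have h1 : f (T (phi p L (n+1) ((fun j => (U j : ZMod (p ^ L))), i))) = 0 :=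
    hf (Submodule.mem_map_of_mem (hW _ _ hUp hi))
  rw [hfg] at h1
  rw [← h1]
  apply Finset.sum_congr rfl
  intro v _
  rw [phi_cast p L (n+1) U v i (by omega)]

end Kak

namespace Kak
open Polynomial

lemma indep_lift {O K 𝕃 V B : Type*} [CommRing O] [Field K] [Field 𝕃] [Fintype V] [Fintype B]
    (π : O →+* K) (hπ : Function.Surjective π) (ι : O →+* 𝕃) (hι : Function.Injective ι)
    (Φ : B → V → O) (h : LinearIndependent K (fun b v => π (Φ b v))) :
    LinearIndependent 𝕃 (fun b v => ι (Φ b v)) := by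
  classical
  obtain ⟨g, hg⟩ := LinearMap.exists_leftInverse_of_injective
    (Fintype.linearCombination K (fun b v => π (Φ b v)))
    (LinearMap.ker_eq_bot.2 (LinearIndependent.fintypeLinearCombination_injective h))
  have hN : ∀ b b', ∑ v, π (Φ b v) * g (Pi.single v 1) b' = (1 : Matrix B B K) b b' := by
    intro b b'
    have h1 := congrArg (fun l => l (Pi.single b 1) b') hg
    simp only [LinearMap.comp_apply, LinearMap.id_apply, Fintype.linearCombination_apply_single,
      one_smul] at h1
    rw [show (1 : Matrix B B K) b b' = (Pi.single b 1 : B → K) b' by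
      simp [Matrix.one_apply, Pi.single_apply, eq_comm], ← h1]
    conv_rhs => rw [show (fun v => π (Φ b v)) = ∑ v, π (Φ b v) • (Pi.single v 1 : V → K) by
      ext w; simp [Finset.sum_apply, Pi.single_apply]]
    simp [Finset.sum_apply]
  choose N' hN' using fun (v : V) (b : B) => hπ (g (Pi.single v 1) b)
  let A : Matrix B B O := (Matrix.of Φ) * (Matrix.of N')
  have hA : π.mapMatrix A = 1 := by
    ext b b'
    rw [← hN b b']
    simp [A, Matrix.mul_apply, hN']
  have hdet : A.det ≠ 0 := by
    intro h0
    have := RingHom.map_det π A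
    rw [h0, hA] at this
    simp at this
  have hdet' : (ι.mapMatrix A).det ≠ 0 := by
    rw [← RingHom.map_det]
    rwa [Ne, map_eq_zero_iff ι hι]
  rw [Fintype.linearIndependent_iff]
  intro x hx
  have h2 : Matrix.vecMul x (ι.mapMatrix A) = 0 := by
    have h3 : Matrix.vecMul x ((Matrix.of Φ).map ι) = 0 := by
      ext v
      have := congrFun hx v
      simpa [Matrix.vecMul, dotProduct, Finset.sum_apply] using this
    rw [RingHom.mapMatrix_apply, show A = (Matrix.of Φ) * (Matrix.of N') from rfl, Matrix.map_mul, ← Matrix.vecMul_vecMul, h3, Matrix.zero_vecMul]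
  exact fun i => congrFun (Matrix.eq_zero_of_vecMul_eq_zero hdet' h2) i

lemma choose_vanish {𝕃 V : Type*} [Field 𝕃] [CharZero 𝕃] [Fintype V] {n : ℕ} (W : V → 𝕃)
    (vh : V → Fin n → ℕ) (U : Fin n → ℕ) (e : ℕ)
    (h : ∀ β : Fin n → ℕ, ∑ i, β i < e → ∑ v, W v * ∏ i, (vh v i : 𝕃) ^ β i = 0)
    (j : ℕ) (hj : j < e) : ∑ v, W v * (((∑ i, U i * vh v i).choose j : ℕ) : 𝕃) = 0 := by
  classical
  have hpow : ∀ s < e, ∑ v, W v * ((∑ i, U i * vh v i : ℕ) : 𝕃) ^ s = 0 := by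
    intro s hs
    have h1 : ∀ v, W v * ((∑ i, U i * vh v i : ℕ) : 𝕃) ^ s =
        ∑ β ∈ Finset.piAntidiag Finset.univ s, (Nat.multinomial Finset.univ β : 𝕃) *
          (∏ i, (U i : 𝕃) ^ β i) * (W v * ∏ i, (vh v i : 𝕃) ^ β i) := by
      intro v
      push_cast
      rw [Finset.sum_pow_eq_sum_piAntidiag, Finset.mul_sum]
      apply Finset.sum_congr rfl
      intro β _
      simp only [mul_pow, Finset.prod_mul_distrib]
      ring
    simp only [h1]
    rw [Finset.sum_comm]
    apply Finset.sum_eq_zero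
    intro β hβ
    rw [← Finset.mul_sum, h β, mul_zero]
    have : ∑ i, β i = s := (Finset.mem_piAntidiag.1 hβ).1
    omega
  have h2 : ∀ v, W v * (((∑ i, U i * vh v i).choose j : ℕ) : 𝕃) =
      ∑ s ∈ Finset.range (j+1), ((j.factorial : 𝕃)⁻¹ * (descPochhammer 𝕃 j).coeff s) *
        (W v * ((∑ i, U i * vh v i : ℕ) : 𝕃) ^ s) := by
    intro v
    have h3 : (((∑ i, U i * vh v i).choose j : ℕ) : 𝕃) =
        (j.factorial : 𝕃)⁻¹ * (descPochhammer 𝕃 j).eval ((∑ i, U i * vh v i : ℕ) : 𝕃) := by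
      rw [descPochhammer_eval_eq_descFactorial, Nat.descFactorial_eq_factorial_mul_choose]
      push_cast
      have : (j.factorial : 𝕃) ≠ 0 := by exact_mod_cast j.factorial_ne_zero
      field_simp
    rw [h3, eval_eq_sum_range, descPochhammer_natDegree, Finset.mul_sum, Finset.mul_sum]
    apply Finset.sum_congr rfl
    intros; ring
  simp only [h2]
  rw [Finset.sum_comm]
  apply Finset.sum_eq_zero
  intro s hs
  rw [← Finset.mul_sum, hpow s (by rw [Finset.mem_range] at hs; omega), mul_zero]

lemma exists_ring (p k : ℕ) [hp : Fact p.Prime] (hk : 1 ≤ k) :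
    ∃ (O : Type) (_ : CommRing O) (_ : IsDomain O) (_ : CharZero O) (ζ : O) (π : O →+* ZMod p),
      IsPrimitiveRoot ζ (p ^ k) ∧ π ζ = 1 := by
  have hpk : 0 < p ^ k := pow_pos hp.out.pos _
  have hirr := cyclotomic.irreducible hpk
  have hdom : IsDomain (AdjoinRoot (cyclotomic (p^k) ℤ)) := AdjoinRoot.isDomain_of_prime hirr.prime
  have hdeg : (cyclotomic (p^k) ℤ).degree ≠ 0 := (degree_cyclotomic_pos _ ℤ hpk).ne'
  have hinj := AdjoinRoot.of.injective_of_degree_ne_zero hdeg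
  have hchar : CharZero (AdjoinRoot (cyclotomic (p^k) ℤ)) := charZero_of_injective_ringHom hinj
  have hev : eval₂ (Int.castRingHom (ZMod p)) 1 (cyclotomic (p^k) ℤ) = 0 := by
    rw [eval₂_eq_eval_map, map_cyclotomic]
    obtain ⟨k', rfl⟩ : ∃ k', k = k' + 1 := ⟨k - 1, by omega⟩
    rw [eval_one_cyclotomic_prime_pow]; simp
  refine ⟨AdjoinRoot (cyclotomic (p^k) ℤ), inferInstance, hdom, hchar, AdjoinRoot.root _,
    AdjoinRoot.lift (Int.castRingHom (ZMod p)) 1 hev, ?_, AdjoinRoot.lift_root hev⟩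
  have : NeZero ((p^k : ℕ) : AdjoinRoot (cyclotomic (p^k) ℤ)) := ⟨by exact_mod_cast hpk.ne'⟩
  rw [← isRoot_cyclotomic_iff]
  have h1 := AdjoinRoot.isRoot_root (cyclotomic (p^k) ℤ)
  rwa [map_cyclotomic] at h1

lemma coeff_mod_X_pow {K : Type*} [Field K] (f : K[X]) (D i : ℕ) (hi : i < D) :
    (f %ₘ X ^ D).coeff i = f.coeff i := by
  have h := modByMonic_add_div f (X ^ D : K[X])
  conv_rhs => rw [← h]
  rw [coeff_add, coeff_X_pow_mul', if_neg (by omega), add_zero]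

/-- strict simplex -/
def sset (n e : ℕ) : Finset (Fin n → ℕ) := if e = 0 then ∅ else simplex n (e - 1)

lemma mem_sset {n e : ℕ} {β : Fin n → ℕ} : β ∈ sset n e ↔ ∑ i, β i < e := by
  unfold sset
  split_ifs with h
  · simp [h]
  · rw [mem_simplex]; omega

end Kak

namespace Kak
open Polynomial

lemma zpow_exp {R : Type*} [Monoid R] {ζ : R} {q : ℕ} [NeZero q] (hζ : ζ ^ q = 1) (n : ℕ)
    (a : Fin n → ZMod q) (U w : Fin n → ℕ) (t : ZMod q) :
    ζ ^ (∑ i, ((a + t • (fun j => (U j : ZMod q))) i).val * w i) =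
      ζ ^ (∑ i, (a i).val * w i) * (ζ ^ t.val) ^ (∑ i, U i * w i) := by
  rw [← pow_mul, ← pow_add]
  have key : (∑ i, ((a + t • (fun j => (U j : ZMod q))) i).val * w i) ≡
      ∑ i, (a i).val * w i + t.val * ∑ i, U i * w i [MOD q] := by
    rw [← ZMod.natCast_eq_natCast_iff]
    push_cast
    simp only [ZMod.natCast_val, ZMod.cast_id', id, Pi.add_apply, Pi.smul_apply, smul_eq_mul]
    rw [Finset.mul_sum, ← Finset.sum_add_distrib]
    apply Finset.sum_congr rfl
    intros; ring
  rw [pow_eq_pow_mod _ hζ, key, ← pow_eq_pow_mod _ hζ]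

lemma Q_dvd {𝕃 V : Type*} [Field 𝕃] [CharZero 𝕃] [Fintype V] {n q : ℕ} [NeZero q] {ζ : 𝕃}
    (hζ : IsPrimitiveRoot ζ q) (vh : V → Fin n → ℕ) (G : V → 𝕃) (e : (Fin n → ZMod q) → ℕ)
    (hG : ∀ x (β : Fin n → ℕ), ∑ i, β i < e x →
      ∑ v, G v * ζ ^ (∑ i, (x i).val * vh v i) * ∏ i, (vh v i : 𝕃) ^ β i = 0)
    (a : Fin n → ZMod q) (U : Fin n → ℕ) :
    (∏ t : ZMod q, (X - C (ζ ^ t.val - 1)) ^ e (a + t • (fun j => (U j : ZMod q)))) ∣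
      ∑ v, C (G v) * (C (ζ ^ (∑ i, (a i).val * vh v i)) * (1 + X) ^ (∑ i, U i * vh v i)) := by
  apply Finset.prod_dvd_of_coprime
  · intro t _ t' _ htt
    apply IsCoprime.pow
    apply isCoprime_X_sub_C_of_isUnit_sub
    rw [isUnit_iff_ne_zero]
    intro h
    apply htt
    have h1 : ζ ^ t.val = ζ ^ t'.val := by linear_combination h
    exact ZMod.val_injective _ (hζ.pow_inj t.val_lt t'.val_lt h1)
  · intro t _
    rw [X_sub_C_pow_dvd_iff, X_pow_dvd_iff]
    intro j hj
    have hz : ζ ^ t.val ≠ 0 := pow_ne_zero _ (hζ.ne_zero (NeZero.ne q))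
    have := choose_vanish (fun v => G v * ζ ^ (∑ i, ((a + t • (fun j => (U j : ZMod q))) i).val * vh v i))
      vh U _ (hG (a + t • (fun j => (U j : ZMod q)))) j hj
    simp only [Polynomial.sum_comp, finsetSum_coeff, mul_comp, C_comp, pow_comp, add_comp, one_comp,
      X_comp, coeff_C_mul]
    have h1 : (1 + (X + C (ζ ^ t.val - 1)) : 𝕃[X]) = X + C (ζ ^ t.val) := by
      rw [C_sub, C_1]; ring
    simp only [h1, coeff_X_add_C_pow]
    have h2 : ∀ m : ℕ, (ζ ^ t.val) ^ (m - j) * (m.choose j : 𝕃) =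
       ((ζ ^ t.val) ^ j)⁻¹ * ((ζ ^ t.val) ^ m * (m.choose j : 𝕃)) := by
      intro m
      by_cases hm : j ≤ m
      · conv_rhs => rw [← Nat.sub_add_cancel hm, pow_add]
        rw [Nat.sub_add_cancel hm]
        field_simp
      · rw [Nat.choose_eq_zero_of_lt (by omega)]; simp
    simp only [h2]
    rw [← mul_zero (((ζ ^ t.val) ^ j)⁻¹), ← this, Finset.mul_sum]
    apply Finset.sum_congr rfl
    intro v _
    rw [zpow_exp hζ.pow_eq_one]
    ring

lemma upper_fld {𝕃 V B : Type*} [Field 𝕃] [Fintype V] [Fintype B] {I : Type*} [Fintype I]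
    (Φ : B → V → 𝕃) (h : LinearIndependent 𝕃 Φ) (Λ : I → V → 𝕃)
    (hk : ∀ G : V → 𝕃, (∀ i, ∑ v, G v * Λ i v = 0) → ∀ b, ∑ v, G v * Φ b v = 0) :
    Fintype.card B ≤ Fintype.card I := by
  classical
  let l : (V → 𝕃) →ₗ[𝕃] (I → 𝕃) := (Matrix.of Λ).mulVecLin
  let m : (V → 𝕃) →ₗ[𝕃] (B → 𝕃) := (Matrix.of Φ).mulVecLin
  have hle : LinearMap.ker l ≤ LinearMap.ker m := by
    intro G hG
    rw [LinearMap.mem_ker] at hG ⊢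
    ext b
    have := hk G (fun i => by
      have := congrFun hG i
      simpa [l, Matrix.mulVec, dotProduct, mul_comm] using this) b
    simpa [m, Matrix.mulVec, dotProduct, mul_comm] using this
  have h1 := LinearMap.finrank_range_add_finrank_ker l
  have h2 := LinearMap.finrank_range_add_finrank_ker m
  have h3 := Submodule.finrank_mono hle
  have h4 : Module.finrank 𝕃 (LinearMap.range m) = Fintype.card B :=
    LinearIndependent.rank_matrix (M := Matrix.of Φ) h
  have h5 := LinearMap.finrank_range_le l |>.trans (le_refl _)
  have h6 : Module.finrank 𝕃 (LinearMap.range l) ≤ Fintype.card I := by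
    simpa using Submodule.finrank_le (LinearMap.range l)
  omega

end Kak

namespace Kak
open Polynomial

lemma upper (p k L n : ℕ) [hp : Fact p.Prime] (hk : 1 ≤ k) (e : (Fin n → ZMod (p ^ k)) → ℕ)
    {B : Type} [Fintype B] (u : B → Fin n → ZMod (p ^ L)) (i : B → ℕ) (hi : ∀ b, i b < p ^ L)
    (a : B → Fin n → ZMod (p ^ k))
    (ha : ∀ b, i b < ∑ t : ZMod (p ^ k), e (a b + t • (fun j => ((u b j).val : ZMod (p ^ k)))))
    (h : LinearIndependent (ZMod p) (fun b => phi p L n (u b, i b))) :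
    Fintype.card B ≤ ∑ x, (sset n (e x)).card := by
  classical
  have : NeZero (p ^ k) := ⟨(pow_pos hp.out.pos k).ne'⟩
  have : NeZero (p ^ L) := ⟨(pow_pos hp.out.pos L).ne'⟩
  obtain ⟨O, _, _, _, ζ, π, hζ, hπζ⟩ := exists_ring p k hk
  have hπ : Function.Surjective π := fun z => ⟨(z.val : O), by
    rw [map_natCast]; exact ZMod.natCast_zmod_val z⟩
  let ι := algebraMap O (FractionRing O)
  have hι : Function.Injective ι := IsFractionRing.injective O (FractionRing O)
  have : CharZero (FractionRing O) := charZero_of_injective_ringHom hι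
  have hζ' : IsPrimitiveRoot (ι ζ) (p ^ k) := hζ.map_of_injective hι
  let vh : (Fin n → ZMod (p ^ L)) → Fin n → ℕ := fun v j => (v j).val
  let U : B → Fin n → ℕ := fun b j => (u b j).val
  let Q : B → O[X] := fun b => ∏ t : ZMod (p ^ k),
    (X - C (ζ ^ t.val - 1)) ^ e (a b + t • (fun j => (U b j : ZMod (p ^ k))))
  have hQ : ∀ b, (Q b).Monic := fun b => monic_prod_of_monic _ _ fun t _ => (monic_X_sub_C _).pow _
  let H : B → (Fin n → ZMod (p ^ L)) → O[X] := fun b v =>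
    C (ζ ^ (∑ i, (a b i).val * vh v i)) * (1 + X) ^ (∑ i, U b i * vh v i)
  let Φ : B → (Fin n → ZMod (p ^ L)) → O := fun b v => (H b v %ₘ Q b).coeff (i b)
  have hΦ : ∀ b v, π (Φ b v) = phi p L n (u b, i b) v := by
    intro b v
    have h1 : (Q b).map π = X ^ (∑ t : ZMod (p ^ k), e (a b + t • (fun j => ((u b j).val : ZMod (p ^ k))))) := by
      simp [Q, U, Polynomial.map_prod, hπζ, Finset.prod_pow_eq_pow_sum]
    have h2 : (H b v).map π = (1 + X) ^ (∑ i, U b i * vh v i) := by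
      simp [H, hπζ]
    simp only [Φ]
    rw [← coeff_map, map_modByMonic _ (hQ b), h1, h2, coeff_mod_X_pow _ _ _ (ha b),
      coeff_one_add_X_pow]
    have := phi_cast p L n (U b) (vh v) (i b) (hi b)
    rw [← this]
    simp [U, vh]
  have hind : LinearIndependent (FractionRing O) (fun b v => ι (Φ b v)) := by
    apply indep_lift π hπ ι hι
    convert h using 2 with b
    ext v
    exact hΦ b v
  have hcard := upper_fld (fun b v => ι (Φ b v)) hind
    (I := Σ x : Fin n → ZMod (p ^ k), {β // β ∈ sset n (e x)})
    (fun y v => (ι ζ) ^ (∑ i, (y.1 i).val * vh v i) * ∏ i, (vh v i : FractionRing O) ^ y.2.1 i) ?_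
  · simpa [Fintype.card_sigma] using hcard
  intro G hG b
  have hdvd := Q_dvd hζ' vh G e (fun x β hβ => by
    have := hG ⟨x, β, mem_sset.2 hβ⟩
    simpa [mul_assoc] using this) (a b) (U b)
  have hQm : (∏ t : ZMod (p ^ k), (X - C ((ι ζ) ^ t.val - 1)) ^ e (a b + t • (fun j => (U b j : ZMod (p ^ k)))))
      = (Q b).map ι := by
    simp [Q, Polynomial.map_prod]
  have hHm : ∀ v, (C ((ι ζ) ^ (∑ i, (a b i).val * vh v i)) * (1 + X) ^ (∑ i, U b i * vh v i))
      = (H b v).map ι := by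
    intro v
    simp [H]
  rw [hQm] at hdvd
  simp only [hHm] at hdvd
  have hQm' : ((Q b).map ι).Monic := (hQ b).map ι
  have h0 := (modByMonic_eq_zero_iff_dvd hQm').2 hdvd
  have h1 : ∀ v, ι (Φ b v) = ((H b v).map ι %ₘ (Q b).map ι).coeff (i b) := by
    intro v
    rw [← map_modByMonic _ (hQ b), coeff_map]
  have h2 := congrArg (fun f => f.coeff (i b)) h0
  simp only [coeff_zero] at h2
  rw [← h2]
  rw [← modByMonicHom_apply, map_sum, finsetSum_coeff]
  apply Finset.sum_congr rfl
  intro v _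
  rw [h1 v, modByMonicHom_apply, ← smul_eq_C_mul, smul_modByMonic, coeff_smul, smul_eq_mul]

end Kak

namespace Kak
open Polynomial

lemma greedy {K V X : Type*} [Field K] [AddCommGroup V] [Module K V] (φ : X → V) (T : ℕ → Set X)
    (hT : Monotone T) (m : ℕ) : ∃ B : Set X, B ⊆ T m ∧ LinearIndepOn K φ B ∧
      ∀ D ≤ m, φ '' (T D) ⊆ Submodule.span K (φ '' (B ∩ T D)) := by
  induction m with
  | zero =>
    obtain ⟨b, hb, -, hs, hi⟩ := exists_linearIndepOn_extension (linearIndepOn_empty K φ)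
      (Set.empty_subset (T 0))
    refine ⟨b, hb, hi, fun D hD => ?_⟩
    obtain rfl : D = 0 := by omega
    rwa [Set.inter_eq_left.2 hb]
  | succ m ih =>
    obtain ⟨B, hB, hBi, hBs⟩ := ih
    obtain ⟨b, hb, hBb, hs, hi⟩ := exists_linearIndepOn_extension hBi
      (hB.trans (hT (Nat.le_succ m)))
    refine ⟨b, hb, hi, fun D hD => ?_⟩
    rcases Nat.lt_or_ge m D with h | h
    · obtain rfl : D = m + 1 := by omega
      rwa [Set.inter_eq_left.2 hb]
    · refine (hBs D h).trans ?_
      apply Submodule.span_mono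
      apply Set.image_mono
      exact Set.inter_subset_inter_left _ hBb

lemma basis_exists (p L n c m : ℕ) [hp : Fact p.Prime] (hc : 1 ≤ c) (hmc : m ≤ p ^ c)
    (hmL : m ≤ p ^ L) : ∃ B : Finset ((Fin (n+1) → ZMod (p ^ L)) × ℕ),
      (∀ b ∈ B, IsPrim b.1 ∧ b.2 < m) ∧
      LinearIndepOn (ZMod p) (phi p L (n+1)) (B : Set _) ∧
      ∀ d D, c * d < D → D ≤ m → (d + (n+1)).choose (n+1) ≤ (B.filter (fun b => b.2 < D)).card := by
  classical
  obtain ⟨B, hB, hi, hs⟩ := greedy (K := ZMod p) (phi p L (n+1))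
    (fun D => {b : (Fin (n+1) → ZMod (p ^ L)) × ℕ | IsPrim b.1 ∧ b.2 < D})
    (fun D D' hD b hb => ⟨hb.1, lt_of_lt_of_le hb.2 hD⟩) m
  have hfin : B.Finite := by
    apply Set.Finite.subset (s := (Set.univ ×ˢ (Set.Iio m)))
    · exact Set.Finite.prod Set.finite_univ (Set.finite_Iio m)
    · intro b hb
      exact ⟨trivial, (hB hb).2⟩
  refine ⟨hfin.toFinset, fun b hb => hB (hfin.mem_toFinset.1 hb), by simpa using hi, ?_⟩
  intro d D hd hD
  have := lower p L n c d D hc hd (hD.trans hmL) (hD.trans hmc)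
    (Submodule.span (ZMod p) (phi p L (n+1) '' (B ∩ {b | IsPrim b.1 ∧ b.2 < D})))
    (fun u i hu hi => hs D hD ⟨(u, i), ⟨hu, hi⟩, rfl⟩)
  refine this.trans ?_
  have h2 : phi p L (n+1) '' (B ∩ {b | IsPrim b.1 ∧ b.2 < D}) =
      ((hfin.toFinset.filter (fun b => b.2 < D)).image (phi p L (n+1)) : Set _) := by
    ext x
    simp only [Set.mem_image, Set.mem_inter_iff, Set.mem_ofPred_eq, Finset.coe_image, Finset.coe_filter,
      Set.Finite.mem_toFinset]
    constructor
    · rintro ⟨b, ⟨h1, h2, h3⟩, rfl⟩; exact ⟨b, ⟨h1, h3⟩, rfl⟩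
    · rintro ⟨b, ⟨h1, h3⟩, rfl⟩; exact ⟨b, ⟨h1, (hB h1).1, h3⟩, rfl⟩
  rw [h2]
  exact (finrank_span_finset_le_card _).trans Finset.card_image_le

lemma avg {G X : Type*} [Group G] [Fintype G] [DecidableEq X] (act : G → X → X)
    (hmul : ∀ g h x, act (g * h) x = act g (act h x)) (hone : ∀ x, act 1 x = x)
    (S : Finset X) (hS : ∀ g, ∀ x ∈ S, act g x ∈ S) (htr : ∀ x ∈ S, ∀ y ∈ S, ∃ g, act g x = y)
    (P : X → Prop) [DecidablePred P] (x₀ : X) (hx₀ : x₀ ∈ S) :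
    Fintype.card G * (S.filter P).card =
      S.card * (Finset.univ.filter (fun g => P (act g x₀))).card := by
  have h1 : ∀ x ∈ S, (Finset.univ.filter (fun g => P (act g x))).card =
      (Finset.univ.filter (fun g => P (act g x₀))).card := by
    intro x hx
    obtain ⟨h, rfl⟩ := htr x₀ hx₀ x hx
    apply Finset.card_bij (fun g _ => g * h)
    · intro g hg
      simpa [hmul] using hg
    · intro g _ g' _ hgg
      exact mul_right_cancel hgg
    · intro g hg
      refine ⟨g * h⁻¹, ?_, by simp⟩
      simpa [← hmul] using hg
  have h2 : ∀ g, (S.filter (fun x => P (act g x))).card = (S.filter P).card := by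
    intro g
    apply Finset.card_bij (fun x _ => act g x)
    · intro x hx
      rw [Finset.mem_filter] at hx ⊢
      exact ⟨hS g x hx.1, hx.2⟩
    · intro x _ y _ hxy
      have := congrArg (act g⁻¹) hxy
      simpa [← hmul, hone] using this
    · intro y hy
      rw [Finset.mem_filter] at hy
      refine ⟨act g⁻¹ y, ?_, by simp [← hmul, hone]⟩
      rw [Finset.mem_filter]
      refine ⟨hS _ _ hy.1, ?_⟩
      simpa [← hmul, hone] using hy.2
  calc Fintype.card G * (S.filter P).card = ∑ g : G, (S.filter (fun x => P (act g x))).card := by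
        simp [h2]
    _ = ∑ x ∈ S, (Finset.univ.filter (fun g => P (act g x))).card := by
        simp only [Finset.card_filter]
        rw [Finset.sum_comm]
    _ = _ := by rw [Finset.sum_congr rfl h1]; simp

lemma phi_mul (p L n : ℕ) (A : Matrix (Fin n) (Fin n) (ZMod (p ^ L))) (u v : Fin n → ZMod (p ^ L))
    (i : ℕ) : phi p L n (A.mulVec u, i) v = phi p L n (u, i) (A.transpose.mulVec v) := by
  unfold phi
  have : ∑ j, A.mulVec u j * v j = ∑ j, u j * A.transpose.mulVec v j := by
    change dotProduct (A.mulVec u) v = dotProduct u (A.transpose.mulVec v)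
    rw [Matrix.mulVec_transpose, dotProduct_comm, Matrix.dotProduct_mulVec, dotProduct_comm]
  simp only [this]

lemma indep_GL (p L n : ℕ) [hp : Fact p.Prime] (A : (Matrix (Fin n) (Fin n) (ZMod (p ^ L)))ˣ) {B : Type*}
    (u : B → Fin n → ZMod (p ^ L)) (i : B → ℕ)
    (h : LinearIndependent (ZMod p) (fun b => phi p L n (u b, i b))) :
    LinearIndependent (ZMod p) (fun b => phi p L n (A.val.mulVec (u b), i b)) := by
  have hsurj : Function.Surjective (fun v : Fin n → ZMod (p ^ L) => A.val.transpose.mulVec v) := by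
    intro w
    refine ⟨(A⁻¹).val.transpose.mulVec w, ?_⟩
    simp only [Matrix.mulVec_mulVec, ← Matrix.transpose_mul]
    simp
  have h2 := h.map' (LinearMap.funLeft (ZMod p) (ZMod p) _)
    (LinearMap.ker_eq_bot.2 (LinearMap.funLeft_injective_of_surjective (ZMod p) (ZMod p) _ hsurj))
  have heq : (fun b => phi p L n (A.val.mulVec (u b), i b)) =
      (LinearMap.funLeft (ZMod p) (ZMod p) (fun v => A.val.transpose.mulVec v)) ∘
        fun b => phi p L n (u b, i b) := by
    ext b v
    exact phi_mul p L n A.val (u b) v (i b)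
  rw [heq]
  exact h2

lemma prim_unit (p k n : ℕ) [hp : Fact p.Prime] (hk : 1 ≤ k) (w : Fin n → ZMod (p ^ k)) (hw : IsPrim w) :
    ∃ i, ¬ p ∣ (w i).val := by
  by_contra hcon
  push Not at hcon
  obtain ⟨v, hv⟩ := hw
  have hd : p ∣ p ^ k := dvd_pow_self p (by omega)
  have h1 := congrArg (ZMod.castHom hd (ZMod p)) hv
  rw [map_sum, map_one, Finset.sum_eq_zero] at h1
  · exact zero_ne_one h1
  · intro i _
    rw [map_mul]
    have : ZMod.castHom hd (ZMod p) (w i) = 0 := by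
      have h3 : w i = ((w i).val : ZMod (p ^ k)) := (ZMod.natCast_zmod_val _).symm
      rw [h3, map_natCast]
      exact (ZMod.natCast_eq_zero_iff _ _).2 (hcon i)
    rw [this, mul_zero]

lemma red_trans0 (p k L n : ℕ) [hp : Fact p.Prime] (hk : 1 ≤ k) (hkL : k ≤ L)
    (w : Fin (n+1) → ZMod (p ^ k)) (hw : IsPrim w) :
    ∃ A : (Matrix (Fin (n+1)) (Fin (n+1)) (ZMod (p ^ L)))ˣ,
      (A.val.map (ZMod.castHom (pow_dvd_pow p hkL) (ZMod (p ^ k)))).mulVec (Pi.single 0 1) = w := by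
  obtain ⟨i, hi⟩ := prim_unit p k (n+1) hk w hw
  let wh : Fin (n+1) → ZMod (p ^ L) := fun j => ((w j).val : ZMod (p ^ L))
  let M := ((1 : Matrix (Fin (n+1)) (Fin (n+1)) (ZMod (p ^ L))).updateCol i wh).submatrix id (Equiv.swap 0 i)
  have hM : IsUnit M := by
    rw [Matrix.isUnit_iff_isUnit_det]
    simp only [M]
    rw [Matrix.det_permute']
    apply IsUnit.mul
    · rcases Int.units_eq_one_or (Equiv.Perm.sign (Equiv.swap 0 i)) with h | h <;> simp [h]
    · have : ((1 : Matrix (Fin (n+1)) (Fin (n+1)) (ZMod (p ^ L))).updateCol i wh).det = wh i := by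
        rw [← Matrix.cramer_apply, Matrix.cramer_one]; rfl
      rw [this]
      simp only [wh]
      rw [ZMod.isUnit_iff_coprime]
      apply Nat.Coprime.pow_right
      exact ((Nat.Prime.coprime_iff_not_dvd hp.out).2 hi).symm
  refine ⟨hM.unit, ?_⟩
  rw [Matrix.mulVec_single_one]
  ext j
  simp [M, wh, IsUnit.unit_spec]

end Kak

namespace Kak
open Polynomial

lemma card_sset_le (n g : ℕ) :
    (n+1).factorial * (sset (n+1) ((n+1) * g)).card ≤ (2 * ((n+1) * g)) ^ (n+1) := by
  unfold sset
  split_ifs with h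
  · simp
  · rw [card_simplex, ← Nat.descFactorial_eq_factorial_mul_choose]
    refine (Nat.descFactorial_le_pow _ _).trans (Nat.pow_le_pow_left ?_ _)
    have : n + 1 ≤ (n+1) * g := by
      rcases Nat.eq_zero_or_pos g with rfl | hg
      · simp at h
      · exact Nat.le_mul_of_pos_right _ hg
    omega

lemma choose_ge (n c D : ℕ) (hc : 1 ≤ c) (hD : 1 ≤ D) :
    D ^ (n+1) ≤ c ^ (n+1) * ((n+1).factorial * ((D-1)/c + (n+1)).choose (n+1)) := by
  have h1 : D ≤ c * ((D-1)/c + 1) := by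
    have := Nat.lt_mul_div_succ (D-1) (show 0 < c by omega)
    omega
  have h2 : ((D-1)/c + 1)^(n+1) ≤ (n+1).factorial * ((D-1)/c + (n+1)).choose (n+1) := by
    rw [← Nat.descFactorial_eq_factorial_mul_choose]
    have := Nat.pow_sub_le_descFactorial ((D-1)/c + (n+1)) (n+1)
    rwa [show (D-1)/c + (n+1) + 1 - (n+1) = (D-1)/c + 1 by
      generalize (D-1)/c = z; omega] at this
  calc D ^ (n+1) ≤ (c * ((D-1)/c + 1))^(n+1) := Nat.pow_le_pow_left h1 _
    _ = c^(n+1) * ((D-1)/c + 1)^(n+1) := mul_pow _ _ _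
    _ ≤ _ := Nat.mul_le_mul_left _ h2

lemma IsPrim.map {R S : Type*} [CommRing R] [CommRing S] (f : R →+* S) {n : ℕ} {u : Fin n → R}
    (h : IsPrim u) : IsPrim (fun j => f (u j)) := by
  obtain ⟨v, hv⟩ := h
  exact ⟨fun j => f (v j), by simp only [← map_mul, ← map_sum, hv, map_one]⟩

lemma IsPrim.mulVec {R : Type*} [CommRing R] {n : ℕ} {u : Fin n → R}
    (h : IsPrim u) (A A' : Matrix (Fin n) (Fin n) R) (hA : A' * A = 1) : IsPrim (A.mulVec u) := by
  obtain ⟨v, hv⟩ := h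
  refine ⟨Matrix.vecMul v A', ?_⟩
  change dotProduct _ _ = 1
  rw [Matrix.dotProduct_mulVec, Matrix.vecMul_vecMul, hA, Matrix.vecMul_one]
  exact hv

open Classical in
/-- finset of primitive vectors -/
noncomputable def prims (R : Type*) [CommRing R] [Fintype R] (n : ℕ) : Finset (Fin n → R) :=
  Finset.univ.filter (fun u => IsPrim u)

lemma mem_prims {R : Type*} [CommRing R] [Fintype R] {n : ℕ} {u : Fin n → R} :
    u ∈ prims R n ↔ IsPrim u := by simp [prims]

/-- the action of matrices through a ring hom -/
def gact {R S : Type*} [CommRing R] [CommRing S] (ρ : R →+* S) {n : ℕ}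
    (A : (Matrix (Fin n) (Fin n) R)ˣ) (w : Fin n → S) : Fin n → S := (A.val.map ρ).mulVec w

lemma gact_mul {R S : Type*} [CommRing R] [CommRing S] (ρ : R →+* S) {n : ℕ}
    (A A' : (Matrix (Fin n) (Fin n) R)ˣ) (w : Fin n → S) :
    gact ρ (A * A') w = gact ρ A (gact ρ A' w) := by
  simp only [gact, Units.val_mul, Matrix.map_mul, Matrix.mulVec_mulVec]

lemma gact_one {R S : Type*} [CommRing R] [CommRing S] (ρ : R →+* S) {n : ℕ}
    (w : Fin n → S) : gact ρ (1 : (Matrix (Fin n) (Fin n) R)ˣ) w = w := by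
  simp [gact]

lemma gact_prim {R S : Type*} [CommRing R] [CommRing S] (ρ : R →+* S) {n : ℕ}
    (A : (Matrix (Fin n) (Fin n) R)ˣ) (w : Fin n → S) (h : IsPrim w) : IsPrim (gact ρ A w) :=
  h.mulVec _ ((A⁻¹).val.map ρ) (by rw [← Matrix.map_mul, Units.inv_mul]; simp)

lemma gact_tr (p k L n : ℕ) [hp : Fact p.Prime] (hk : 1 ≤ k) (hkL : k ≤ L)
    (x y : Fin (n+1) → ZMod (p ^ k)) (hx : IsPrim x) (hy : IsPrim y) :
    ∃ A : (Matrix (Fin (n+1)) (Fin (n+1)) (ZMod (p ^ L)))ˣ,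
      gact (ZMod.castHom (pow_dvd_pow p hkL) (ZMod (p ^ k))) A x = y := by
  obtain ⟨A, hA⟩ := red_trans0 p k L n hk hkL x hx
  obtain ⟨A', hA'⟩ := red_trans0 p k L n hk hkL y hy
  refine ⟨A' * A⁻¹, ?_⟩
  change gact _ A _ = x at hA
  rw [gact_mul, ← hA, ← gact_mul _ A⁻¹, inv_mul_cancel, gact_one]
  exact hA'

lemma gact_red (p k L n : ℕ) [hp : Fact p.Prime] (hkL : k ≤ L)
    (A : (Matrix (Fin n) (Fin n) (ZMod (p ^ L)))ˣ) (u : Fin n → ZMod (p ^ L)) :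
    gact (ZMod.castHom (pow_dvd_pow p hkL) (ZMod (p ^ k))) A
      (fun j => ZMod.castHom (pow_dvd_pow p hkL) (ZMod (p ^ k)) (u j)) =
    fun j => ((A.val.mulVec u j).val : ZMod (p ^ k)) := by
  ext j
  have h1 := RingHom.map_mulVec (ZMod.castHom (pow_dvd_pow p hkL) (ZMod (p ^ k))) A.val u j
  unfold gact
  rw [show (A.val.map (ZMod.castHom (pow_dvd_pow p hkL) (ZMod (p ^ k)))).mulVec
    (fun j => ZMod.castHom (pow_dvd_pow p hkL) (ZMod (p ^ k)) (u j)) j = _ from h1.symm]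
  simp

lemma hup (p k L n m : ℕ) [hp : Fact p.Prime] (hk : 1 ≤ k) (hkL : k ≤ L)
    (g F : (Fin (n+1) → ZMod (p ^ k)) → ℕ)
    (hF : ∀ u, IsPrim u → ∃ a, F u ≤ ∑ t : ZMod (p ^ k), g (a + t • u))
    (B : Finset ((Fin (n+1) → ZMod (p ^ L)) × ℕ)) (hB : ∀ b ∈ B, IsPrim b.1 ∧ b.2 < m)
    (hm : m ≤ p ^ L)
    (hBi : LinearIndepOn (ZMod p) (phi p L (n+1)) (B : Set _))
    (ρ : ZMod (p ^ L) →+* ZMod (p ^ k)) (hρ : ρ = ZMod.castHom (pow_dvd_pow p hkL) (ZMod (p ^ k)))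
    (A : (Matrix (Fin (n+1)) (Fin (n+1)) (ZMod (p ^ L)))ˣ) :
    (n+1).factorial *
      (B.filter (fun b => b.2 < (n+1) * F (gact ρ A (fun j => ρ (b.1 j))))).card ≤
      (2 * (n+1)) ^ (n+1) * ∑ x, g x ^ (n+1) := by
  classical
  have hred : ∀ u : Fin (n+1) → ZMod (p ^ L), gact ρ A (fun j => ρ (u j)) =
        fun j => ((A.val.mulVec u j).val : ZMod (p ^ k)) := by
    intro u; subst hρ; exact gact_red p k L (n+1) hkL A u
  obtain ⟨B', hB'⟩ : ∃ B', B' = (B.filter (fun b => b.2 < (n+1) * F (gact ρ A (fun j => ρ (b.1 j))))) := ⟨_, rfl⟩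
  rw [← hB']
  have hmem : ∀ b : B', b.1 ∈ B ∧ b.1.2 < (n+1) * F (gact ρ A (fun j => ρ (b.1.1 j))) := by
    intro b
    have h1 : ∀ b ∈ B', b ∈ B ∧ b.2 < (n+1) * F (gact ρ A (fun j => ρ (b.1 j))) := by
      intro b hb
      rw [hB', Finset.mem_filter] at hb
      exact hb
    exact h1 b.1 b.2
  have hpr : ∀ b : B', IsPrim (gact ρ A (fun j => ρ (b.1.1 j))) := fun b =>
    gact_prim ρ A _ ((hB _ (hmem b).1).1.map ρ)
  choose a ha using fun b : B' => hF _ (hpr b)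
  have hind : LinearIndependent (ZMod p) (fun b : B' => phi p L (n+1) (A.val.mulVec b.1.1, b.1.2)) := by
    apply indep_GL p L (n+1) A (fun b : B' => b.1.1) (fun b => b.1.2)
    have h1 : LinearIndepOn (ZMod p) (phi p L (n+1)) (B' : Set _) :=
      hBi.mono (by rw [hB']; exact_mod_cast Finset.filter_subset _ _)
    exact h1
  have := upper p k L (n+1) hk (fun x => (n+1) * g x) (fun b : B' => A.val.mulVec b.1.1)
    (fun b => b.1.2) (fun b => (hB _ (hmem b).1).2.trans_le hm) a
    (fun b => by
      rw [← hred, ← Finset.mul_sum]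
      exact (hmem b).2.trans_le (Nat.mul_le_mul_left _ (ha b))) hind
  rw [Fintype.card_coe] at this
  calc _ ≤ (n+1).factorial * ∑ x, (sset (n+1) ((n+1) * g x)).card := Nat.mul_le_mul_left _ this
    _ ≤ ∑ x, (2 * ((n+1) * g x)) ^ (n+1) := by
      rw [Finset.mul_sum]
      exact Finset.sum_le_sum fun x _ => card_sset_le n (g x)
    _ = _ := by
      rw [Finset.mul_sum]
      apply Finset.sum_congr rfl
      intro x _
      rw [← mul_pow, mul_assoc]

lemma Alem (p k n c M : ℕ) [hp : Fact p.Prime] (hk : 1 ≤ k) (hc : 1 ≤ c) (hM : (n+1) * M ≤ p ^ c)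
    (g F : (Fin (n+1) → ZMod (p ^ k)) → ℕ)
    (hF : ∀ u, IsPrim u → F u ≤ M ∧ ∃ a, F u ≤ ∑ t : ZMod (p ^ k), g (a + t • u)) :
    ∑ u ∈ prims (ZMod (p ^ k)) (n+1), F u ^ (n+1) ≤
      (2 * c) ^ (n+1) * ((prims (ZMod (p ^ k)) (n+1)).card * ∑ x, g x ^ (n+1)) := by
  classical
  obtain ⟨L, hL⟩ : ∃ L, L = k + c := ⟨_, rfl⟩
  have hkL : k ≤ L := by omega
  have hcL : p ^ c ≤ p ^ L := Nat.pow_le_pow_right hp.out.pos (by omega)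
  obtain ⟨B, hB, hBi, hBc⟩ := basis_exists p L n c ((n+1) * M) hc hM (hM.trans hcL)
  obtain ⟨ρ, hρ⟩ : ∃ ρ, ρ = ZMod.castHom (pow_dvd_pow p hkL) (ZMod (p ^ k)) := ⟨_, rfl⟩
  obtain ⟨S, hS⟩ : ∃ S, S = prims (ZMod (p ^ k)) (n+1) := ⟨_, rfl⟩
  have memS : ∀ {u}, u ∈ S ↔ IsPrim u := by intro u; rw [hS, mem_prims]
  rw [← hS]
  have hlow : ∀ w ∈ S, ((n+1) * F w) ^ (n+1) ≤ c ^ (n+1) * ((n+1).factorial *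
      (B.filter (fun b => b.2 < (n+1) * F w)).card) := by
    intro w hw
    rcases Nat.eq_zero_or_pos (F w) with h0 | h0
    · simp [h0]
    refine (choose_ge n c ((n+1) * F w) hc (Nat.mul_pos (by omega) h0)).trans ?_
    apply Nat.mul_le_mul_left
    apply Nat.mul_le_mul_left
    apply hBc
    · have h1 : 0 < (n+1) * F w := Nat.mul_pos (by omega) h0
      have := Nat.mul_div_le ((n+1) * F w - 1) c
      omega
    · exact Nat.mul_le_mul_left _ (hF w (memS.1 hw)).1
  have hG : 0 < Fintype.card (Matrix (Fin (n+1)) (Fin (n+1)) (ZMod (p ^ L)))ˣ := Fintype.card_pos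
  refine Nat.le_of_mul_le_mul_left (c := (n+1)^(n+1)) ?_ (by positivity)
  refine Nat.le_of_mul_le_mul_left (c := Fintype.card (Matrix (Fin (n+1)) (Fin (n+1)) (ZMod (p ^ L)))ˣ) ?_ hG
  calc Fintype.card (Matrix (Fin (n+1)) (Fin (n+1)) (ZMod (p ^ L)))ˣ * ((n+1)^(n+1) * ∑ u ∈ S, F u ^ (n+1))
      = Fintype.card (Matrix (Fin (n+1)) (Fin (n+1)) (ZMod (p ^ L)))ˣ * ∑ w ∈ S, ((n+1) * F w) ^ (n+1) := by
        rw [Finset.mul_sum]; simp only [mul_pow]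
    _ ≤ Fintype.card (Matrix (Fin (n+1)) (Fin (n+1)) (ZMod (p ^ L)))ˣ * ∑ w ∈ S, c ^ (n+1) * ((n+1).factorial *
      (B.filter (fun b => b.2 < (n+1) * F w)).card) := Nat.mul_le_mul_left _ (Finset.sum_le_sum hlow)
    _ = c ^ (n+1) * ((n+1).factorial * (Fintype.card (Matrix (Fin (n+1)) (Fin (n+1)) (ZMod (p ^ L)))ˣ * ∑ w ∈ S, (B.filter (fun b => b.2 < (n+1) * F w)).card)) := by
        rw [← Finset.mul_sum, ← Finset.mul_sum]; ring
    _ = c ^ (n+1) * ((n+1).factorial * ∑ b ∈ B, Fintype.card (Matrix (Fin (n+1)) (Fin (n+1)) (ZMod (p ^ L)))ˣ * (S.filter (fun w => b.2 < (n+1) * F w)).card) := by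
        rw [← Finset.mul_sum]
        simp only [Finset.card_filter]
        rw [Finset.sum_comm]
    _ = c ^ (n+1) * ((n+1).factorial * ∑ b ∈ B, S.card * (Finset.univ.filter (fun A : (Matrix (Fin (n+1)) (Fin (n+1)) (ZMod (p ^ L)))ˣ => b.2 < (n+1) * F (gact ρ A (fun j => ρ (b.1 j))))).card) := by
        congr 2
        apply Finset.sum_congr rfl
        intro b hb
        exact avg (gact ρ) (gact_mul ρ) (gact_one ρ) S (fun A x hx => memS.2 (gact_prim ρ A x (memS.1 hx)))
          (fun x hx y hy => hρ ▸ gact_tr p k L n hk hkL x y (memS.1 hx) (memS.1 hy)) (fun w => b.2 < (n+1) * F w) _ (memS.2 ((hB _ hb).1.map ρ))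
    _ = c ^ (n+1) * (S.card * ∑ A : (Matrix (Fin (n+1)) (Fin (n+1)) (ZMod (p ^ L)))ˣ, (n+1).factorial * (B.filter (fun b => b.2 < (n+1) * F (gact ρ A (fun j => ρ (b.1 j))))).card) := by
        rw [← Finset.mul_sum, ← Finset.mul_sum]
        simp only [Finset.card_filter]
        rw [Finset.sum_comm]; ring
    _ ≤ c ^ (n+1) * (S.card * ∑ A : (Matrix (Fin (n+1)) (Fin (n+1)) (ZMod (p ^ L)))ˣ, (2 * (n+1)) ^ (n+1) * ∑ x, g x ^ (n+1)) := by
        apply Nat.mul_le_mul_left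
        apply Nat.mul_le_mul_left
        exact Finset.sum_le_sum fun A _ => hup p k L n ((n+1)*M) hk hkL g F (fun u hu => (hF u hu).2) B hB (hM.trans hcL) hBi ρ hρ A
    _ = _ := by
        rw [Finset.sum_const, Finset.card_univ, smul_eq_mul]
        simp only [mul_pow]; ring

end Kak

namespace Kak

lemma pigeon {B : Type*} [Fintype B] (w : B → ℕ) (M : ℕ) (hM : 1 ≤ M) (hw : ∀ t, w t ≤ M) :
    ∃ l, 1 ≤ l ∧ l ≤ M ∧ ((∑ t, w t : ℕ) : ℝ) ≤ (Real.log M + 1) *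
      ((l : ℝ) * ((Finset.univ.filter (fun t => l ≤ w t)).card : ℝ)) := by
  classical
  have hH : 0 < Real.log M + 1 := by
    have := Real.log_natCast_nonneg M
    linarith
  by_contra hcon
  push Not at hcon
  have h1 : ∀ m ≤ M, m = ∑ l ∈ Finset.range M, if l + 1 ≤ m then 1 else 0 := by
    intro m hm
    rw [← Finset.card_filter]
    rw [show (Finset.range M).filter (fun l => l + 1 ≤ m) = Finset.range m by
      ext l; simp; omega, Finset.card_range]
  have h2 : ∑ t, w t = ∑ l ∈ Finset.range M, (Finset.univ.filter (fun t => l + 1 ≤ w t)).card := by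
    rw [Finset.sum_congr rfl (fun t _ => h1 (w t) (hw t)), Finset.sum_comm]
    simp only [Finset.card_filter]
  obtain ⟨W, hW⟩ : ∃ W : ℝ, W = ((∑ t, w t : ℕ) : ℝ) := ⟨_, rfl⟩
  have h3 : W < ∑ l ∈ Finset.range M, W / (Real.log M + 1) * ((l + 1 : ℕ) : ℝ)⁻¹ := by
    conv_lhs => rw [hW, h2, Nat.cast_sum]
    apply Finset.sum_lt_sum_of_nonempty ⟨0, by simp; omega⟩
    intro l hl
    have h4 := hcon (l + 1) (by omega) (by simpa using hl)
    rw [← hW] at h4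
    have h5 : (0 : ℝ) < ((l + 1 : ℕ) : ℝ) := by positivity
    rw [div_mul_eq_mul_div, lt_div_iff₀ hH, ← div_eq_mul_inv, lt_div_iff₀ h5]
    linarith
  rw [← Finset.mul_sum] at h3
  have h6 := harmonic_le_one_add_log M
  rw [harmonic] at h6
  push_cast at h6 h3
  have hW0 : 0 ≤ W := by rw [hW]; positivity
  have h7 : W / (Real.log M + 1) * ∑ i ∈ Finset.range M, ((i : ℝ) + 1)⁻¹ ≤
      W / (Real.log M + 1) * (1 + Real.log M) := by
    apply mul_le_mul_of_nonneg_left h6 (by positivity)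
  have h8 : W / (Real.log M + 1) * (1 + Real.log M) = W := by field_simp; ring
  linarith

/-- set version of the maximal inequality -/
def Ind (n : ℕ) (B : Type*) [CommRing B] [Fintype B] [DecidableEq B] (C : ℝ) : Prop :=
  ∀ (S : Finset (Fin n → B)) (κ : (Fin n → B) → ℕ),
    (∀ u, IsPrim u → ∃ a, κ u ≤ (Finset.univ.filter (fun t : B => a + t • u ∈ S)).card) →
    C * ∑ u ∈ prims B n, (κ u : ℝ) ^ n ≤ (S.card : ℝ) * ((prims B n).card : ℝ)

lemma layer (n M m : ℕ) (hm : m ≤ M) : (m : ℝ) ^ (n+1) =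
    ∑ l ∈ Finset.range M, (((l + 1 : ℕ) : ℝ) ^ (n+1) - (l : ℝ) ^ (n+1)) * (if l < m then 1 else 0) := by
  simp only [mul_ite, mul_one, mul_zero]
  rw [← Finset.sum_filter, show (Finset.range M).filter (fun l => l < m) = Finset.range m by
      ext l; simp; omega, Finset.sum_range_sub (fun l : ℕ => (l : ℝ) ^ (n+1))]
  simp

lemma layer_nonneg (n l : ℕ) : 0 ≤ (((l + 1 : ℕ) : ℝ) ^ (n+1) - (l : ℝ) ^ (n+1)) := by
  rw [sub_nonneg]
  apply pow_le_pow_left₀ (by positivity)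
  push_cast; linarith

lemma layer_cake (n M : ℕ) (B : Type*) [CommRing B] [Fintype B] [DecidableEq B] (C : ℝ)
    (hI : Ind (n+1) B C) (h : (Fin (n+1) → B) → ℕ) (hh : ∀ z, h z ≤ M)
    (lam κ : (Fin (n+1) → B) → ℕ) (hl : ∀ u, lam u ≤ M)
    (H : ∀ u, IsPrim u → ∃ a, κ u ≤ (Finset.univ.filter (fun t : B => lam u ≤ h (a + t • u))).card) :
    C * ∑ u ∈ prims B (n+1), ((lam u : ℝ) * (κ u : ℝ)) ^ (n+1) ≤
      (∑ z, (h z : ℝ) ^ (n+1)) * ((prims B (n+1)).card : ℝ) := by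
  classical
  have h1 : ∀ l, C * ∑ u ∈ prims B (n+1), ((if l < lam u then (κ u) else 0 : ℕ) : ℝ) ^ (n+1) ≤
      ((Finset.univ.filter (fun z => l < h z)).card : ℝ) * ((prims B (n+1)).card : ℝ) := by
    intro l
    apply hI
    intro u hu
    obtain ⟨a, ha⟩ := H u hu
    refine ⟨a, ?_⟩
    split_ifs with hlu
    · refine ha.trans (Finset.card_le_card ?_)
      intro t ht
      simp only [Finset.mem_filter, Finset.mem_univ, true_and] at ht ⊢
      omega
    · simp
  have h2 := Finset.sum_le_sum fun l (_ : l ∈ Finset.range M) =>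
    mul_le_mul_of_nonneg_left (h1 l) (layer_nonneg n l)
  calc _ = ∑ i ∈ Finset.range M,
      (((i + 1 : ℕ) : ℝ) ^ (n + 1) - (i : ℝ) ^ (n + 1)) *
        (C * ∑ u ∈ prims B (n + 1), ((if i < lam u then κ u else 0 : ℕ) : ℝ) ^ (n + 1)) := by
        have : ∀ u, ((lam u : ℝ) * (κ u : ℝ)) ^ (n+1) = ∑ i ∈ Finset.range M,
          (((i + 1 : ℕ) : ℝ) ^ (n + 1) - (i : ℝ) ^ (n + 1)) * ((if i < lam u then κ u else 0 : ℕ) : ℝ) ^ (n + 1) := by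
          intro u
          rw [mul_pow, layer n M (lam u) (hl u), Finset.sum_mul]
          apply Finset.sum_congr rfl
          intro l _
          split_ifs <;> simp
        simp only [this]
        rw [Finset.sum_comm, Finset.mul_sum]
        apply Finset.sum_congr rfl
        intro l _
        rw [← Finset.mul_sum]; ring
    _ ≤ _ := h2
    _ = _ := by
        simp only [← mul_assoc]
        rw [← Finset.sum_mul]
        congr 1
        simp only [fun z => layer n M (h z) (hh z)]
        rw [Finset.sum_comm]
        apply Finset.sum_congr rfl
        intro l _
        rw [← Finset.mul_sum]
        simp

lemma step (p k n c M : ℕ) [hp : Fact p.Prime] (hk : 1 ≤ k) (hc : 1 ≤ c) (hM : (n+1) * M ≤ p ^ c)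
    (hM1 : 1 ≤ M) (B : Type*) [CommRing B] [Fintype B] [DecidableEq B] (C : ℝ) (hC : 0 ≤ C)
    (hI : Ind (n+1) B C)
    (f : (Fin (n+1) → ZMod (p ^ k)) → (Fin (n+1) → B) → ℕ)
    (α : (Fin (n+1) → ZMod (p ^ k)) → (Fin (n+1) → B) → (Fin (n+1) → ZMod (p ^ k)))
    (β : (Fin (n+1) → ZMod (p ^ k)) → (Fin (n+1) → B) → (Fin (n+1) → B))
    (hw : ∀ u u', IsPrim u → IsPrim u' → ∀ t : B, 
      ∑ s : ZMod (p ^ k), f (α u u' + s • u) (β u u' + t • u') ≤ M) :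
    C * ∑ u ∈ prims (ZMod (p ^ k)) (n+1), ∑ u' ∈ prims B (n+1),
      ((∑ t : B, ∑ s : ZMod (p ^ k), f (α u u' + s • u) (β u u' + t • u') : ℕ) : ℝ) ^ (n+1) ≤
    (2 * (Real.log M + 1) * c) ^ (n+1) * ((∑ x, ∑ z, (f x z : ℝ) ^ (n+1)) *
      ((prims (ZMod (p ^ k)) (n+1)).card : ℝ) * ((prims B (n+1)).card : ℝ)) := by
  classical
  have hH : 0 < Real.log M + 1 := by
    have := Real.log_natCast_nonneg M
    linarith
  let w : (Fin (n+1) → ZMod (p ^ k)) → (Fin (n+1) → B) → B → ℕ := fun u u' t =>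
    ∑ s : ZMod (p ^ k), f (α u u' + s • u) (β u u' + t • u')
  have hlam : ∀ u u', ∃ l, 1 ≤ l ∧ l ≤ M ∧ (IsPrim u → IsPrim u' → ((∑ t, w u u' t : ℕ) : ℝ) ≤ (Real.log M + 1) *
      ((l : ℝ) * ((Finset.univ.filter (fun t => l ≤ w u u' t)).card : ℝ))) := by
    intro u u'
    by_cases h : IsPrim u ∧ IsPrim u'
    · obtain ⟨l, h1, h2, h3⟩ := pigeon (w u u') M hM1 (hw u u' h.1 h.2)
      exact ⟨l, h1, h2, fun _ _ => h3⟩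
    · exact ⟨1, le_rfl, hM1, fun a b => absurd ⟨a, b⟩ h⟩
  choose lam hl1 hlM hlam using hlam
  let h : (Fin (n+1) → ZMod (p ^ k)) → (Fin (n+1) → B) → ℕ := fun u z =>
    (prims B (n+1)).sup (fun u' => if ∃ t, z = β u u' + t • u' ∧ lam u u' ≤ w u u' t then lam u u' else 0)
  have hprop : ∀ u z, h u z ≤ M ∧ ∃ a, h u z ≤ ∑ s : ZMod (p ^ k), f (a + s • u) z := by
    intro u z
    apply Finset.sup_induction (p := fun m => m ≤ M ∧ ∃ a, m ≤ ∑ s : ZMod (p ^ k), f (a + s • u) z)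
    · exact ⟨Nat.zero_le _, 0, Nat.zero_le _⟩
    · intro a ha b hb
      rcases le_total a b with hab | hab
      · rwa [sup_eq_right.2 hab]
      · rwa [sup_eq_left.2 hab]
    · intro u' _
      split_ifs with hex
      · obtain ⟨t, rfl, ht⟩ := hex
        exact ⟨hlM u u', α u u', ht⟩
      · exact ⟨Nat.zero_le _, 0, Nat.zero_le _⟩
  have hA : ∀ z, ∑ u ∈ prims (ZMod (p ^ k)) (n+1), (h u z : ℝ) ^ (n+1) ≤
      (2 * c : ℝ) ^ (n+1) * (((prims (ZMod (p ^ k)) (n+1)).card : ℝ) * ∑ x, (f x z : ℝ) ^ (n+1)) := by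
    intro z
    have := Alem p k n c M hk hc hM (fun x => f x z) (fun u => h u z) (fun u _ => hprop u z)
    exact_mod_cast this
  have hBl : ∀ u, C * ∑ u' ∈ prims B (n+1), ((lam u u' : ℝ) *
      ((Finset.univ.filter (fun t => lam u u' ≤ w u u' t)).card : ℝ)) ^ (n+1) ≤
      (∑ z, (h u z : ℝ) ^ (n+1)) * ((prims B (n+1)).card : ℝ) := by
    intro u
    apply layer_cake n M B C hI (h u) (fun z => (hprop u z).1) (lam u)
      (fun u' => (Finset.univ.filter (fun t => lam u u' ≤ w u u' t)).card) (hlM u)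
    intro u' hu'
    refine ⟨β u u', Finset.card_le_card ?_⟩
    intro t ht
    simp only [Finset.mem_filter, Finset.mem_univ, true_and] at ht ⊢
    have := Finset.le_sup (f := fun u'' => if ∃ t', β u u' + t • u' = β u u'' + t' • u'' ∧ lam u u'' ≤ w u u'' t'
      then lam u u'' else 0) (mem_prims.2 hu')
    refine le_trans ?_ this
    rw [if_pos ⟨t, rfl, ht⟩]
  calc C * ∑ u ∈ prims (ZMod (p ^ k)) (n+1), ∑ u' ∈ prims B (n+1), ((∑ t : B, w u u' t : ℕ) : ℝ) ^ (n+1)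
      ≤ C * ∑ u ∈ prims (ZMod (p ^ k)) (n+1), ∑ u' ∈ prims B (n+1), 
        (Real.log M + 1) ^ (n+1) * ((lam u u' : ℝ) *
      ((Finset.univ.filter (fun t => lam u u' ≤ w u u' t)).card : ℝ)) ^ (n+1) := by
        apply mul_le_mul_of_nonneg_left _ hC
        apply Finset.sum_le_sum; intro u hu
        apply Finset.sum_le_sum; intro u' hu'
        rw [← mul_pow]
        exact pow_le_pow_left₀ (by positivity) (hlam u u' (mem_prims.1 hu) (mem_prims.1 hu')) _
    _ = (Real.log M + 1) ^ (n+1) * ∑ u ∈ prims (ZMod (p ^ k)) (n+1), C * ∑ u' ∈ prims B (n+1), 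
        ((lam u u' : ℝ) * ((Finset.univ.filter (fun t => lam u u' ≤ w u u' t)).card : ℝ)) ^ (n+1) := by
        simp only [← Finset.mul_sum]; ring
    _ ≤ (Real.log M + 1) ^ (n+1) * ∑ u ∈ prims (ZMod (p ^ k)) (n+1), 
        (∑ z, (h u z : ℝ) ^ (n+1)) * ((prims B (n+1)).card : ℝ) := by
        apply mul_le_mul_of_nonneg_left _ (by positivity)
        exact Finset.sum_le_sum fun u _ => hBl u
    _ = (Real.log M + 1) ^ (n+1) * ((∑ z, ∑ u ∈ prims (ZMod (p ^ k)) (n+1), (h u z : ℝ) ^ (n+1)) * ((prims B (n+1)).card : ℝ)) := by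
        rw [← Finset.sum_mul, Finset.sum_comm]
    _ ≤ (Real.log M + 1) ^ (n+1) * ((∑ z, (2 * c : ℝ) ^ (n+1) * (((prims (ZMod (p ^ k)) (n+1)).card : ℝ) * ∑ x, (f x z : ℝ) ^ (n+1))) * ((prims B (n+1)).card : ℝ)) := by
        apply mul_le_mul_of_nonneg_left _ (by positivity)
        apply mul_le_mul_of_nonneg_right _ (by positivity)
        exact Finset.sum_le_sum fun z _ => hA z
    _ = _ := by
        rw [← Finset.mul_sum, ← Finset.mul_sum, Finset.sum_comm]
        simp only [mul_pow]; ring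

end Kak

namespace Kak

/-- vectors over a product -/
def vecEquiv {R A B : Type*} [CommRing R] [CommRing A] [CommRing B] (e : R ≃+* A × B) (m : ℕ) :
    (Fin m → A) × (Fin m → B) ≃ (Fin m → R) where
  toFun x j := e.symm (x.1 j, x.2 j)
  invFun y := (fun j => (e (y j)).1, fun j => (e (y j)).2)
  left_inv x := by ext <;> simp
  right_inv y := by ext; simp

lemma prim_vecEquiv {R A B : Type*} [CommRing R] [CommRing A] [CommRing B] (e : R ≃+* A × B) (m : ℕ)
    (x : (Fin m → A) × (Fin m → B)) : IsPrim (vecEquiv e m x) ↔ IsPrim x.1 ∧ IsPrim x.2 := by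
  constructor
  · intro h
    have h1 := (h.map e.toRingHom)
    constructor
    · convert h1.map (RingHom.fst A B) using 2 with j
      simp [vecEquiv]
    · convert h1.map (RingHom.snd A B) using 2 with j
      simp [vecEquiv]
  · rintro ⟨⟨v, hv⟩, ⟨v', hv'⟩⟩
    refine ⟨vecEquiv e m (v, v'), ?_⟩
    apply e.injective
    simp only [map_sum, map_mul, vecEquiv, Equiv.coe_fn_mk, RingEquiv.apply_symm_apply, map_one]
    ext
    · simpa [Prod.fst_sum] using hv
    · simpa [Prod.snd_sum] using hv'

lemma sum_prims {R A B : Type*} [CommRing R] [CommRing A] [CommRing B] [Fintype R] [Fintype A]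
    [Fintype B] (e : R ≃+* A × B) (m : ℕ) (φ : (Fin m → R) → ℝ) :
    ∑ u ∈ prims R m, φ u = ∑ u ∈ prims A m, ∑ u' ∈ prims B m, φ (vecEquiv e m (u, u')) := by
  rw [← Finset.sum_product']
  symm
  apply Finset.sum_equiv (vecEquiv e m)
  · intro x
    rw [Finset.mem_product, mem_prims, mem_prims, mem_prims, prim_vecEquiv]
  · intros; rfl

lemma step' (p k n c M : ℕ) [hp : Fact p.Prime] (hk : 1 ≤ k) (hc : 1 ≤ c) (hM : (n+1) * M ≤ p ^ c)
    (hM1 : 1 ≤ M) (R B : Type*) [CommRing R] [Fintype R] [CommRing B] [Fintype B] [DecidableEq B]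
    (e : R ≃+* ZMod (p ^ k) × B) (C : ℝ) (hC : 0 ≤ C)
    (hI : Ind (n+1) B C) (f : (Fin (n+1) → R) → ℕ) (a : (Fin (n+1) → R) → (Fin (n+1) → R))
    (hw : ∀ u, IsPrim u → ∀ t : B,
      ∑ s ∈ Finset.univ.filter (fun s => (e s).2 = t), f (a u + s • u) ≤ M) :
    C * ∑ u ∈ prims R (n+1), ((∑ s : R, f (a u + s • u) : ℕ) : ℝ) ^ (n+1) ≤
    (2 * (Real.log M + 1) * c) ^ (n+1) * ((∑ x, (f x : ℝ) ^ (n+1)) * ((prims R (n+1)).card : ℝ)) := by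
  classical
  let E := vecEquiv e (n+1)
  have hadd : ∀ u u' s t, E ((E.symm (a (E (u, u')))).1 + s • u, (E.symm (a (E (u, u')))).2 + t • u') =
      a (E (u, u')) + (e.symm (s, t)) • E (u, u') := by
    intro u u' s t
    ext j
    apply e.injective
    simp [E, vecEquiv, Prod.ext_iff]
  have hsumR : ∀ φ : R → ℕ, ∑ s, φ s = ∑ t : B, ∑ s : ZMod (p ^ k), φ (e.symm (s, t)) := by
    intro φ
    rw [← Fintype.sum_prod_type_right', ← e.symm.toEquiv.sum_comp]
    rfl
  have key := step p k n c M hk hc hM hM1 B C hC hI (fun x z => f (E (x, z)))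
    (fun u u' => (E.symm (a (E (u, u')))).1) (fun u u' => (E.symm (a (E (u, u')))).2) ?_
  · simp only [hadd] at key
    rw [sum_prims e]
    have hcard : ((prims R (n+1)).card : ℝ) = ((prims (ZMod (p ^ k)) (n+1)).card : ℝ) *
        ((prims B (n+1)).card : ℝ) := by
      have := sum_prims e (n+1) (fun _ => 1)
      simpa using this
    have hsum : ∑ x, (f x : ℝ) ^ (n+1) = ∑ x, ∑ z, (f (E (x, z)) : ℝ) ^ (n+1) := by
      rw [← Fintype.sum_prod_type', ← E.sum_comp]
    rw [hcard, hsum, ← mul_assoc (∑ x, ∑ z, (f (E (x, z)) : ℝ) ^ (n+1))]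
    convert key using 6
    rw [hsumR]
  · intro u u' hu hu' t
    have h1 := hw (E (u, u')) ((prim_vecEquiv e (n+1) (u, u')).2 ⟨hu, hu'⟩) t
    refine le_trans (le_of_eq ?_) h1
    simp only [hadd]
    apply Finset.sum_bij (fun s _ => e.symm (s, t))
    · intro s _; simp
    · intro s _ s' _ h; simpa using h
    · intro s hs
      simp only [Finset.mem_filter, Finset.mem_univ, true_and] at hs
      exact ⟨(e s).1, Finset.mem_univ _, by rw [← hs]; simp⟩
    · intros; rfl

lemma Ind_base (p k n c : ℕ) [hp : Fact p.Prime] (hk : 1 ≤ k) (hc : 1 ≤ c) (hM : (n+1) * p ^ k ≤ p ^ c) :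
    Ind (n+1) (ZMod (p ^ k)) ((1 / (2 * (c : ℝ))) ^ (n+1)) := by
  classical
  intro S κ hκ
  have := Alem p k n c (p ^ k) hk hc hM (fun x => if x ∈ S then 1 else 0) κ (fun u hu => by
    obtain ⟨a, ha⟩ := hκ u hu
    refine ⟨ha.trans ((Finset.card_le_univ _).trans (by simp [ZMod.card])), a, ?_⟩
    rwa [← Finset.card_filter])
  have hs : ∑ x, (if x ∈ S then 1 else 0 : ℕ) ^ (n+1) = S.card := by
    simp [ite_pow]
  rw [hs] at this
  have h2 : (∑ u ∈ prims (ZMod (p ^ k)) (n+1), (κ u : ℝ) ^ (n+1)) ≤ (2 * c : ℝ) ^ (n+1) *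
      (((prims (ZMod (p ^ k)) (n+1)).card : ℝ) * (S.card : ℝ)) := by exact_mod_cast this
  have hc' : (0 : ℝ) < 2 * c := by positivity
  rw [one_div, inv_pow, inv_mul_le_iff₀ (by positivity)]
  linarith

lemma Ind_step (p k n c : ℕ) [hp : Fact p.Prime] (hk : 1 ≤ k) (hc : 1 ≤ c) (hM : (n+1) * p ^ k ≤ p ^ c)
    (R B : Type*) [CommRing R] [Fintype R] [DecidableEq R] [CommRing B] [Fintype B] [DecidableEq B]
    (e : R ≃+* ZMod (p ^ k) × B) (C : ℝ) (hC : 0 ≤ C) (hI : Ind (n+1) B C) :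
    Ind (n+1) R ((1 / (2 * ((k : ℝ) * Real.log p + 1) * (c : ℝ))) ^ (n+1) * C) := by
  classical
  intro S κ hκ
  have : ∀ u : Fin (n+1) → R, ∃ a, IsPrim u → κ u ≤ (Finset.univ.filter (fun t : R => a + t • u ∈ S)).card := by
    intro u
    by_cases h : IsPrim u
    · obtain ⟨a, ha⟩ := hκ u h; exact ⟨a, fun _ => ha⟩
    · exact ⟨0, fun h' => absurd h' h⟩
  choose a ha using this
  have key := step' p k n c (p ^ k) hk hc hM (Nat.one_le_pow _ _ hp.out.pos) R B e C hC hI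
    (fun x => if x ∈ S then 1 else 0) a (fun u _ t => by
      calc _ ≤ ∑ s ∈ Finset.univ.filter (fun s => (e s).2 = t), 1 :=
            Finset.sum_le_sum fun s _ => by split_ifs <;> simp
        _ = (Finset.univ.filter (fun s => (e s).2 = t)).card := by simp
        _ ≤ (Finset.univ : Finset (ZMod (p ^ k))).card := by
            apply Finset.card_le_card_of_injOn (fun s => (e s).1) (fun _ _ => by simp)
            intro s hs s' hs' h
            simp only [Finset.coe_filter, Finset.mem_univ, true_and, Set.mem_ofPred_eq] at hs hs'
            exact e.injective (Prod.ext h (hs.trans hs'.symm))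
        _ = p ^ k := by simp [ZMod.card])
  have hs : ∑ x, (((if x ∈ S then 1 else 0 : ℕ) : ℝ)) ^ (n+1) = S.card := by
    simp [ite_pow]
  rw [hs] at key
  have hlog : Real.log ((p ^ k : ℕ) : ℝ) = k * Real.log p := by push_cast; rw [Real.log_pow]
  rw [hlog] at key
  have hH : 0 < (k : ℝ) * Real.log p + 1 := by
    have := Real.log_natCast_nonneg p
    positivity
  have hc' : (0 : ℝ) < 2 * ((k : ℝ) * Real.log p + 1) * c := by positivity
  rw [one_div, inv_pow, mul_assoc, inv_mul_le_iff₀ (by positivity)]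
  refine le_trans ?_ key
  apply mul_le_mul_of_nonneg_left _ hC
  apply Finset.sum_le_sum
  intro u hu
  apply pow_le_pow_left₀ (by positivity)
  have := ha u (mem_prims.1 hu)
  rw [Finset.card_filter] at this
  exact_mod_cast this

lemma le_pow_ceil (p m : ℕ) (hp : p.Prime) (hm : 1 ≤ m) : m ≤ p ^ ⌈Real.log m / Real.log p⌉₊ := by
  have hlp : 0 < Real.log p := Real.log_pos (by exact_mod_cast hp.one_lt)
  have h1 := Nat.le_ceil (Real.log m / Real.log p)
  rw [div_le_iff₀ hlp, ← Real.log_pow] at h1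
  have h2 := (Real.log_le_log_iff (by exact_mod_cast hm) (by have := hp.pos; positivity)).1 h1
  exact_mod_cast h2

/-- the constant attached to one prime power -/
noncomputable def cc (p k n : ℕ) : ℕ := k + ⌈Real.log (n+1 : ℕ) / Real.log p⌉₊

lemma cc_le (p k n : ℕ) (hp : p.Prime) : (n+1) * p ^ k ≤ p ^ cc p k n := by
  rw [cc, pow_add, mul_comm]
  exact Nat.mul_le_mul_left _ (le_pow_ceil p (n+1) hp (by omega))

lemma cc_cast (p k n : ℕ) : (cc p k n : ℝ) =
    (k : ℝ) + ((⌈Real.log (n+1 : ℕ) / Real.log p⌉ : ℤ) : ℝ) := by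
  rw [cc, Nat.cast_add, natCast_ceil_eq_intCast_ceil]
  exact div_nonneg (Real.log_natCast_nonneg _) (Real.log_natCast_nonneg _)

lemma Ind_prod {ι : Type*} [DecidableEq ι] (n : ℕ) (p k : ι → ℕ) (hp : ∀ i, (p i).Prime)
    (hpd : Function.Injective p) (hk : ∀ i, 1 ≤ k i) (l : ι) (s : Finset ι) : l ∉ s →
    ∀ (N : ℕ) [NeZero N], N = p l ^ k l * ∏ j ∈ s, p j ^ k j →
    Ind (n+1) (ZMod N) ((1 / (2 * (cc (p l) (k l) n : ℝ)) * ∏ j ∈ s,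
      1 / (2 * ((k j : ℝ) * Real.log (p j) + 1) * (cc (p j) (k j) n : ℝ))) ^ (n+1)) := by
  induction s using Finset.induction_on with
  | empty =>
    intro _ N _ hN
    rw [Finset.prod_empty, mul_one] at hN
    subst hN
    have : Fact (p l).Prime := ⟨hp l⟩
    rw [Finset.prod_empty, mul_one]
    have := Ind_base (p l) (k l) n (cc (p l) (k l) n) (hk l) ((hk l).trans (Nat.le_add_right _ _))
      (cc_le _ _ _ (hp l))
    convert this
  | insert j s hj ih =>
    intro hl N _ hN
    rw [Finset.mem_insert, not_or] at hl
    have hpf : ∀ i, 0 < p i ^ k i := fun i => pow_pos (hp i).pos _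
    have hpos : 0 < p l ^ k l * ∏ j ∈ s, p j ^ k j :=
      Nat.mul_pos (hpf l) (Finset.prod_pos fun i _ => hpf i)
    have : NeZero (p l ^ k l * ∏ j ∈ s, p j ^ k j) := ⟨hpos.ne'⟩
    have h1 := ih hl.2 _ rfl
    have : Fact (p j).Prime := ⟨hp j⟩
    have hcop : ∀ i, j ≠ i → Nat.Coprime (p j ^ k j) (p i ^ k i) := by
      intro i hi
      apply Nat.Coprime.pow
      rw [Nat.coprime_primes (hp j) (hp i)]
      exact fun h => hi (hpd h)
    have hco : Nat.Coprime (p j ^ k j) (p l ^ k l * ∏ j ∈ s, p j ^ k j) := by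
      apply Nat.Coprime.mul_right (hcop l (Ne.symm hl.1))
      apply Nat.Coprime.prod_right
      intro i hi
      exact hcop i (by rintro rfl; exact hj hi)
    have hN2 : N = (p j ^ k j) * (p l ^ k l * ∏ j ∈ s, p j ^ k j) := by
      rw [hN, Finset.prod_insert hj]; ring
    have h2 := Ind_step (p j) (k j) n (cc (p j) (k j) n) (hk j) ((hk j).trans (Nat.le_add_right _ _))
      (cc_le _ _ _ (hp j)) (ZMod N) (ZMod (p l ^ k l * ∏ j ∈ s, p j ^ k j))
      ((ZMod.ringEquivCongr hN2).trans (ZMod.chineseRemainder hco)) _ (pow_nonneg (mul_nonneg (by positivity)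
        (Finset.prod_nonneg fun i _ => by
          have := Real.log_natCast_nonneg (p i)
          positivity)) _) h1
    rw [Finset.prod_insert hj]
    convert h2 using 1
    rw [← mul_pow]
    ring

end Kak

namespace Kak

lemma sum_reps (N n : ℕ) [NeZero N] (P : Finset (Fin n → ZMod N)) (hP : IsProjRepSet N n P)
    (w : (Fin n → ZMod N) → (Fin n → ZMod N))
    (hw : ∀ u, IsPrim u → w u ∈ P ∧ ∃ c : (ZMod N)ˣ, u = (c : ZMod N) • w u)
    (g : (Fin n → ZMod N) → ℝ) :
    ∑ u ∈ prims (ZMod N) n, g (w u) = (Fintype.card (ZMod N)ˣ : ℝ) * ∑ v ∈ P, g v := by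
  classical
  have hprim : ∀ v ∈ P, ∀ c : (ZMod N)ˣ, IsPrim ((c : ZMod N) • v) := by
    intro v hv c
    obtain ⟨y, hy⟩ := hP.1 v hv
    refine ⟨((c⁻¹ : (ZMod N)ˣ) : ZMod N) • y, ?_⟩
    rw [← hy]
    apply Finset.sum_congr rfl
    intro i _
    simp only [Pi.smul_apply, smul_eq_mul]
    rw [mul_mul_mul_comm, Units.inv_mul, one_mul]
  have hwv : ∀ v ∈ P, ∀ c : (ZMod N)ˣ, w ((c : ZMod N) • v) = v := by
    intro v hv c
    have h1 := hprim v hv c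
    exact (hP.2 _ h1).unique (hw _ h1) ⟨hv, c, rfl⟩
  have h1 : (Fintype.card (ZMod N)ˣ : ℝ) * ∑ v ∈ P, g v =
      ∑ x ∈ P ×ˢ (Finset.univ : Finset (ZMod N)ˣ), g x.1 := by
    rw [Finset.sum_product, Finset.mul_sum]
    apply Finset.sum_congr rfl
    intro v _
    simp
  rw [h1]
  symm
  apply Finset.sum_bij (fun x _ => (x.2 : ZMod N) • x.1)
  · intro x hx
    exact mem_prims.2 (hprim _ (Finset.mem_product.1 hx).1 _)
  · rintro ⟨v, c⟩ hx ⟨v', c'⟩ hx' h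
    have hv := (Finset.mem_product.1 hx).1
    have hv' := (Finset.mem_product.1 hx').1
    simp only at h hv hv'
    have h2 : v = v' := by rw [← hwv v hv c, h, hwv v' hv' c']
    subst h2
    obtain ⟨y, hy⟩ := hP.1 v hv
    have h3 : (c : ZMod N) = c' := by
      have h4 : ∀ d : ZMod N, ∑ i, y i * (d • v) i = d := by
        intro d
        rw [← mul_one d, ← hy, Finset.mul_sum]
        apply Finset.sum_congr rfl
        intro i _
        simp only [Pi.smul_apply, smul_eq_mul, ← Finset.mul_sum, hy]
        ring
      rw [← h4 c, h, h4]
    rw [Units.ext h3]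
  · intro u hu
    obtain ⟨h2, c, hc⟩ := hw u (mem_prims.1 hu)
    exact ⟨(w u, c), by simp [h2], hc.symm⟩
  · intro x hx
    rw [hwv _ (Finset.mem_product.1 hx).1]

lemma main_ineq (n p k : ℕ) [hp : Fact p.Prime] (hk : 1 ≤ k) (N N' : ℕ) [NeZero N] [NeZero N']
    (e : ZMod N ≃+* ZMod (p ^ k) × ZMod N') (C : ℝ) (hC : 0 ≤ C) (hI : Ind (n+1) (ZMod N') C)
    (P : Finset (Fin (n+1) → ZMod N)) (hP : IsProjRepSet N (n+1) P)
    (f : (Fin (n+1) → ZMod N) → ℕ) (hf : ∃ x, f x ≠ 0)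
    (a : (Fin (n+1) → ZMod N) → (Fin (n+1) → ZMod N))
    (ha : ∀ u ∈ P, ∑ t : ZMod N, f (a u + t • u) = fstar f u)
    (mw : ℕ)
    (hmw : mw = P.sup fun u => Finset.univ.sup fun s : ZMod N =>
      ∑ t ∈ Finset.univ.filter (fun t : ZMod N => ∃ c : ZMod N, t - s = c * (N' : ZMod N)),
        f (a u + t • u)) :
    (1 / (2 * (Real.log mw + 1) *
          ((⌈(Real.log mw + Real.log (n+1 : ℕ)) / Real.log p⌉ : ℤ) : ℝ))) ^ (n+1) * C *
      (P.card : ℝ)⁻¹ * ∑ u ∈ P, (fstar f u : ℝ) ^ (n+1) ≤ ∑ x, (f x : ℝ) ^ (n+1) := by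
  classical
  have hrep : ∀ u : Fin (n+1) → ZMod N, ∃ v, IsPrim u → v ∈ P ∧ ∃ c : (ZMod N)ˣ, u = (c : ZMod N) • v := by
    intro u
    by_cases h : IsPrim u
    · obtain ⟨v, hv, -⟩ := hP.2 u h
      exact ⟨v, fun _ => hv⟩
    · exact ⟨0, fun h' => absurd h' h⟩
  choose w hw using hrep
  have hsl : ∀ v ∈ P, ∀ s : ZMod N,
      ∑ t ∈ Finset.univ.filter (fun t : ZMod N => ∃ c : ZMod N, t - s = c * (N' : ZMod N)),
        f (a v + t • v) ≤ mw := by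
    intro v hv s
    rw [hmw]
    refine le_trans ?_ (Finset.le_sup hv)
    exact Finset.le_sup (f := fun s : ZMod N =>
      ∑ t ∈ Finset.univ.filter (fun t : ZMod N => ∃ c : ZMod N, t - s = c * (N' : ZMod N)),
        f (a v + t • v)) (Finset.mem_univ s)
  have he0 : IsPrim (Pi.single 0 1 : Fin (n+1) → ZMod N) :=
    ⟨Pi.single 0 1, by simp [Pi.single_apply]⟩
  have hmw1 : 1 ≤ mw := by
    obtain ⟨x, hx⟩ := hf
    have hv := (hw _ he0).1
    have h1 : f x ≤ fstar f (w (Pi.single 0 1)) := by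
      refine le_trans ?_ (Finset.le_sup (f := fun a => ∑ t : ZMod N, f (a + t • w (Pi.single 0 1))) (Finset.mem_univ x))
      have := Finset.single_le_sum (f := fun t : ZMod N => f (x + t • w (Pi.single 0 1))) (fun _ _ => Nat.zero_le _)
        (Finset.mem_univ 0)
      simpa using this
    rw [← ha _ hv] at h1
    have h2 : ∑ t : ZMod N, f (a (w (Pi.single 0 1)) + t • w (Pi.single 0 1)) ≠ 0 := by omega
    obtain ⟨t, -, ht⟩ := Finset.exists_ne_zero_of_sum_ne_zero h2
    have h3 := hsl _ hv t
    have h4 := Finset.single_le_sum (s := Finset.univ.filter (fun t' : ZMod N => ∃ c : ZMod N, t' - t = c * (N' : ZMod N)))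
      (f := fun t => f (a (w (Pi.single 0 1)) + t • w (Pi.single 0 1))) (fun _ _ => Nat.zero_le _)
      (a := t) (by simp only [Finset.mem_filter, Finset.mem_univ, true_and]; exact ⟨0, by simp⟩)
    omega
  have hlogp : 0 < Real.log p := Real.log_pos (by exact_mod_cast hp.out.one_lt)
  have hnn : 0 ≤ (Real.log mw + Real.log (n+1 : ℕ)) / Real.log p :=
    div_nonneg (add_nonneg (Real.log_natCast_nonneg _) (Real.log_natCast_nonneg _)) hlogp.le
  rw [← natCast_ceil_eq_intCast_ceil hnn]
  obtain ⟨c, hc⟩ : ∃ c, c = ⌈(Real.log mw + Real.log (n+1 : ℕ)) / Real.log p⌉₊ := ⟨_, rfl⟩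
  rw [← hc]
  rcases Nat.eq_zero_or_pos c with h0 | hcpos
  · rw [h0]
    simp only [Nat.cast_zero, mul_zero, div_zero, zero_pow (Nat.succ_ne_zero n), zero_mul]
    positivity
  have hM : (n+1) * mw ≤ p ^ c := by
    have h7 : mw ≠ 0 := by omega
    have h1 := le_pow_ceil p (mw * (n+1)) hp.out (Nat.mul_pos hmw1 (by omega))
    rw [Nat.cast_mul, Real.log_mul (by exact_mod_cast h7) (by positivity), ← hc] at h1
    linarith
  have hslope : ∀ x : ZMod N, (e x).2 = 0 → ∃ c : ZMod N, x = c * (N' : ZMod N) := by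
    intro x hx
    have h1 : (e x).2 = (x.val : ZMod N') := by
      conv_lhs => rw [← ZMod.natCast_zmod_val x, map_natCast]
      rfl
    rw [h1, ZMod.natCast_eq_zero_iff] at hx
    obtain ⟨q, hq⟩ := hx
    refine ⟨(q : ZMod N), ?_⟩
    conv_lhs => rw [← ZMod.natCast_zmod_val x, hq]
    push_cast; ring
  have key := step' p k n c mw hk hcpos hM hmw1 (ZMod N) (ZMod N') e C hC hI f (fun u => a (w u)) (by
    intro u hu t
    obtain ⟨hv, d, hd⟩ := hw u hu
    obtain ⟨s0, hs0⟩ := e.surjective ((0 : ZMod (p ^ k)), t)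
    refine le_trans ?_ (hsl (w u) hv (s0 * d))
    have h2 : ∀ s : ZMod N, s • u = (s * d) • w u := by
      intro s
      conv_lhs => rw [hd]
      rw [smul_smul]
    simp only [h2]
    rw [← Finset.sum_image (s := Finset.univ.filter (fun s => (e s).2 = t)) (g := fun s => s * (d : ZMod N))
      (f := fun s => f (a (w u) + s • w u))]
    · apply Finset.sum_le_sum_of_subset
      intro y hy
      obtain ⟨s, hs, rfl⟩ := Finset.mem_image.1 hy
      simp only [Finset.mem_filter, Finset.mem_univ, true_and] at hs ⊢
      apply hslope
      rw [← sub_mul, map_mul, map_sub, hs0]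
      simp [hs]
    · intro s _ s' _ h
      exact (Units.mul_left_inj d).1 h)
  have hW : ∀ u ∈ prims (ZMod N) (n+1), ((∑ s : ZMod N, f (a (w u) + s • u) : ℕ) : ℝ) ^ (n+1) =
      (fstar f (w u) : ℝ) ^ (n+1) := by
    intro u hu
    obtain ⟨hv, d, hd⟩ := hw u (mem_prims.1 hu)
    rw [← ha _ hv]
    congr 2
    rw [← Equiv.sum_comp (Units.mulRight d) (fun s => f (a (w u) + s • w u))]
    apply Finset.sum_congr rfl
    intro s _
    conv_lhs => rw [hd]
    rw [smul_smul, ← hd]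
    rfl
  rw [Finset.sum_congr rfl hW, sum_reps N (n+1) P hP w hw (fun v => (fstar f v : ℝ) ^ (n+1))] at key
  have hcard := sum_reps N (n+1) P hP w hw (fun _ => 1)
  simp only [Finset.sum_const, nsmul_eq_mul, mul_one] at hcard
  rw [hcard] at key
  have hu : (0 : ℝ) < Fintype.card (ZMod N)ˣ := by exact_mod_cast Fintype.card_pos
  have hPc : (0 : ℝ) < P.card := by
    exact_mod_cast Finset.card_pos.2 ⟨_, (hw _ he0).1⟩
  have hH : 0 < Real.log mw + 1 := by
    have := Real.log_natCast_nonneg mw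
    linarith
  have hcp : (0 : ℝ) < c := by exact_mod_cast hcpos
  have hX : 0 < (2 * (Real.log mw + 1) * (c : ℝ)) ^ (n+1) := by positivity
  rw [one_div, inv_pow]
  generalize (2 * (Real.log mw + 1) * (c : ℝ)) ^ (n+1) = X at *
  generalize ∑ x, (f x : ℝ) ^ (n+1) = F at *
  generalize ∑ v ∈ P, (fstar f v : ℝ) ^ (n+1) = Y at *
  have h9 : C * Y ≤ X * (F * P.card) := by
    have : (Fintype.card (ZMod N)ˣ : ℝ) * (C * Y) ≤ (Fintype.card (ZMod N)ˣ : ℝ) * (X * (F * P.card)) := by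
      linarith
    exact le_of_mul_le_mul_left this hu
  calc X⁻¹ * C * (P.card : ℝ)⁻¹ * Y = (C * Y) / (X * P.card) := by field_simp
    _ ≤ F := by
      rw [div_le_iff₀ (by positivity)]
      linarith

end Kak

/- In the theorem below, `a u` is the base point of a chosen line `L(u) = {a u + t•u}`
attaining `f*(u)` (hypothesis `ha`).  `N' = N / p₁^{k₁}`, and `mw` is the `p₁`-maximal
weight `mweight(f, p₁)`: for each direction `u` and each point `z = a u + s•u` of `L(u)`,
the piece `L_{p₁}(u) × {z}` of `L(u)` consists of the points `a u + t•u` with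
`t ≡ s (mod N')`, and `mw` is the largest value of `∑_{x ∈ L_{p₁}(u) × {z}} f(x)`. -/
theorem stmt4 (n r : ℕ) (hn : 1 ≤ n) (hr : 2 ≤ r)
    (p k : Fin r → ℕ) (hp : ∀ i, (p i).Prime) (hpd : Function.Injective p)
    (hk : ∀ i, 1 ≤ k i) (N : ℕ) [NeZero N] (hN : N = ∏ i, p i ^ k i)
    (P : Finset (Fin n → ZMod N)) (hP : IsProjRepSet N n P)
    (f : (Fin n → ZMod N) → ℕ) (hf : ∃ x, f x ≠ 0)
    (a : (Fin n → ZMod N) → (Fin n → ZMod N))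
    (ha : ∀ u ∈ P, ∑ t : ZMod N, f (a u + t • u) = fstar f u)
    (N' : ℕ)
    (hN' : N' = ∏ j ∈ Finset.univ.filter (fun j : Fin r => j ≠ ⟨0, by omega⟩), p j ^ k j)
    (mw : ℕ)
    (hmw : mw = P.sup fun u => Finset.univ.sup fun s : ZMod N =>
      ∑ t ∈ Finset.univ.filter (fun t : ZMod N => ∃ c : ZMod N, t - s = c * (N' : ZMod N)),
        f (a u + t • u)) :
    (∑ x : Fin n → ZMod N, (f x : ℝ) ^ n) ≥
      ((1 / (2 * (Real.log mw + 1) *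
          ((⌈(Real.log mw + Real.log n) / Real.log (p ⟨0, by omega⟩)⌉ : ℤ) : ℝ))) ^ n) *
      ((1 / (2 * ((k ⟨r - 1, by omega⟩ : ℝ) +
            ((⌈Real.log n / Real.log (p ⟨r - 1, by omega⟩)⌉ : ℤ) : ℝ))) *
        ∏ j ∈ Finset.univ.filter (fun j : Fin r => 0 < (j : ℕ) ∧ (j : ℕ) < r - 1),
          1 / (2 * ((k j : ℝ) * Real.log (p j) + 1) *
            ((k j : ℝ) + ((⌈Real.log n / Real.log (p j)⌉ : ℤ) : ℝ)))) ^ n) *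
      (P.card : ℝ)⁻¹ * ∑ u ∈ P, (fstar f u : ℝ) ^ n := by
  have h0r : 0 < r := by omega
  have hlr : r - 1 < r := by omega
  obtain ⟨m, rfl⟩ : ∃ m, n = m + 1 := ⟨n - 1, by omega⟩
  have hpf : ∀ i, 0 < p i ^ k i := fun i => pow_pos (hp i).pos _
  have hset : Finset.univ.filter (fun j : Fin r => j ≠ ⟨0, h0r⟩) =
      insert ⟨r - 1, hlr⟩ (Finset.univ.filter (fun j : Fin r => 0 < (j : ℕ) ∧ (j : ℕ) < r - 1)) := by
    ext j
    simp only [Finset.mem_filter, Finset.mem_univ, true_and, Finset.mem_insert, Fin.ext_iff, ne_eq]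
    have := j.2
    omega
  have hl : (⟨r - 1, hlr⟩ : Fin r) ∉
      Finset.univ.filter (fun j : Fin r => 0 < (j : ℕ) ∧ (j : ℕ) < r - 1) := by
    simp
  have hN'2 : N' = p ⟨r - 1, hlr⟩ ^ k ⟨r - 1, hlr⟩ *
      ∏ j ∈ Finset.univ.filter (fun j : Fin r => 0 < (j : ℕ) ∧ (j : ℕ) < r - 1), p j ^ k j := by
    rw [hN', hset, Finset.prod_insert hl]
  have hN2 : N = p ⟨0, h0r⟩ ^ k ⟨0, h0r⟩ * N' := by
    refine hN.trans ?_
    rw [hN', Finset.filter_ne', Finset.mul_prod_erase _ (fun j => p j ^ k j) (Finset.mem_univ _)]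
  have hN'0 : N' ≠ 0 := by
    rw [hN']
    exact (Finset.prod_pos fun i _ => hpf i).ne'
  have : NeZero N' := ⟨hN'0⟩
  have : Fact (p ⟨0, h0r⟩).Prime := ⟨hp _⟩
  have hco : Nat.Coprime (p ⟨0, h0r⟩ ^ k ⟨0, h0r⟩) N' := by
    rw [hN']
    apply Nat.Coprime.prod_right
    intro i hi
    apply Nat.Coprime.pow
    rw [Nat.coprime_primes (hp _) (hp _)]
    exact fun h => (Finset.mem_filter.1 hi).2 (hpd h).symm
  have hI := Kak.Ind_prod m p k hp hpd hk _ _ hl N' hN'2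
  have hC := pow_nonneg (mul_nonneg (show 0 ≤ 1 / (2 * (Kak.cc (p ⟨r - 1, hlr⟩) (k ⟨r - 1, hlr⟩) m : ℝ)) by positivity)
        (Finset.prod_nonneg fun i (_ : i ∈ Finset.univ.filter (fun j : Fin r => 0 < (j : ℕ) ∧ (j : ℕ) < r - 1)) =>
          show 0 ≤ 1 / (2 * ((k i : ℝ) * Real.log (p i) + 1) * (Kak.cc (p i) (k i) m : ℝ)) by
          have := Real.log_natCast_nonneg (p i)
          positivity)) (m+1)
  have := Kak.main_ineq m (p ⟨0, h0r⟩) (k ⟨0, h0r⟩) (hk _) N N'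
    ((ZMod.ringEquivCongr hN2).trans (ZMod.chineseRemainder hco)) _ hC hI P hP f hf a ha mw hmw
  simp only [Kak.cc_cast] at this
  exact this
end

section
/- For every ε > 0 and every integer n ≥ 1 there exists a constant C_{n,ε} such that for every N ≥ 1 and every choice of a line L(u) ⊆ (ℤ/Nℤ)ⁿ in direction u for each direction u ∈ ℙ(ℤ/Nℤ)^{n-1}, the function h = ∑_{u ∈ ℙ(ℤ/Nℤ)^{n-1}} 1_{L(u)} on (ℤ/Nℤ)ⁿ satisfies ( ∑_{x ∈ (ℤ/Nℤ)ⁿ} h(x)^{n/(n-1)} )^{(n-1)/n} ≤ C_{n,ε} · N^{ε} · ( ∑_{u ∈ ℙ(ℤ/Nℤ)^{n-1}} |L(u)| )^{(n-1)/n}. -/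
/-- The line `{a + t·u : t ∈ ℤ/Nℤ}` in `(ℤ/Nℤ)ⁿ`, as a finite set. -/
def lineF {N n : ℕ} [NeZero N] (a u : Fin n → ZMod N) : Finset (Fin n → ZMod N) :=
  Finset.image (fun t : ZMod N => a + t • u) Finset.univ


theorem kk_exists_ring (p k : ℕ) (hp : p.Prime) :
    ∃ (O : Type) (_ : CommRing O) (_ : IsDomain O) (_ : ValuationRing O)
      (κ : Type) (_ : Field κ) (_ : CharP κ p) (_ : O →+* κ) (ζ : O),
      IsPrimitiveRoot ζ (p ^ k) := by
  have : Fact p.Prime := ⟨hp⟩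
  have : NeZero (p ^ k) := ⟨pow_ne_zero _ hp.ne_zero⟩
  let V : ValuationSubring (PadicAlgCl p) := (PadicAlgCl.valued p).v.valuationSubring
  have : NeZero ((p ^ k : ℕ) : PadicAlgCl p) := ⟨Nat.cast_ne_zero.2 (pow_ne_zero _ hp.ne_zero)⟩
  obtain ⟨ζ, hζ⟩ := HasEnoughRootsOfUnity.exists_primitiveRoot (PadicAlgCl p) (p ^ k)
  have hζV : ζ ∈ V := by
    rw [Valuation.mem_valuationSubring_iff]
    have h1 : (PadicAlgCl.valued p).v ζ ^ (p ^ k) = 1 := by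
      rw [← map_pow, hζ.pow_eq_one, map_one]
    exact (pow_le_one_iff_of_nonneg zero_le (pow_ne_zero _ hp.ne_zero)).1 h1.le
  have hpz : ((p : ℕ) : IsLocalRing.ResidueField V) = 0 := by
    have h0 : IsLocalRing.residue V ((p : ℕ) : V) = 0 := by
      rw [IsLocalRing.residue_eq_zero_iff, IsLocalRing.mem_maximalIdeal, mem_nonunits_iff]
      intro hu
      have h3 : (PadicAlgCl.valued p).v ((((p : ℕ) : V) : PadicAlgCl p)) = 1 := by
        obtain ⟨w, hw⟩ := hu.exists_right_inv
        have h4 : (p : PadicAlgCl p) * (w : PadicAlgCl p) = 1 := by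
          have := congrArg (Subtype.val) hw
          simpa using this
        have h5 := congrArg (PadicAlgCl.valued p).v h4
        rw [map_mul, map_one] at h5
        have h6 : (PadicAlgCl.valued p).v (w : PadicAlgCl p) ≤ 1 := w.2
        have h7 : (PadicAlgCl.valued p).v (p : PadicAlgCl p) ≤ 1 := (((p : ℕ) : V)).2
        have : (((p : ℕ) : V) : PadicAlgCl p) = (p : PadicAlgCl p) := by simp
        rw [this]
        apply le_antisymm h7
        calc (1 : NNReal) = _ := h5.symm
          _ ≤ (PadicAlgCl.valued p).v (p : PadicAlgCl p) * 1 := by gcongr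
          _ = _ := mul_one _
      have h8 : (((p : ℕ) : V) : PadicAlgCl p) = (p : PadicAlgCl p) := by simp
      rw [h8, PadicAlgCl.valuation_p] at h3
      have : (p : NNReal) ≠ 1 := by exact_mod_cast hp.ne_one
      apply this
      simpa using h3
    simpa using h0
  refine ⟨V, inferInstance, inferInstance, inferInstance, IsLocalRing.ResidueField V,
    inferInstance, ?_, IsLocalRing.residue V, ⟨ζ, hζV⟩, ?_⟩
  · have := CharP.ringChar_of_prime_eq_zero hp hpz
    exact (ringChar.eq_iff).1 this
  · refine IsPrimitiveRoot.of_map_of_injective (f := V.subtype) ?_ Subtype.val_injective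
    exact hζ

open Polynomial in
/-- root multiplicity at 1 of `X^s-1`. -/
theorem kk_rm_one {κ : Type} [Field κ] {p : ℕ} (hp : p.Prime) [CharP κ p] (k s : ℕ) (hs : s ≠ 0)
    (hsk : s < p ^ k) :
    ((X : κ[X]) ^ s - 1).rootMultiplicity 1 ≤ ∑ i ∈ (Finset.range k).filter (fun i => p ^ i ∣ s), p ^ i := by
  classical
  have : Fact p.Prime := ⟨hp⟩
  obtain ⟨v, s', hs', rfl⟩ := Nat.exists_eq_pow_mul_and_not_dvd hs p hp.ne_one
  have hs0 : s' ≠ 0 := by rintro rfl; simp at hs'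
  have e1 : (X : κ[X]) ^ (p ^ v * s') - 1 = (X ^ s' - 1) ^ p ^ v := by
    rw [sub_pow_char_pow, one_pow, ← pow_mul, mul_comm]
  have hne : (X : κ[X]) ^ s' - 1 ≠ 0 := by
    have := Polynomial.X_pow_sub_C_ne_zero (Nat.pos_of_ne_zero hs0) (1 : κ)
    simpa using this
  have h1 : ((X : κ[X]) ^ s' - 1).rootMultiplicity 1 ≤ 1 := by
    by_contra! h
    have := (Polynomial.one_lt_rootMultiplicity_iff_isRoot hne).1 h
    have h2 := this.2
    rw [Polynomial.IsRoot, Polynomial.derivative_sub, Polynomial.derivative_X_pow, Polynomial.derivative_one] at h2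
    simp at h2
    exact hs' ((CharP.cast_eq_zero_iff κ p s').1 h2)
  have hrm : ((X : κ[X]) ^ (p ^ v * s') - 1).rootMultiplicity 1 ≤ p ^ v := by
    rw [e1]
    rw [← Polynomial.count_roots, Polynomial.roots_pow, Multiset.count_nsmul, Polynomial.count_roots]
    calc _ ≤ p ^ v * 1 := by gcongr
      _ = _ := mul_one _
  refine hrm.trans ?_
  apply Finset.single_le_sum (f := fun i => p ^ i) (fun _ _ => Nat.zero_le _)
  rw [Finset.mem_filter, Finset.mem_range]
  refine ⟨?_, Dvd.intro _ rfl⟩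
  have : p ^ v < p ^ k := lt_of_le_of_lt (Nat.le_mul_of_pos_right _ (Nat.pos_of_ne_zero hs0)) hsk
  exact (Nat.pow_lt_pow_iff_right hp.one_lt).1 this

theorem kk_sum_bound (p k d : ℕ) :
    ∑ s ∈ Finset.Icc 1 d, ∑ i ∈ (Finset.range k).filter (fun i => p ^ i ∣ s), p ^ i ≤ k * d := by
  simp_rw [Finset.sum_filter]
  rw [Finset.sum_comm]
  calc _ ≤ ∑ i ∈ Finset.range k, d := by
        apply Finset.sum_le_sum
        intro i _
        rw [← Finset.sum_filter, Finset.sum_const, smul_eq_mul]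
        have : (Finset.filter (fun s => p ^ i ∣ s) (Finset.Icc 1 d)).card = d / p ^ i := by
          rw [← Nat.Ioc_filter_dvd_card_eq_div]; rfl
        rw [this]
        exact Nat.div_mul_le_self _ _
    _ = _ := by simp

open Polynomial in
theorem kk_rm_prod {κ : Type} [Field κ] {p : ℕ} (hp : p.Prime) [CharP κ p] (k t u d : ℕ)
    (h1 : u ≤ t + d) (h2 : u < p ^ k) :
    (∏ i ∈ Finset.Ico t u, ((X : κ[X]) ^ u - X ^ i)) ≠ 0 ∧
    (∏ i ∈ Finset.Ico t u, ((X : κ[X]) ^ u - X ^ i)).rootMultiplicity 1 ≤ k * d := by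
  classical
  have key : ∀ i ∈ Finset.Ico t u, ((X : κ[X]) ^ u - X ^ i) ≠ 0 ∧ 
      ((X : κ[X]) ^ u - X ^ i).rootMultiplicity 1 ≤ 
        ∑ j ∈ (Finset.range k).filter (fun j => p ^ j ∣ (u - i)), p ^ j := by
    intro i hi
    rw [Finset.mem_Ico] at hi
    have e : ((X : κ[X]) ^ u - X ^ i) = X ^ i * (X ^ (u - i) - 1) := by
      rw [mul_sub, ← pow_add, mul_one]; congr 2; omega
    have hne : (X : κ[X]) ^ (u - i) - 1 ≠ 0 := by
      have := Polynomial.X_pow_sub_C_ne_zero (show 0 < u - i by omega) (1 : κ)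
      simpa using this
    have hne' : (X : κ[X]) ^ i * (X ^ (u - i) - 1) ≠ 0 := mul_ne_zero (pow_ne_zero _ X_ne_zero) hne
    rw [e]
    refine ⟨hne', ?_⟩
    rw [rootMultiplicity_mul hne']
    have : ((X : κ[X]) ^ i).rootMultiplicity 1 = 0 := by
      apply rootMultiplicity_eq_zero
      simp
    rw [this, zero_add]
    exact kk_rm_one hp k _ (by omega) (by omega)
  have hne : (∏ i ∈ Finset.Ico t u, ((X : κ[X]) ^ u - X ^ i)) ≠ 0 :=
    Finset.prod_ne_zero_iff.2 fun i hi => (key i hi).1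
  refine ⟨hne, ?_⟩
  rw [← count_roots, roots_prod _ _ hne, Multiset.count_bind]
  change ∑ i ∈ Finset.Ico t u, Multiset.count 1 ((X : κ[X]) ^ u - X ^ i).roots ≤ _
  simp_rw [count_roots]
  refine (Finset.sum_le_sum fun i hi => (key i hi).2).trans ?_
  refine le_trans ?_ (kk_sum_bound p k d)
  rw [← Finset.sum_image (s := Finset.Ico t u) (g := fun i => u - i)
    (f := fun s => ∑ j ∈ (Finset.range k).filter (fun j => p ^ j ∣ s), p ^ j)]
  · apply Finset.sum_le_sum_of_subset
    intro s hs
    simp only [Finset.mem_image, Finset.mem_Ico, Finset.mem_Icc] at hs ⊢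
    omega
  · intro i hi j hj h
    simp only [Finset.coe_Ico, Set.mem_Ico] at hi hj h
    omega

open Polynomial in
theorem kk_core_field {κ : Type} [Field κ] {p : ℕ} (hp : p.Prime) [CharP κ p] (k n d m M : ℕ)
    {ι : Type} (s : Finset ι) (v : ι → Fin n → ℕ) (t : Fin n → ℕ)
    (hv : ∀ i ∈ s, ∀ l, t l ≤ v i l ∧ v i l ≤ t l + d ∧ v i l < p ^ k)
    (hinj : ∀ i ∈ s, ∀ j ∈ s, v i = v j → i = j)
    (hM : M + n * (k * d) ≤ m) (c : ι → ℕ → κ)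
    (h : ∀ u ∈ s, ((X : κ[X]) - 1) ^ m ∣ ∑ w ∈ s, ∑ j ∈ Finset.range M,
      C (c w j) * (X ^ j * ∏ l, ∏ i ∈ Finset.Ico (t l) (v w l), ((X : κ[X]) ^ (v u l) - X ^ i))) :
    ∀ u ∈ s, ∀ j < M, c u j = 0 := by
  classical
  by_contra! hcon
  obtain ⟨u0, hu0, j0, hj0, hc0⟩ := hcon
  let B := s.filter (fun u => ∃ j < M, c u j ≠ 0)
  have hB : B.Nonempty := ⟨u0, Finset.mem_filter.2 ⟨hu0, j0, hj0, hc0⟩⟩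
  obtain ⟨u, huB, humin⟩ := Finset.exists_min_image B (fun u => ∑ l, v u l) hB
  have hus := (Finset.mem_filter.1 huB).1
  obtain ⟨j, hj, hcj⟩ := (Finset.mem_filter.1 huB).2
  have hsum := h u hus
  rw [Finset.sum_eq_single_of_mem u hus] at hsum
  · simp_rw [← mul_assoc] at hsum
    rw [← Finset.sum_mul] at hsum
    set r : κ[X] := ∑ j ∈ Finset.range M, C (c u j) * X ^ j with hr
    set g : κ[X] := ∏ l, ∏ i ∈ Finset.Ico (t l) (v u l), ((X : κ[X]) ^ (v u l) - X ^ i) with hg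
    have hrc : r.coeff j = c u j := by
      simp [hr, Polynomial.finsetSum_coeff, Polynomial.coeff_X_pow, hj]
    have hr0 : r ≠ 0 := by
      intro h0; rw [h0] at hrc; exact hcj (by simpa using hrc.symm)
    have hdeg : r.natDegree < M := by
      have : r.degree < M := by
        rw [Polynomial.degree_lt_iff_coeff_zero]
        intro i hi
        have : ¬ i < M := by omega
        simp [hr, Polynomial.finsetSum_coeff, Polynomial.coeff_X_pow, this]
      rwa [Polynomial.natDegree_lt_iff_degree_lt hr0]
    have hg0 : g ≠ 0 := Finset.prod_ne_zero_iff.2 fun l _ =>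
      (kk_rm_prod hp k (t l) (v u l) d (hv u hus l).2.1 (hv u hus l).2.2).1
    have hgm : g.rootMultiplicity 1 ≤ n * (k * d) := by
      rw [← count_roots, hg, roots_prod _ _ hg0, Multiset.count_bind]
      change ∑ l, Multiset.count 1 (∏ i ∈ Finset.Ico (t l) (v u l), ((X : κ[X]) ^ (v u l) - X ^ i)).roots ≤ _
      simp_rw [count_roots]
      refine (Finset.sum_le_sum fun l _ => (kk_rm_prod hp k (t l) (v u l) d (hv u hus l).2.1 (hv u hus l).2.2).2).trans ?_
      simp
    have hrm : r.rootMultiplicity 1 ≤ r.natDegree := by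
      rw [← count_roots]
      exact (Multiset.count_le_card _ _).trans (Polynomial.card_roots' r)
    have := (le_rootMultiplicity_iff (mul_ne_zero hr0 hg0) (a := (1 : κ)) (n := m)).2 (by simpa using hsum)
    rw [rootMultiplicity_mul (mul_ne_zero hr0 hg0)] at this
    omega
  · intro w hw hwu
    by_cases hwB : w ∈ B
    · have : ∃ l, v u l < v w l := by
        by_contra! hle
        have h1 := humin w hwB
        apply hwu
        apply hinj w hw u hus
        funext l
        by_contra hne
        have : ∑ l, v w l < ∑ l, v u l :=
          Finset.sum_lt_sum (fun l _ => hle l) ⟨l, Finset.mem_univ _, lt_of_le_of_ne (hle l) hne⟩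
        omega
      obtain ⟨l, hl⟩ := this
      have hz : ∏ l, ∏ i ∈ Finset.Ico (t l) (v w l), ((X : κ[X]) ^ (v u l) - X ^ i) = 0 := by
        apply Finset.prod_eq_zero (Finset.mem_univ l)
        apply Finset.prod_eq_zero (i := v u l)
        · rw [Finset.mem_Ico]; exact ⟨(hv u hus l).1, hl⟩
        · simp
      simp [hz]
    · apply Finset.sum_eq_zero
      intro j hj
      have : c w j = 0 := by
        by_contra hne
        exact hwB (Finset.mem_filter.2 ⟨hw, j, Finset.mem_range.1 hj, hne⟩)
      simp [this]

theorem kk_normalize {O : Type} [CommRing O] [IsDomain O] [ValuationRing O] {α : Type} [Fintype α]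
    (c : α → O) (hc : c ≠ 0) : ∃ (b : O) (c' : α → O) (i : α), b ≠ 0 ∧ c' i = 1 ∧ ∀ j, c j = b * c' j := by
  classical
  have key : ∀ s : Finset α, s.Nonempty → ∃ i ∈ s, ∀ j ∈ s, c i ∣ c j := by
    intro s hs
    induction hs using Finset.Nonempty.cons_induction with
    | singleton a => exact ⟨a, by simp, by simp⟩
    | cons a s ha hs ih =>
      obtain ⟨i, hi, hij⟩ := ih
      rcases ValuationRing.dvd_total (c i) (c a) with h | h
      · refine ⟨i, by simp [hi], ?_⟩
        intro j hj
        rcases Finset.mem_cons.1 hj with rfl | hj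
        · exact h
        · exact hij j hj
      · refine ⟨a, by simp, ?_⟩
        intro j hj
        rcases Finset.mem_cons.1 hj with rfl | hj
        · exact dvd_rfl
        · exact h.trans (hij j hj)
  obtain ⟨i0, hi0⟩ := Function.ne_iff.1 hc
  obtain ⟨i, -, hi⟩ := key Finset.univ ⟨i0, Finset.mem_univ _⟩
  choose g hg using fun j => hi j (Finset.mem_univ j)
  have hci : c i ≠ 0 := by
    intro h0
    have := hg i0
    rw [h0, zero_mul] at this
    exact hi0 this
  refine ⟨c i, g, i, hci, ?_, hg⟩
  have := hg i
  exact (mul_left_cancel₀ hci (by rw [mul_one]; exact this)).symm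

open Polynomial in
theorem kk_core (p k n d m M : ℕ) (hp : p.Prime) (hk : 1 ≤ k) [NeZero (p ^ k)]
    {ι : Type} (s : Finset ι) (v a : ι → Fin n → ZMod (p ^ k)) (i0 : Fin n) (t : Fin n → ℕ)
    (h1 : ∀ i ∈ s, v i i0 = 1)
    (hv : ∀ i ∈ s, ∀ l, t l ≤ (v i l).val ∧ (v i l).val ≤ t l + d)
    (hinj : ∀ i ∈ s, ∀ j ∈ s, v i = v j → i = j)
    (hM : M + n * (k * d) ≤ m) (E : Finset (Fin n → ZMod (p ^ k)))
    (hE : ∀ i ∈ s, m ≤ (Finset.univ.filter (fun τ : ZMod (p ^ k) => a i + τ • v i ∈ E)).card) :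
    s.card * M ≤ E.card := by
  classical
  by_contra! hlt
  obtain ⟨O, _, _, _, κ, _, _, φ, ζ, hζ⟩ := kk_exists_ring p k hp
  have hq1 : Fact (1 < p ^ k) := ⟨Nat.one_lt_pow (by omega) hp.one_lt⟩
  have hpF : Fact p.Prime := ⟨hp⟩
  let e : AddChar (ZMod (p ^ k)) O := AddChar.zmodChar (p ^ k) hζ.pow_eq_one
  have hφζ : φ ζ = 1 := by
    have : (φ ζ - 1) ^ (p ^ k) = 0 := by
      rw [sub_pow_char_pow, ← map_pow, hζ.pow_eq_one]; simp
    exact sub_eq_zero.1 (pow_eq_zero_iff (NeZero.ne _) |>.1 this)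
  have hφe : ∀ x, φ (e x) = 1 := by
    intro x
    rw [AddChar.zmodChar_apply, map_pow, hφζ, one_pow]
  have heinj : Function.Injective e := by
    intro x y hxy
    rw [AddChar.zmodChar_apply, AddChar.zmodChar_apply] at hxy
    exact ZMod.val_injective _ (hζ.pow_inj (ZMod.val_lt x) (ZMod.val_lt y) hxy)
  have hemul : ∀ x y, e (x * y) = e x ^ y.val := by
    intro x y
    rw [← AddChar.map_nsmul_eq_pow, nsmul_eq_mul, ZMod.natCast_zmod_val, mul_comm]
  let Bf : ι → ℕ → (Fin n → ZMod (p ^ k)) → O := fun w j x =>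
    e (x i0) ^ j * ∏ l, ∏ i ∈ Finset.Ico (t l) (v w l).val, (e (x l) - e (x i0) ^ i)
  let T : ((s × Fin M) → O) →ₗ[O] (E → O) :=
    { toFun := fun c x => ∑ w : s × Fin M, c w * Bf w.1 w.2 x
      map_add' := by intro c c'; funext x; simp [add_mul, Finset.sum_add_distrib]
      map_smul' := by intro b c; funext x; simp [Finset.mul_sum, mul_assoc] }
  have hT : ¬ Function.Injective T := by
    intro hi
    have := card_le_of_injective O T hi
    simp at this
    omega
  have : ∃ c, T c = 0 ∧ c ≠ 0 := by
    by_contra! hcon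
    apply hT
    rw [← LinearMap.ker_eq_bot, LinearMap.ker_eq_bot']
    exact hcon
  obtain ⟨c, hc, hc0⟩ := this
  obtain ⟨b, c', i1, hb, hi1, hcc⟩ := kk_normalize c hc0
  have hc' : ∀ x ∈ E, ∑ w : s × Fin M, c' w * Bf w.1 w.2 x = 0 := by
    intro x hx
    have h3 := congrFun hc ⟨x, hx⟩
    change ∑ w : s × Fin M, c w * Bf w.1 w.2 x = 0 at h3
    simp_rw [hcc, mul_assoc] at h3
    rw [← Finset.mul_sum] at h3
    exact (mul_eq_zero.1 h3).resolve_left hb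
  let cc : ι → ℕ → O := fun w j => if h : w ∈ s ∧ j < M then c' (⟨w, h.1⟩, ⟨j, h.2⟩) else 0
  have hsumcc : ∀ {R : Type} [CommRing R] (F : ι → ℕ → R) (ψ : O →+* R),
      ∑ w : s × Fin M, ψ (c' w) * F w.1 w.2 = ∑ w ∈ s, ∑ j ∈ Finset.range M, ψ (cc w j) * F w j := by
    intro R _ F ψ
    rw [Fintype.sum_prod_type, ← Finset.sum_coe_sort s]
    apply Finset.sum_congr rfl
    intro w _
    rw [Finset.sum_range]
    apply Finset.sum_congr rfl
    intro j _
    simp [cc]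
  have hcc' : ∀ x ∈ E, ∑ w ∈ s, ∑ j ∈ Finset.range M, cc w j * Bf w j x = 0 := by
    intro x hx
    rw [← hc' x hx]
    exact (hsumcc (fun w j => Bf w j x) (RingHom.id O)).symm
  have hfin := kk_core_field (κ := κ) hp k n d m M s (fun i l => (v i l).val) t
    (fun i hi l => ⟨(hv i hi l).1, (hv i hi l).2, ZMod.val_lt _⟩)
    (fun i hi j hj hij => hinj i hi j hj (by
      funext l; exact ZMod.val_injective _ (congrFun hij l))) hM (fun w j => φ (cc w j)) ?_
  · have h4 := hfin i1.1 i1.1.2 i1.2 i1.2.2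
    have : cc i1.1 i1.2 = 1 := by simp [cc, hi1]
    rw [this, map_one] at h4
    exact one_ne_zero h4
  · intro u hu
    let G : O[X] := ∑ w ∈ s, ∑ j ∈ Finset.range M, C (cc w j) *
      ((C (e (a u i0)) * X) ^ j * ∏ l, ∏ i ∈ Finset.Ico (t l) (v w l).val,
        (C (e (a u l)) * X ^ (v u l).val - (C (e (a u i0)) * X) ^ i))
    have hroot : ∀ τ, a u + τ • v u ∈ E → G.eval (e τ) = 0 := by
      intro τ hτ
      rw [← hcc' _ hτ]
      have hx : ∀ l, e ((a u + τ • v u) l) = e (a u l) * e τ ^ (v u l).val := by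
        intro l
        rw [Pi.add_apply, AddChar.map_add_eq_mul, Pi.smul_apply, smul_eq_mul, hemul]
      have hx0 : e ((a u + τ • v u) i0) = e (a u i0) * e τ := by
        rw [hx, h1 u hu, ZMod.val_one, pow_one]
      simp only [G, Bf, hx0]
      simp only [hx, eval_finsetSum, eval_mul, eval_C, eval_pow, eval_X, eval_prod, eval_sub]
    have hdvd : (∏ τ ∈ Finset.univ.filter (fun τ : ZMod (p ^ k) => a u + τ • v u ∈ E), (X - C (e τ))) ∣ G := by
      by_cases hG : G = 0
      · rw [hG]; exact dvd_zero _
      · have hms : ((Finset.univ.filter (fun τ : ZMod (p ^ k) => a u + τ • v u ∈ E)).val.map e) ≤ G.roots := by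
          rw [Multiset.le_iff_subset]
          · intro y hy
            obtain ⟨τ, hτ, rfl⟩ := Multiset.mem_map.1 hy
            rw [mem_roots hG]
            exact hroot τ (Finset.mem_filter.1 hτ).2
          · exact (Finset.nodup _).map heinj
        have := (Multiset.prod_X_sub_C_dvd_iff_le_roots hG _).2 hms
        rw [Multiset.map_map] at this
        exact this
    have hdvd2 := Polynomial.map_dvd φ hdvd
    rw [Polynomial.map_prod] at hdvd2
    simp only [Polynomial.map_sub, Polynomial.map_X, Polynomial.map_C, hφe, map_one, Finset.prod_const] at hdvd2
    refine (pow_dvd_pow _ (hE u hu)).trans (hdvd2.trans ?_)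
    apply dvd_of_eq
    simp only [G, Polynomial.map_sum, Polynomial.map_mul, Polynomial.map_pow, Polynomial.map_prod,
      Polynomial.map_sub, Polynomial.map_X, Polynomial.map_C, hφe, map_one, one_mul]


theorem kk_core' (p k n d m M q : ℕ) (hq : q = p ^ k) (hp : p.Prime) (hk : 1 ≤ k) [NeZero q]
    {ι : Type} (s : Finset ι) (v a : ι → Fin n → ZMod q) (i0 : Fin n) (t : Fin n → ℕ)
    (h1 : ∀ i ∈ s, v i i0 = 1)
    (hv : ∀ i ∈ s, ∀ l, t l ≤ (v i l).val ∧ (v i l).val ≤ t l + d)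
    (hinj : ∀ i ∈ s, ∀ j ∈ s, v i = v j → i = j)
    (hM : M + n * (k * d) ≤ m) (E : Finset (Fin n → ZMod q))
    (hE : ∀ i ∈ s, m ≤ (Finset.univ.filter (fun τ : ZMod q => a i + τ • v i ∈ E)).card) :
    s.card * M ≤ E.card := by
  subst hq
  exact kk_core p k n d m M hp hk s v a i0 t h1 hv hinj hM E hE

theorem kk_weak (p k n m q : ℕ) (hq : q = p ^ k) (hp : p.Prime) (hk : 1 ≤ k) (hn : 1 ≤ n) (hm : m ≤ q) [NeZero (q)]
    {ι : Type} (s : Finset ι) (v a : ι → Fin n → ZMod (q)) (i0 : Fin n)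
    (h1 : ∀ i ∈ s, v i i0 = 1)
    (hinj : ∀ i ∈ s, ∀ j ∈ s, v i = v j → i = j)
    (E : Finset (Fin n → ZMod (q)))
    (hE : ∀ i ∈ s, m ≤ (Finset.univ.filter (fun τ : ZMod (q) => a i + τ • v i ∈ E)).card) :
    s.card * m ^ n ≤ 2 * (4 * n * k * q) ^ (n - 1) * E.card := by
  classical
  have hq0 : 0 < q := Nat.pos_of_ne_zero (NeZero.ne q)
  set D := 2 * n * k with hD
  have hD0 : 0 < D := by positivity
  set d := m / D with hd
  set M := m - m / 2 with hMdef
  have hM : M + n * (k * d) ≤ m := by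
    have h2 : D * d ≤ m := Nat.mul_div_le m D
    have h3 : 2 * (n * (k * d)) ≤ m := by rw [hD] at h2; nlinarith
    omega
  set Q := (q - 1) / (d + 1) + 1 with hQ
  have hwin : s.card * M ≤ Q ^ (n - 1) * E.card := by
    let ρ : ι → ({l : Fin n // l ≠ i0} → Fin Q) := fun i l =>
      ⟨(v i l).val / (d + 1), by
        have h4 : (v i l).val < q := ZMod.val_lt _
        have : (v i l).val / (d + 1) ≤ (q - 1) / (d + 1) := Nat.div_le_div_right (by omega)
        omega⟩
    have hcard : Fintype.card ({l : Fin n // l ≠ i0} → Fin Q) = Q ^ (n - 1) := by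
      rw [Fintype.card_fun, Fintype.card_fin, Fintype.card_subtype_compl]; simp
    have hfib : ∀ b, (s.filter (fun i => ρ i = b)).card * M ≤ E.card := by
      intro b
      apply kk_core' p k n d m M q hq hp hk (s.filter (fun i => ρ i = b)) v a i0
        (fun l => if h : l ≠ i0 then (b ⟨l, h⟩ : ℕ) * (d + 1) else (1 : ZMod q).val)
      · intro i hi; exact h1 i (Finset.mem_filter.1 hi).1
      · intro i hi l
        obtain ⟨his, hib⟩ := Finset.mem_filter.1 hi
        by_cases hl : l = i0
        · subst hl
          simp [h1 i his]
        · have h5 : (v i l).val / (d + 1) = b ⟨l, hl⟩ := by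
            rw [← hib]
          simp only [ne_eq, hl, not_false_eq_true, dite_true]
          rw [← h5]
          have h6 := Nat.div_add_mod (v i l).val (d + 1)
          have h7 : (v i l).val % (d + 1) < d + 1 := Nat.mod_lt (v i l).val (Nat.succ_pos d)
          rw [mul_comm] at h6
          constructor
          · omega
          · have : (v i l).val % (d + 1) ≤ d := by omega
            omega
      · intro i hi j hj
        exact hinj i (Finset.mem_filter.1 hi).1 j (Finset.mem_filter.1 hj).1
      · exact hM
      · intro i hi; exact hE i (Finset.mem_filter.1 hi).1
    have := Finset.card_eq_sum_card_fiberwise (s := s) (t := Finset.univ) (f := ρ) (fun _ _ => Finset.mem_coe.2 (Finset.mem_univ _))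
    rw [this, Finset.sum_mul]
    refine (Finset.sum_le_sum fun b _ => hfib b).trans ?_
    rw [Finset.sum_const, Finset.card_univ, hcard, smul_eq_mul]
  have hQm : Q * m ≤ 4 * n * k * q := by
    have h8 : m < (d + 1) * D := by
      have := Nat.lt_mul_div_succ m hD0; rw [mul_comm]; exact this
    have h9 : Q * (d + 1) ≤ 2 * q := by
      have h10 : (q - 1) / (d + 1) * (d + 1) ≤ q - 1 := Nat.div_mul_le_self _ _
      have h11 : d ≤ q := (Nat.div_le_self _ _).trans hm
      rw [hQ, add_mul, one_mul]; omega
    calc Q * m ≤ Q * ((d + 1) * D) := by gcongr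
      _ = Q * (d + 1) * D := by ring
      _ ≤ 2 * q * D := by gcongr
      _ = _ := by rw [hD]; ring
  have hm2 : m ≤ 2 * M := by omega
  obtain ⟨n', rfl⟩ : ∃ n', n = n' + 1 := ⟨n - 1, by omega⟩
  simp only [Nat.add_sub_cancel] at *
  calc s.card * m ^ (n' + 1) = s.card * m * m ^ n' := by ring
    _ ≤ s.card * (2 * M) * m ^ n' := by gcongr
    _ = 2 * (s.card * M) * m ^ n' := by ring
    _ ≤ 2 * (Q ^ n' * E.card) * m ^ n' := by gcongr
    _ = 2 * (Q * m) ^ n' * E.card := by rw [mul_pow]; ring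
    _ ≤ _ := by gcongr

theorem kk_ind (p k n q : ℕ) (hq : q = p ^ k) (hp : p.Prime) (hk : 1 ≤ k) (hn : 1 ≤ n) [NeZero (q)]
    {ι : Type} (s : Finset ι) (v a : ι → Fin n → ZMod (q)) (i0 : Fin n)
    (h1 : ∀ i ∈ s, v i i0 = 1)
    (hinj : ∀ i ∈ s, ∀ j ∈ s, v i = v j → i = j)
    (E : Finset (Fin n → ZMod (q))) :
    ∑ i ∈ s, (Finset.univ.filter (fun τ : ZMod (q) => a i + τ • v i ∈ E)).card ^ n ≤
      (Nat.log 2 (q) + 1) * (2 ^ n * (2 * (4 * n * k * q) ^ (n - 1) * E.card)) := by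
  classical
  have hq0 : 0 < q := Nat.pos_of_ne_zero (NeZero.ne q)
  set c : ι → ℕ := fun i => (Finset.univ.filter (fun τ : ZMod q => a i + τ • v i ∈ E)).card with hc
  have hcq : ∀ i, c i ≤ q := by
    intro i
    refine (Finset.card_le_univ _).trans ?_
    rw [ZMod.card]
  have hpt : ∀ i ∈ s, c i ^ n ≤ ∑ j ∈ Finset.range (Nat.log 2 q + 1), if 2 ^ j ≤ c i then 2 ^ n * (2 ^ j) ^ n else 0 := by
    intro i _
    by_cases h0 : c i = 0
    · rw [h0, zero_pow (by omega)]; exact Nat.zero_le _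
    · have hle : 2 ^ Nat.log 2 (c i) ≤ c i := Nat.pow_log_le_self 2 h0
      have hlt : c i < 2 ^ (Nat.log 2 (c i) + 1) := Nat.lt_pow_succ_log_self (by norm_num) _
      have hmem : Nat.log 2 (c i) ∈ Finset.range (Nat.log 2 q + 1) := by
        rw [Finset.mem_range]
        exact Nat.lt_succ_of_le (Nat.log_mono_right (hcq i))
      refine le_trans ?_ (Finset.single_le_sum (f := fun j => if 2 ^ j ≤ c i then 2 ^ n * (2 ^ j) ^ n else 0) (fun _ _ => Nat.zero_le _) hmem)
      simp only [hle, if_true]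
      rw [← mul_pow]
      apply Nat.pow_le_pow_left
      rw [pow_succ] at hlt; omega
  refine (Finset.sum_le_sum hpt).trans ?_
  rw [Finset.sum_comm]
  calc _ ≤ ∑ j ∈ Finset.range (Nat.log 2 q + 1), 2 ^ n * (2 * (4 * n * k * q) ^ (n - 1) * E.card) := ?_
    _ = _ := by simp
  apply Finset.sum_le_sum
  intro j hj
  have hj' : 2 ^ j ≤ q := by
    rw [Finset.mem_range] at hj
    exact Nat.pow_le_of_le_log (by omega) (by omega)
  rw [← Finset.sum_filter, Finset.sum_const, smul_eq_mul]
  have := kk_weak p k n (2 ^ j) q hq hp hk hn hj' (s.filter (fun i => 2 ^ j ≤ c i)) v a i0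
    (fun i hi => h1 i (Finset.mem_filter.1 hi).1)
    (fun i hi j hj => hinj i (Finset.mem_filter.1 hi).1 j (Finset.mem_filter.1 hj).1) E
    (fun i hi => (Finset.mem_filter.1 hi).2)
  nlinarith [Nat.mul_le_mul_left (2 ^ n) this]


theorem kk_dyad (F y : ℝ) (hF : 0 ≤ F) (hy : y ≤ F) (J : ℕ) :
    y ≤ F / 2 ^ J + ∑ j ∈ Finset.range J, (F / 2 ^ j) * (if F / 2 ^ (j + 1) ≤ y then 1 else 0) := by
  induction J with
  | zero => simpa using hy
  | succ J ih =>
    rw [Finset.sum_range_succ]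
    have hnn : 0 ≤ ∑ j ∈ Finset.range J, (F / 2 ^ j) * (if F / 2 ^ (j + 1) ≤ y then (1 : ℝ) else 0) := by
      apply Finset.sum_nonneg; intro j _; split_ifs <;> positivity
    have h1 : 0 ≤ F / 2 ^ (J + 1) := by positivity
    by_cases h : F / 2 ^ (J + 1) ≤ y
    · rw [if_pos h]; linarith
    · rw [if_neg h]; push Not at h; linarith

theorem kk_powmean {α : Type} (s : Finset α) (f : α → ℝ) (hf : ∀ i ∈ s, 0 ≤ f i) (n : ℕ) (hn : 1 ≤ n) :
    (∑ i ∈ s, f i) ^ n ≤ (s.card : ℝ) ^ (n - 1) * ∑ i ∈ s, f i ^ n := by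
  obtain ⟨n', rfl⟩ : ∃ n', n = n' + 1 := ⟨n - 1, by omega⟩
  rcases s.eq_empty_or_nonempty with rfl | hs
  · simp
  have := pow_sum_div_card_le_sum_pow hf n'
  have hc : (0 : ℝ) < (s.card : ℝ) ^ n' := by
    have : 0 < s.card := hs.card_pos
    positivity
  rw [div_le_iff₀ hc] at this
  simp only [Nat.add_sub_cancel]
  linarith

theorem kk_strong (p k n q : ℕ) (hq : q = p ^ k) (hp : p.Prime) (hk : 1 ≤ k) (hn : 1 ≤ n) [NeZero q]
    {ι : Type} (s : Finset ι) (v a : ι → Fin n → ZMod q) (i0 : Fin n)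
    (h1 : ∀ i ∈ s, v i i0 = 1)
    (hinj : ∀ i ∈ s, ∀ j ∈ s, v i = v j → i = j)
    (f : (Fin n → ZMod q) → ℝ) (hf : ∀ x, 0 ≤ f x) :
    ∑ i ∈ s, (∑ τ : ZMod q, f (a i + τ • v i)) ^ n ≤
      (2 * 8 ^ n * (4 * n) ^ n * ((Nat.log 2 q + 1 : ℕ) : ℝ) ^ (2 * n) * (q : ℝ) ^ (n - 1)) * ∑ x, f x ^ n := by
  classical
  have hq0 : 0 < q := Nat.pos_of_ne_zero (NeZero.ne q)
  obtain ⟨x0, -, hx0⟩ := Finset.exists_max_image Finset.univ f ⟨0, Finset.mem_univ _⟩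
  set F := f x0 with hFdef
  have hF : 0 ≤ F := hf x0
  set S := ∑ x, f x ^ n with hS
  have hFS : F ^ n ≤ S :=
    Finset.single_le_sum (f := fun x => f x ^ n) (fun x _ => pow_nonneg (hf x) n) (Finset.mem_univ x0)
  have hS0 : 0 ≤ S := (pow_nonneg hF n).trans hFS
  set J := Nat.log 2 q + 1 with hJ
  have hqJ : (q : ℝ) ≤ 2 ^ J := by
    exact_mod_cast (Nat.lt_pow_succ_log_self (by norm_num) q).le
  have hkJ : k ≤ J := by
    have : k ≤ Nat.log 2 q := by
      apply Nat.le_log_of_pow_le (by norm_num)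
      rw [hq]; exact Nat.pow_le_pow_left hp.two_le k
    omega
  let El : ℕ → Finset (Fin n → ZMod q) := fun j => Finset.univ.filter (fun x => F / 2 ^ (j + 1) ≤ f x)
  let c : ι → ℕ → ℕ := fun i j => (Finset.univ.filter (fun τ : ZMod q => a i + τ • v i ∈ El j)).card
  set B : ℝ := 2 * (4 * n * k * q) ^ (n - 1) with hB
  have hB0 : 0 ≤ B := by positivity
  have hsB : (s.card : ℝ) ≤ B := by
    have := kk_weak p k n q q hq hp hk hn le_rfl s v a i0 h1 hinj Finset.univ (by
      intro i _; simp [ZMod.card])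
    rw [Finset.card_univ, Fintype.card_fun, ZMod.card, Fintype.card_fin] at this
    have := Nat.le_of_mul_le_mul_right this (pow_pos hq0 n)
    rw [hB]; exact_mod_cast this
  have hEl : ∀ j, ((El j).card : ℝ) * (F / 2 ^ (j + 1)) ^ n ≤ S := by
    intro j
    calc ((El j).card : ℝ) * (F / 2 ^ (j + 1)) ^ n = ∑ x ∈ El j, (F / 2 ^ (j + 1)) ^ n := by simp
      _ ≤ ∑ x ∈ El j, f x ^ n := by
          apply Finset.sum_le_sum
          intro x hx
          exact pow_le_pow_left₀ (by positivity) (Finset.mem_filter.1 hx).2 n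
      _ ≤ S := Finset.sum_le_sum_of_subset_of_nonneg (Finset.subset_univ _)
          (fun x _ _ => pow_nonneg (hf x) n)
  have hline : ∀ i ∈ s, ∑ τ : ZMod q, f (a i + τ • v i) ≤
      F + ∑ j ∈ Finset.range J, (F / 2 ^ j) * c i j := by
    intro i _
    calc _ ≤ ∑ τ : ZMod q, (F / 2 ^ J + ∑ j ∈ Finset.range J, (F / 2 ^ j) * (if F / 2 ^ (j + 1) ≤ f (a i + τ • v i) then 1 else 0)) := by
          apply Finset.sum_le_sum
          intro τ _
          exact kk_dyad F _ hF (hx0 _ (Finset.mem_univ _)) J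
      _ = q * (F / 2 ^ J) + ∑ j ∈ Finset.range J, (F / 2 ^ j) * c i j := by
          rw [Finset.sum_add_distrib, Finset.sum_comm]
          congr 1
          · simp [ZMod.card]
          · apply Finset.sum_congr rfl
            intro j _
            rw [← Finset.mul_sum]
            simp [c, El]
      _ ≤ _ := by
          gcongr
          rw [mul_div_assoc', div_le_iff₀ (by positivity)]
          nlinarith
  have hpow : ∀ i ∈ s, (∑ τ : ZMod q, f (a i + τ • v i)) ^ n ≤
      2 ^ (n - 1) * (F ^ n + (J : ℝ) ^ (n - 1) * ∑ j ∈ Finset.range J, (F / 2 ^ j) ^ n * (c i j : ℝ) ^ n) := by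
    intro i hi
    have hy : ∀ j ∈ Finset.range J, 0 ≤ (F / 2 ^ j) * (c i j : ℝ) := fun j _ => by positivity
    calc _ ≤ (F + ∑ j ∈ Finset.range J, (F / 2 ^ j) * c i j) ^ n :=
          pow_le_pow_left₀ (Finset.sum_nonneg fun _ _ => hf _) (hline i hi) n
      _ ≤ 2 ^ (n - 1) * (F ^ n + (∑ j ∈ Finset.range J, (F / 2 ^ j) * c i j) ^ n) :=
          add_pow_le hF (Finset.sum_nonneg hy) n
      _ ≤ _ := by
          gcongr
          have := kk_powmean (Finset.range J) _ hy n hn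
          simpa [mul_pow] using this
  have hindj : ∀ j, ∑ i ∈ s, (c i j : ℝ) ^ n ≤ J * (2 ^ n * (B * (El j).card)) := by
    intro j
    have := kk_ind p k n q hq hp hk hn s v a i0 h1 hinj (El j)
    rw [hB]; exact_mod_cast this
  have hj : ∀ j, ∑ i ∈ s, (F / 2 ^ j) ^ n * (c i j : ℝ) ^ n ≤ J * (4 ^ n * (B * S)) := by
    intro j
    rw [← Finset.mul_sum]
    calc _ ≤ (F / 2 ^ j) ^ n * (J * (2 ^ n * (B * (El j).card))) := by
          gcongr; exact hindj j
      _ = J * (4 ^ n * (B * ((El j).card * (F / 2 ^ (j + 1)) ^ n))) := by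
          have : (F / 2 ^ j) ^ n = 2 ^ n * (F / 2 ^ (j + 1)) ^ n := by
            rw [← mul_pow]; congr 1; field_simp; ring
          rw [this, show (4 : ℝ) = 2 * 2 by norm_num, mul_pow]; ring
      _ ≤ _ := by gcongr; exact hEl j
  have hJ1 : (1 : ℝ) ≤ J := by rw [hJ]; push_cast; linarith [(Nat.cast_nonneg (Nat.log 2 q) : (0 : ℝ) ≤ _)]
  calc _ ≤ ∑ i ∈ s, 2 ^ (n - 1) * (F ^ n + (J : ℝ) ^ (n - 1) * ∑ j ∈ Finset.range J, (F / 2 ^ j) ^ n * (c i j : ℝ) ^ n) :=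
        Finset.sum_le_sum hpow
    _ = 2 ^ (n - 1) * (s.card * F ^ n + (J : ℝ) ^ (n - 1) * ∑ j ∈ Finset.range J, ∑ i ∈ s, (F / 2 ^ j) ^ n * (c i j : ℝ) ^ n) := by
        rw [← Finset.mul_sum, Finset.sum_add_distrib, ← Finset.mul_sum, Finset.sum_comm]
        simp
    _ ≤ 2 ^ (n - 1) * (B * S + (J : ℝ) ^ (n - 1) * ∑ j ∈ Finset.range J, J * (4 ^ n * (B * S))) := by
        gcongr with j _
        exact hj j
    _ = 2 ^ (n - 1) * (1 + (J : ℝ) ^ (n - 1) * J * J * 4 ^ n) * (B * S) := by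
        simp; ring
    _ ≤ 2 ^ (n - 1) * ((J : ℝ) ^ (n - 1) * J * J * 4 ^ n + (J : ℝ) ^ (n - 1) * J * J * 4 ^ n) * (B * S) := by
        gcongr
        have : (1 : ℝ) ≤ (J : ℝ) ^ (n - 1) := one_le_pow₀ hJ1
        have h4 : (1 : ℝ) ≤ 4 ^ n := one_le_pow₀ (by norm_num)
        exact one_le_mul_of_one_le_of_one_le (one_le_mul_of_one_le_of_one_le (one_le_mul_of_one_le_of_one_le this hJ1) hJ1) h4
    _ = 8 ^ n * J ^ (n + 1) * (B * S) := by
        obtain ⟨n', rfl⟩ : ∃ n', n = n' + 1 := ⟨n - 1, by omega⟩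
        simp only [Nat.add_sub_cancel]
        rw [show (8 : ℝ) = 2 * 4 by norm_num, mul_pow]; ring
    _ ≤ 8 ^ n * J ^ (n + 1) * ((2 * ((4 * n) ^ n * J ^ (n - 1) * q ^ (n - 1))) * S) := by
        gcongr
        rw [hB]
        gcongr
        calc (4 * (n : ℝ) * k * q) ^ (n - 1) = (4 * n) ^ (n - 1) * (k : ℝ) ^ (n - 1) * q ^ (n - 1) := by
              rw [mul_pow, mul_pow]
          _ ≤ _ := by
              gcongr
              · have : (1 : ℝ) ≤ n := by exact_mod_cast hn
                linarith
              · omega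
    _ = _ := by
        obtain ⟨n', rfl⟩ : ∃ n', n = n' + 1 := ⟨n - 1, by omega⟩
        simp only [Nat.add_sub_cancel]
        ring

/-- Maximal inequality modulo `N` with constant `A`. -/
def KKMax (n N : ℕ) [NeZero N] (A : ℝ) : Prop :=
  ∀ (ι : Type) (s : Finset ι) (u a : ι → Fin n → ZMod N), (∀ i ∈ s, IsPrimitiveVec (u i)) →
    (∀ i ∈ s, ∀ j ∈ s, ∀ c : (ZMod N)ˣ, u i = (c : ZMod N) • u j → i = j) →
    ∀ f : (Fin n → ZMod N) → ℝ, (∀ x, 0 ≤ f x) →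
      ∑ i ∈ s, (∑ τ : ZMod N, f (a i + τ • u i)) ^ n ≤ A * ∑ x, f x ^ n

theorem kk_reparam {n N : ℕ} [NeZero N] (f : (Fin n → ZMod N) → ℝ) (a u : Fin n → ZMod N) (c : (ZMod N)ˣ) :
    ∑ τ : ZMod N, f (a + τ • ((c : ZMod N) • u)) = ∑ τ : ZMod N, f (a + τ • u) := by
  rw [← Equiv.sum_comp (Units.mulRight c) (fun τ => f (a + τ • u))]
  apply Finset.sum_congr rfl
  intro τ _
  rw [smul_smul]; rfl

theorem kk_primitive_unit {p k n q : ℕ} (hq : q = p ^ k) (hp : p.Prime) (hk : 1 ≤ k) [NeZero q]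
    (u : Fin n → ZMod q) (hu : IsPrimitiveVec u) : ∃ l, IsUnit (u l) := by
  by_contra! h
  obtain ⟨v, hv⟩ := hu
  have : Fact p.Prime := ⟨hp⟩
  have hdvd : p ∣ q := by rw [hq]; exact dvd_pow_self p (by omega)
  let φ := ZMod.castHom hdvd (ZMod p)
  have h0 : ∀ l, φ (u l) = 0 := by
    intro l
    have h1 := h l
    rw [← ZMod.natCast_zmod_val (u l), ZMod.isUnit_iff_coprime] at h1
    rw [← ZMod.natCast_zmod_val (u l), map_natCast]
    generalize (u l).val = x at h1 ⊢
    rw [hq, Nat.coprime_pow_right_iff (by omega)] at h1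
    rw [Nat.coprime_comm, hp.coprime_iff_not_dvd, not_not] at h1
    exact (ZMod.natCast_eq_zero_iff _ _).2 h1
  have := congrArg φ hv
  rw [map_sum, map_one] at this
  simp [h0] at this

theorem kk_primepow (p k n q : ℕ) (hq : q = p ^ k) (hp : p.Prime) (hk : 1 ≤ k) (hn : 1 ≤ n) [NeZero q] :
    KKMax n q (n * (2 * 8 ^ n * (4 * n) ^ n * ((Nat.log 2 q + 1 : ℕ) : ℝ) ^ (2 * n)) * (q : ℝ) ^ (n - 1)) := by
  classical
  intro ι s u a hprim hne f hf
  have hX : ∀ i, 0 ≤ (∑ τ : ZMod q, f (a i + τ • u i)) ^ n := fun i =>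
    pow_nonneg (Finset.sum_nonneg fun _ _ => hf _) n
  calc _ ≤ ∑ i ∈ s, ∑ l : Fin n, if IsUnit (u i l) then (∑ τ : ZMod q, f (a i + τ • u i)) ^ n else 0 := by
        apply Finset.sum_le_sum
        intro i hi
        obtain ⟨l, hl⟩ := kk_primitive_unit hq hp hk (u i) (hprim i hi)
        refine le_trans ?_ (Finset.single_le_sum (f := fun l => if IsUnit (u i l) then (∑ τ : ZMod q, f (a i + τ • u i)) ^ n else 0) ?_ (Finset.mem_univ l))
        · simp [hl]
        · intro l _
          split_ifs
          · exact hX i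
          · exact le_rfl
    _ = ∑ l : Fin n, ∑ i ∈ s.filter (fun i => IsUnit (u i l)), (∑ τ : ZMod q, f (a i + τ • u i)) ^ n := by
        rw [Finset.sum_comm]
        simp_rw [Finset.sum_filter]
    _ ≤ ∑ l : Fin n, (2 * 8 ^ n * (4 * n) ^ n * ((Nat.log 2 q + 1 : ℕ) : ℝ) ^ (2 * n) * (q : ℝ) ^ (n - 1)) * ∑ x, f x ^ n := by
        apply Finset.sum_le_sum
        intro l _
        let cf : ι → (ZMod q)ˣ := fun i => if h : IsUnit (u i l) then h.unit⁻¹ else 1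
        have hcf : ∀ i ∈ s.filter (fun i => IsUnit (u i l)), (cf i : ZMod q) * u i l = 1 := by
          intro i hi
          have h := (Finset.mem_filter.1 hi).2
          simp only [cf, h, dite_true]
          exact h.val_inv_mul
        have := kk_strong p k n q hq hp hk hn (s.filter (fun i => IsUnit (u i l)))
          (fun i => (cf i : ZMod q) • u i) a l ?_ ?_ f hf
        · simp_rw [kk_reparam] at this
          exact this
        · intro i hi
          exact hcf i hi
        · intro i hi j hj hij
          apply hne i (Finset.mem_filter.1 hi).1 j (Finset.mem_filter.1 hj).1 ((cf i)⁻¹ * cf j)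
          rw [Units.val_mul, mul_smul, ← hij, smul_smul, Units.inv_mul, one_smul]
    _ = _ := by simp; ring

theorem kk_one (n : ℕ) : KKMax n 1 1 := by
  intro ι s u a _ hne f hf
  have hcard : s.card ≤ 1 := by
    rw [Finset.card_le_one]
    intro i hi j hj
    exact hne i hi j hj 1 (Subsingleton.elim _ _)
  have hU : ∀ i, (∑ τ : ZMod 1, f (a i + τ • u i)) ^ n = f 0 ^ n := by
    intro i
    rw [Fintype.sum_subsingleton _ 0]
    congr 2
    exact Subsingleton.elim _ _
  simp_rw [hU]
  rw [Fintype.sum_subsingleton _ (0 : Fin n → ZMod 1), Finset.sum_const, nsmul_eq_mul]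
  gcongr
  · exact pow_nonneg (hf 0) n
  · exact_mod_cast hcard

theorem kk_tensor (n N1 N2 : ℕ) [NeZero N1] [NeZero N2] [NeZero (N1 * N2)] (hco : N1.Coprime N2)
    (A1 A2 : ℝ) (hA2 : 0 ≤ A2) (H1 : KKMax n N1 A1) (H2 : KKMax n N2 A2) :
    KKMax n (N1 * N2) (A1 * A2) := by
  classical
  intro ι s u a hprim hne f hf
  let χ := ZMod.chineseRemainder hco
  let Φ : (Fin n → ZMod (N1 * N2)) ≃ (Fin n → ZMod N1) × (Fin n → ZMod N2) :=
    { toFun := fun x => (fun l => (χ (x l)).1, fun l => (χ (x l)).2)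
      invFun := fun y => fun l => χ.symm (y.1 l, y.2 l)
      left_inv := by intro x; funext l; simp
      right_inv := by intro y; simp }
  have hΦ : ∀ (b w : Fin n → ZMod (N1 * N2)) (τ : ZMod (N1 * N2)),
      Φ (b + τ • w) = ((Φ b).1 + (χ τ).1 • (Φ w).1, (Φ b).2 + (χ τ).2 • (Φ w).2) := by
    intro b w τ
    simp only [Φ, Equiv.coe_fn_mk]
    ext l <;> simp
  let F : (Fin n → ZMod N1) → (Fin n → ZMod N2) → ℝ := fun y z => f (Φ.symm (y, z))
  have hF : ∀ y z, 0 ≤ F y z := fun y z => hf _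
  let st := MulAction.orbitRel (ZMod N1)ˣ (Fin n → ZMod N1)
  let rep : (Fin n → ZMod N1) → (Fin n → ZMod N1) := fun x => (Quotient.mk st x).out
  have hrep : ∀ x, ∃ c : (ZMod N1)ˣ, rep x = (c : ZMod N1) • x := by
    intro x
    have h : st.r (rep x) x := Quotient.exact (Quotient.out_eq (Quotient.mk st x))
    obtain ⟨c, hc⟩ := h
    exact ⟨c, hc.symm⟩
  have hrep2 : ∀ (x y) (c : (ZMod N1)ˣ), x = (c : ZMod N1) • y → rep x = rep y := by
    intro x y c h
    have : Quotient.mk st x = Quotient.mk st y := Quotient.sound ⟨c, h.symm⟩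
    simp only [rep, this]
  choose cr hcr using hrep
  have hβ : ∀ (w : Fin n → ZMod N1) (z : Fin n → ZMod N2), ∃ b, ∀ b',
      ∑ σ : ZMod N1, F (b' + σ • w) z ≤ ∑ σ : ZMod N1, F (b + σ • w) z := by
    intro w z
    obtain ⟨b, -, hb⟩ := Finset.exists_max_image Finset.univ
      (fun b => ∑ σ : ZMod N1, F (b + σ • w) z) ⟨0, Finset.mem_univ _⟩
    exact ⟨b, fun b' => hb b' (Finset.mem_univ _)⟩
  choose β hβ using hβ
  let G : (Fin n → ZMod N1) → (Fin n → ZMod N2) → ℝ := fun w z => ∑ σ : ZMod N1, F (β w z + σ • w) z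
  have hG : ∀ w z, 0 ≤ G w z := fun w z => Finset.sum_nonneg fun _ _ => hF _ _
  let W : ι → (Fin n → ZMod N1) := fun i => rep (Φ (u i)).1
  have hline : ∀ i, ∑ τ : ZMod (N1 * N2), f (a i + τ • u i) ≤ ∑ ρ : ZMod N2, G (W i) ((Φ (a i)).2 + ρ • (Φ (u i)).2) := by
    intro i
    have e1 : ∑ τ : ZMod (N1 * N2), f (a i + τ • u i) = ∑ ρ : ZMod N2, ∑ σ : ZMod N1,
        F ((Φ (a i)).1 + σ • (Φ (u i)).1) ((Φ (a i)).2 + ρ • (Φ (u i)).2) := by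
      rw [← Fintype.sum_prod_type_right (f := fun (x : ZMod N1 × ZMod N2) =>
        F ((Φ (a i)).1 + x.1 • (Φ (u i)).1) ((Φ (a i)).2 + x.2 • (Φ (u i)).2))]
      rw [← Equiv.sum_comp χ.toEquiv]
      apply Finset.sum_congr rfl
      intro τ _
      have := hΦ (a i) (u i) τ
      simp only [F]
      change _ = f (Φ.symm ((Φ (a i)).1 + (χ τ).1 • (Φ (u i)).1, (Φ (a i)).2 + (χ τ).2 • (Φ (u i)).2))
      rw [← this, Equiv.symm_apply_apply]
    rw [e1]
    apply Finset.sum_le_sum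
    intro ρ _
    refine le_trans (le_of_eq ?_) (hβ (W i) _ (Φ (a i)).1)
    simp only [W]
    rw [hcr]
    exact (kk_reparam (fun y => F y ((Φ (a i)).2 + ρ • (Φ (u i)).2)) _ _ _).symm
  have hp1 : ∀ i ∈ s, IsPrimitiveVec (W i) := by
    intro i hi
    obtain ⟨v, hv⟩ := hprim i hi
    refine ⟨fun l => ((cr (Φ (u i)).1)⁻¹ : (ZMod N1)ˣ) * (χ (v l)).1, ?_⟩
    have h5 := congrArg (fun x => (χ x).1) hv
    simp only [map_sum, map_mul, map_one, Prod.fst_sum, Prod.fst_mul, Prod.fst_one] at h5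
    rw [← h5]
    apply Finset.sum_congr rfl
    intro l _
    simp only [W]
    rw [hcr, Pi.smul_apply, smul_eq_mul]
    have : ((Φ (u i)).1 l) = (χ (u i l)).1 := rfl
    rw [this]
    have h6 := Units.inv_mul (cr (Φ (u i)).1)
    linear_combination ((χ (v l)).1 * (χ (u i l)).1) * h6
  have hp2 : ∀ i ∈ s, IsPrimitiveVec (Φ (u i)).2 := by
    intro i hi
    obtain ⟨v, hv⟩ := hprim i hi
    refine ⟨fun l => (χ (v l)).2, ?_⟩
    have h5 := congrArg (fun x => (χ x).2) hv
    simp only [map_sum, map_mul, map_one, Prod.snd_sum, Prod.snd_mul, Prod.snd_one] at h5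
    exact h5
  have hstep2 : ∀ b, ∑ i ∈ s.filter (fun i => W i = b),
      (∑ ρ : ZMod N2, G (W i) ((Φ (a i)).2 + ρ • (Φ (u i)).2)) ^ n ≤ A2 * ∑ z, G b z ^ n := by
    intro b
    have := H2 ι (s.filter (fun i => W i = b)) (fun i => (Φ (u i)).2) (fun i => (Φ (a i)).2)
      (fun i hi => hp2 i (Finset.mem_filter.1 hi).1) ?_ (G b) (hG b)
    · refine le_trans (le_of_eq ?_) this
      apply Finset.sum_congr rfl
      intro i hi
      rw [(Finset.mem_filter.1 hi).2]
    · intro i hi j hj c2 h2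
      obtain ⟨his, hib⟩ := Finset.mem_filter.1 hi
      obtain ⟨hjs, hjb⟩ := Finset.mem_filter.1 hj
      have h7 : W i = W j := hib.trans hjb.symm
      simp only [W] at h7
      rw [hcr, hcr] at h7
      have h8 : (Φ (u i)).1 = (((cr (Φ (u i)).1)⁻¹ * cr (Φ (u j)).1 : (ZMod N1)ˣ) : ZMod N1) • (Φ (u j)).1 := by
        rw [Units.val_mul, mul_smul, ← h7, smul_smul, Units.inv_mul, one_smul]
      set c1 := (cr (Φ (u i)).1)⁻¹ * cr (Φ (u j)).1
      apply hne i his j hjs ⟨χ.symm (c1, c2), χ.symm ((c1⁻¹ : (ZMod N1)ˣ), (c2⁻¹ : (ZMod N2)ˣ)), ?_, ?_⟩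
      · apply Φ.injective
        have h9 := hΦ 0 (u j) (χ.symm (c1, c2))
        rw [zero_add] at h9
        simp only
        rw [h9]
        have h10 : Φ 0 = 0 := by
          simp only [Φ, Equiv.coe_fn_mk]
          ext l <;> simp
        rw [h10]
        simp only [RingEquiv.apply_symm_apply, Prod.fst_zero, Prod.snd_zero, zero_add]
        rw [← h8, ← h2]
      · rw [← map_mul]; simp
      · rw [← map_mul]; simp
  have hstep1 : ∀ z, ∑ b ∈ s.image W, G b z ^ n ≤ A1 * ∑ y, F y z ^ n := by
    intro z
    refine H1 _ (s.image W) id (fun b => β b z) ?_ ?_ (fun y => F y z) (fun y => hF y z)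
    · intro b hb
      obtain ⟨i, hi, rfl⟩ := Finset.mem_image.1 hb
      exact hp1 i hi
    · intro b hb b' hb' c h
      obtain ⟨i, hi, rfl⟩ := Finset.mem_image.1 hb
      obtain ⟨j, hj, rfl⟩ := Finset.mem_image.1 hb'
      have h1 := hrep2 _ _ c h
      have h2 : ∀ i, rep (W i) = W i := fun i => hrep2 _ _ _ (hcr _)
      simp only [id] at h1
      rw [h2, h2] at h1
      exact h1
  calc _ ≤ ∑ i ∈ s, (∑ ρ : ZMod N2, G (W i) ((Φ (a i)).2 + ρ • (Φ (u i)).2)) ^ n := by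
        apply Finset.sum_le_sum
        intro i _
        exact pow_le_pow_left₀ (Finset.sum_nonneg fun _ _ => hf _) (hline i) n
    _ = ∑ b ∈ s.image W, ∑ i ∈ s.filter (fun i => W i = b),
          (∑ ρ : ZMod N2, G (W i) ((Φ (a i)).2 + ρ • (Φ (u i)).2)) ^ n :=
        (Finset.sum_fiberwise_of_maps_to (fun i hi => Finset.mem_image_of_mem W hi) _).symm
    _ ≤ ∑ b ∈ s.image W, A2 * ∑ z, G b z ^ n := Finset.sum_le_sum fun b _ => hstep2 b
    _ = A2 * ∑ z, ∑ b ∈ s.image W, G b z ^ n := by rw [← Finset.mul_sum, Finset.sum_comm]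
    _ ≤ A2 * ∑ z, A1 * ∑ y, F y z ^ n := by
        gcongr with z _
        exact hstep1 z
    _ = A1 * A2 * ∑ x, f x ^ n := by
        rw [← Finset.mul_sum, ← Equiv.sum_comp Φ.symm, Fintype.sum_prod_type_right]
        ring


theorem kk_mono {n N : ℕ} [NeZero N] {A B : ℝ} (h : A ≤ B) (H : KKMax n N A) : KKMax n N B := by
  intro ι s u a h1 h2 f hf
  refine (H ι s u a h1 h2 f hf).trans ?_
  gcongr
  exact Finset.sum_nonneg fun x _ => pow_nonneg (hf x) n

theorem kk_growth (n : ℕ) (hn : 1 ≤ n) (K η : ℝ) (hK : 0 ≤ K) (hη : 0 < η) :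
    ∃ C : ℝ, 1 ≤ C ∧ ∃ q0 : ℕ, ∀ q : ℕ, 1 ≤ q →
      K * ((Nat.log 2 q + 1 : ℕ) : ℝ) ^ (2 * n) ≤ C * (q : ℝ) ^ η ∧
      (q0 ≤ q → K * ((Nat.log 2 q + 1 : ℕ) : ℝ) ^ (2 * n) ≤ (q : ℝ) ^ η) := by
  have hnR : (0 : ℝ) < n := by exact_mod_cast hn
  set δ := η / (4 * n) with hδ
  have hδ0 : 0 < δ := by positivity
  set D : ℝ := 1 / δ / Real.log 2 + 1 with hD
  have hl2 : 0 < Real.log 2 := Real.log_pos (by norm_num)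
  have hD0 : 0 < D := by positivity
  set C : ℝ := max 1 (K * D ^ (2 * n)) with hC
  have hC1 : 1 ≤ C := le_max_left _ _
  have key : ∀ q : ℕ, 1 ≤ q → K * ((Nat.log 2 q + 1 : ℕ) : ℝ) ^ (2 * n) ≤ C * (q : ℝ) ^ (η / 2) := by
    intro q hq
    have hqR : (1 : ℝ) ≤ q := by exact_mod_cast hq
    have h1 : ((Nat.log 2 q + 1 : ℕ) : ℝ) ≤ D * (q : ℝ) ^ δ := by
      push_cast
      have h2 : (Nat.log 2 q : ℝ) ≤ Real.log q / Real.log 2 := by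
        have := Real.natLog_le_logb q 2
        simpa [Real.logb] using this
      have h3 : Real.log q ≤ (q : ℝ) ^ δ / δ := Real.log_le_rpow_div (by linarith) hδ0
      have h4 : (1 : ℝ) ≤ (q : ℝ) ^ δ := Real.one_le_rpow hqR hδ0.le
      have h5 : Real.log q / Real.log 2 ≤ (q : ℝ) ^ δ / δ / Real.log 2 := by gcongr
      calc _ ≤ (q : ℝ) ^ δ / δ / Real.log 2 + (q : ℝ) ^ δ := by linarith
        _ = _ := by rw [hD]; field_simp
    calc _ ≤ K * (D * (q : ℝ) ^ δ) ^ (2 * n) := by gcongr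
      _ = K * D ^ (2 * n) * (q : ℝ) ^ (η / 2) := by
          rw [mul_pow, ← Real.rpow_mul_natCast (by linarith), mul_assoc]
          congr 3
          rw [hδ]; push_cast; field_simp; norm_num
      _ ≤ _ := by gcongr; exact le_max_right _ _
  refine ⟨C, hC1, ⌈C ^ (2 / η)⌉₊, ?_⟩
  intro q hq
  have hqR : (1 : ℝ) ≤ q := by exact_mod_cast hq
  refine ⟨(key q hq).trans ?_, fun hq0 => (key q hq).trans ?_⟩
  · gcongr
    linarith
  · have h1 : C ^ (2 / η) ≤ q := (Nat.le_ceil _).trans (by exact_mod_cast hq0)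
    have h2 : C ≤ (q : ℝ) ^ (η / 2) := by
      calc C = (C ^ (2 / η)) ^ (η / 2) := by
            rw [← Real.rpow_mul (by linarith)]
            have : 2 / η * (η / 2) = 1 := by field_simp
            rw [this, Real.rpow_one]
        _ ≤ _ := by gcongr
    calc _ ≤ (q : ℝ) ^ (η / 2) * (q : ℝ) ^ (η / 2) := by gcongr
      _ = _ := by rw [← Real.rpow_add (by linarith)]; congr 1; ring

theorem kk_all (n : ℕ) (hn : 1 ≤ n) (η : ℝ) (hη : 0 < η) :
    ∃ C : ℝ, 1 ≤ C ∧ ∀ (N : ℕ) [NeZero N], KKMax n N (C * ((N : ℝ) ^ (n - 1) * (N : ℝ) ^ η)) := by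
  classical
  obtain ⟨C0, hC0, q0, hg⟩ := kk_growth n hn (n * (2 * 8 ^ n * (4 * n) ^ n)) η (by positivity) hη
  let b : ℕ → ℕ := fun N => (N.primeFactors.filter (fun p => p < q0)).card
  have hb : ∀ N, b N ≤ q0 := by
    intro N
    calc b N ≤ (Finset.range q0).card := by
          apply Finset.card_le_card
          intro p hp
          exact Finset.mem_range.2 (Finset.mem_filter.1 hp).2
      _ = q0 := by simp
  have key : ∀ (N : ℕ) [NeZero N], KKMax n N (C0 ^ b N * ((N : ℝ) ^ (n - 1) * (N : ℝ) ^ η)) := by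
    intro N
    induction N using Nat.recOnPosPrimePosCoprime with
    | zero => intro h; exact absurd rfl h.out
    | one =>
      intro h
      have := kk_one n
      convert this using 1
      simp [b]
    | prime_pow p k hp hk =>
      intro _
      have hk1 : 1 ≤ k := hk
      refine kk_mono ?_ (kk_primepow p k n (p ^ k) rfl hp hk1 hn)
      have hq1 : 1 ≤ p ^ k := Nat.one_le_pow _ _ hp.pos
      obtain ⟨g1, g2⟩ := hg (p ^ k) hq1
      set q := p ^ k with hq
      have hbn : (1 : ℝ) ≤ C0 ^ b q := one_le_pow₀ hC0
      have : (n : ℝ) * (2 * 8 ^ n * (4 * n) ^ n) * ((Nat.log 2 q + 1 : ℕ) : ℝ) ^ (2 * n) ≤ C0 ^ b q * (q : ℝ) ^ η := by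
        by_cases hqq : q0 ≤ q
        · refine (g2 hqq).trans ?_
          exact le_mul_of_one_le_left (by positivity) hbn
        · have hb1 : b q = 1 := by
            have hpq : p ≤ q := by rw [hq]; exact Nat.le_self_pow (by omega) p
            have : p < q0 := by omega
            simp only [b, hq]
            rw [Nat.primeFactors_prime_pow (by omega) hp, Finset.filter_singleton, if_pos this]
            simp
          rw [hb1, pow_one]; exact g1
      calc _ = ((n : ℝ) * (2 * 8 ^ n * (4 * n) ^ n) * ((Nat.log 2 q + 1 : ℕ) : ℝ) ^ (2 * n)) * (q : ℝ) ^ (n - 1) := by ring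
        _ ≤ (C0 ^ b q * (q : ℝ) ^ η) * (q : ℝ) ^ (n - 1) := by gcongr
        _ = _ := by ring
    | coprime N1 N2 h1 h2 hco ih1 ih2 =>
      intro _
      have n1 : NeZero N1 := ⟨by omega⟩
      have n2 : NeZero N2 := ⟨by omega⟩
      have := kk_tensor n N1 N2 hco _ _ (by positivity) ih1 ih2
      convert this using 1
      have hbadd : b (N1 * N2) = b N1 + b N2 := by
        simp only [b]
        rw [hco.primeFactors_mul, Finset.filter_union, Finset.card_union_of_disjoint]
        exact Finset.disjoint_filter_filter hco.disjoint_primeFactors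
      rw [hbadd, pow_add]
      push_cast
      rw [mul_pow, Real.mul_rpow (by positivity) (by positivity)]
      ring
  refine ⟨C0 ^ q0, one_le_pow₀ hC0, ?_⟩
  intro N _
  refine kk_mono ?_ (key N)
  gcongr
  exact hb N

theorem kk_line_inj {N n : ℕ} [NeZero N] (a u : Fin n → ZMod N) (hu : IsPrimitiveVec u) :
    Function.Injective (fun t : ZMod N => a + t • u) := by
  intro t t' h
  obtain ⟨v, hv⟩ := hu
  have h1 : t • u = t' • u := add_left_cancel h
  have : ∀ t : ZMod N, ∑ i, v i * (t • u) i = t := by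
    intro t
    calc _ = t * ∑ i, v i * u i := by
          rw [Finset.mul_sum]; apply Finset.sum_congr rfl; intro i _
          simp; ring
      _ = t := by rw [hv, mul_one]
  rw [← this t, h1, this t']

theorem kk_final (n : ℕ) (hn : 1 ≤ n) (S c N C ε : ℝ) (hS0 : 0 ≤ S) (hc : 0 ≤ c) (hN : 0 ≤ N)
    (hC : 0 ≤ C) (hSn1 : S ^ (n - 1) ≤ c ^ (n - 1) * (C * (N ^ (n - 1) * N ^ (n * ε)))) :
    S ^ (((n : ℝ) - 1) / n) ≤ C ^ (1 / (n : ℝ)) * N ^ ε * (c * N) ^ (((n : ℝ) - 1) / n) := by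
  have hn0 : (n : ℝ) ≠ 0 := by
    have : n ≠ 0 := by omega
    exact_mod_cast this
  have hcast : ((n - 1 : ℕ) : ℝ) = (n : ℝ) - 1 := by rw [Nat.cast_sub hn]; simp
  have hpw : ∀ y : ℝ, 0 ≤ y → (y ^ (n - 1)) ^ (1 / (n : ℝ)) = y ^ (((n : ℝ) - 1) / n) := by
    intro y hy
    rw [← Real.rpow_natCast_mul hy, hcast]
    congr 1; ring
  calc S ^ (((n : ℝ) - 1) / n) = (S ^ (n - 1)) ^ (1 / (n : ℝ)) := (hpw S hS0).symm
    _ ≤ (c ^ (n - 1) * (C * (N ^ (n - 1) * N ^ (n * ε)))) ^ (1 / (n : ℝ)) :=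
        Real.rpow_le_rpow (by positivity) hSn1 (by positivity)
    _ = _ := by
        rw [Real.mul_rpow (by positivity) (by positivity), Real.mul_rpow (by positivity) (by positivity),
          Real.mul_rpow (by positivity) (by positivity), hpw _ hc, hpw _ hN,
          Real.mul_rpow hc hN, ← Real.rpow_mul hN]
        have : (n : ℝ) * ε * (1 / n) = ε := by field_simp
        rw [this]
        ring

theorem stmt6 (ε : ℝ) (hε : 0 < ε) (n : ℕ) (hn : 1 ≤ n) :
    ∃ C : ℝ, ∀ (N : ℕ) [NeZero N], 1 ≤ N →
      ∀ P : Finset (Fin n → ZMod N), IsProjRepSet N n P →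
      ∀ a : (Fin n → ZMod N) → (Fin n → ZMod N),
      (∑ x : Fin n → ZMod N,
          ((P.filter fun u => x ∈ lineF (a u) u).card : ℝ) ^ ((n : ℝ) / ((n : ℝ) - 1)))
          ^ (((n : ℝ) - 1) / (n : ℝ)) ≤
        C * (N : ℝ) ^ ε *
          (∑ u ∈ P, ((lineF (a u) u).card : ℝ)) ^ (((n : ℝ) - 1) / (n : ℝ)) := by
  have hnR : (1 : ℝ) ≤ n := by exact_mod_cast hn
  rcases Nat.eq_or_lt_of_le hn with hn1 | hn2
  · refine ⟨1, ?_⟩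
    intro N _ hN P hP a
    have : (n : ℝ) - 1 = 0 := by rw [← hn1]; simp
    rw [this, zero_div, Real.rpow_zero, Real.rpow_zero, mul_one, one_mul]
    exact Real.one_le_rpow (by exact_mod_cast hN) hε.le
  have hn2R : (2 : ℝ) ≤ n := by exact_mod_cast hn2
  obtain ⟨C, hC, H⟩ := kk_all n hn (n * ε) (by positivity)
  refine ⟨C ^ (1 / (n : ℝ)), ?_⟩
  intro N _ hN P hP a
  have hNR : (1 : ℝ) ≤ N := by exact_mod_cast hN
  set h : (Fin n → ZMod N) → ℝ := fun x => ((P.filter fun u => x ∈ lineF (a u) u).card : ℝ) with hh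
  have hh0 : ∀ x, 0 ≤ h x := fun x => Nat.cast_nonneg _
  set f : (Fin n → ZMod N) → ℝ := fun x => h x ^ (1 / ((n : ℝ) - 1)) with hf
  have hf0 : ∀ x, 0 ≤ f x := fun x => Real.rpow_nonneg (hh0 x) _
  have hn1 : (0 : ℝ) < (n : ℝ) - 1 := by linarith
  have hfn : ∀ x, f x ^ n = h x ^ ((n : ℝ) / ((n : ℝ) - 1)) := by
    intro x
    simp only [hf]
    rw [← Real.rpow_mul_natCast (hh0 x)]
    congr 1; field_simp
  have hhf : ∀ x, h x * f x = h x ^ ((n : ℝ) / ((n : ℝ) - 1)) := by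
    intro x
    simp only [hf]
    rcases (hh0 x).eq_or_lt with h0 | h0
    · rw [← h0, zero_mul, Real.zero_rpow (by positivity)]
    · have : h x * h x ^ (1 / ((n : ℝ) - 1)) = h x ^ (1 : ℝ) * h x ^ (1 / ((n : ℝ) - 1)) := by
        rw [Real.rpow_one]
      rw [this, ← Real.rpow_add h0]
      congr 1; field_simp; ring
  set S := ∑ x, h x ^ ((n : ℝ) / ((n : ℝ) - 1)) with hS
  have hS0 : 0 ≤ S := Finset.sum_nonneg fun x _ => Real.rpow_nonneg (hh0 x) _
  have hcard : ∀ u ∈ P, (lineF (a u) u).card = N := by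
    intro u hu
    rw [lineF, Finset.card_image_of_injective _ (kk_line_inj _ _ (hP.1 u hu)), Finset.card_univ, ZMod.card]
  have hlines : ∑ u ∈ P, ((lineF (a u) u).card : ℝ) = P.card * N := by
    rw [Finset.sum_congr rfl (fun u hu => by rw [hcard u hu])]
    simp
  have hSsum : S = ∑ u ∈ P, ∑ τ : ZMod N, f (a u + τ • u) := by
    calc S = ∑ x, h x * f x := Finset.sum_congr rfl fun x _ => (hhf x).symm
      _ = ∑ x, ∑ u ∈ P, if x ∈ lineF (a u) u then f x else 0 := by
          apply Finset.sum_congr rfl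
          intro x _
          rw [← Finset.sum_filter, Finset.sum_const, nsmul_eq_mul]
      _ = ∑ u ∈ P, ∑ x ∈ lineF (a u) u, f x := by
          rw [Finset.sum_comm]
          apply Finset.sum_congr rfl
          intro u _
          rw [← Finset.sum_filter]
          congr 1
          ext x; simp
      _ = _ := by
          apply Finset.sum_congr rfl
          intro u hu
          rw [lineF, Finset.sum_image]
          exact fun x _ y _ hxy => kk_line_inj _ _ (hP.1 u hu) hxy
  have hmax := H N _ P id a hP.1 (by
    intro i hi j hj c hc
    obtain ⟨w, -, hw⟩ := hP.2 i (hP.1 i hi)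
    rw [hw i ⟨hi, 1, by simp⟩, hw j ⟨hj, c, hc⟩]) f hf0
  simp_rw [hfn] at hmax
  rw [← hS] at hmax
  simp only [id] at hmax
  set A := C * ((N : ℝ) ^ (n - 1) * (N : ℝ) ^ (n * ε)) with hA
  have hA0 : 0 ≤ A := by positivity
  have hSn : S ^ n ≤ (P.card : ℝ) ^ (n - 1) * (A * S) := by
    have := kk_powmean P (fun u => ∑ τ : ZMod N, f (a u + τ • u))
      (fun u _ => Finset.sum_nonneg fun _ _ => hf0 _) n hn
    rw [← hSsum] at this
    exact this.trans (by gcongr)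
  have hSn1 : S ^ (n - 1) ≤ (P.card : ℝ) ^ (n - 1) * A := by
    rcases hS0.eq_or_lt with h0 | h0
    · rw [← h0, zero_pow (by omega)]; positivity
    · have e : S ^ n = S ^ (n - 1) * S := by rw [← pow_succ]; congr 1; omega
      rw [e, ← mul_assoc] at hSn
      exact le_of_mul_le_mul_right hSn h0
  rw [hlines]
  exact kk_final n hn S P.card N C ε hS0 (Nat.cast_nonneg _) (Nat.cast_nonneg _) (by linarith) hSn1
end
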